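/- Let (ρ, u, π) be a smooth solution of the stationary inhomogeneous Navier–Stokes system −Δu + ρ(u·∇)u + ∇π = 0, div u = 0, div(ρu) = 0 in ℝ³, with ρ ∈ L^∞, ∇u ∈ L²(ℝ³) and u ∈ L^p_loc with ∇u ∈ L^{p/2}_loc for some 3 ≤ p < ∞. Then for all R > 1 the Caccioppoli-type estimate ∫_{B_{R/2}} |∇u|² dx ≤ C (∫_{C(R/2,R)} |∇u|^{p/2} dx + ∫_{C(R/2,R)} |u|^p dx)^{2/p} R^{2 - 9/p} (∫_{C(R/2,R)} |u|^p dx)^{1/p} holds, with C independent of R. -/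

import Mathlib

open MeasureTheory ENNReal

/-- The open annulus `C(R/2, R) = {x ∈ ℝ³ : R/2 < |x| < R}`. -/
def annulus (R : ℝ) : Set (EuclideanSpace ℝ (Fin 3)) :=
  {x | R / 2 < ‖x‖ ∧ ‖x‖ < R}

/-- The `i`-th standard basis vector of `ℝ³`. -/
noncomputable def e (i : Fin 3) : EuclideanSpace ℝ (Fin 3) := EuclideanSpace.single i 1

/-!
Multiplying the momentum equation by `φ u`, with a cutoff `φ` equal to `1` on `B_{R/2}` and
supported in `B_R`, bounds `∫_{B_{R/2}} |∇u|²` by the sum of `|∫ u · (∇u - ρ u ⊗ u / 2) ∇φ|` and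
`|∫ π (u · ∇φ)|`. By Hölder's inequality and scaling it suffices to treat `p = 3` and `R = 1`, where
the first integral is immediate.

For the second one, `g = u · ∇φ` has mean zero because `div u = 0`, and `∇π` is the divergence of
the tensor `f = ∇u - ρ u ⊗ u`; what is needed is `|∫ g π| ≤ C ‖g‖_{L³} ‖f‖_{L^{3/2}}` with `f`
restricted to the annulus. Formally `∫ g π = ∫ g Δ⁻¹ ∂ᵢ∂ⱼ fᵢⱼ`, a pairing of Riesz transforms; it is
bounded through the heat flow, without Bogovskii's operator: `-∂ₛ ∫ B(e^{sΔ}g, e^{sΔ}f)` dominates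
`∫ |∂ᵢ e^{sΔ}g| |∂ⱼ e^{sΔ}f|` for the Bellman function `B(a, b) = (a² + |b|)^{3/2}`, so the integral
of the latter over `s` is at most a multiple of `‖g‖₃³ + ‖f‖_{3/2}^{3/2}`. The pressure being
controlled on the annulus only, it enters through its cross-correlation `y ↦ ∫ g(x) π(x + y) dx`
with `g`, for small `y`.
-/

namespace Caccioppoli

open Filter Topology Set Module ProbabilityTheory
open scoped ContDiff RealInnerProductSpace

section TestFunctions

variable {E F V : Type*} [NormedAddCommGroup E] [NormedSpace ℝ E] [NormedAddCommGroup F]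
  [NormedSpace ℝ F] [NormedAddCommGroup V] [NormedSpace ℝ V]

/-- The directional derivative `∂_v w`, as a function of the base point. -/
noncomputable def dirDeriv (v : E) (w : E → V) (x : E) : V := fderiv ℝ w x v

/-- Compactly supported smooth functions. -/
structure IsTestFunction (w : E → V) : Prop where
  contDiff : ContDiff ℝ ∞ w
  hasCompactSupport : HasCompactSupport w

lemma contDiff_dirDeriv {w : E → V} (hw : ContDiff ℝ ∞ w) (v : E) :
    ContDiff ℝ ∞ (dirDeriv v w) :=
  (hw.fderiv_right (m := ∞) (by simp)).clm_apply contDiff_const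

lemma dirDeriv_add {w z : E → V} (hw : ContDiff ℝ ∞ w) (hz : ContDiff ℝ ∞ z) (v : E) :
    dirDeriv v (fun x => w x + z x) = fun x => dirDeriv v w x + dirDeriv v z x := by
  ext x
  simp [dirDeriv, fderiv_fun_add (hw.differentiable (by simp) x) (hz.differentiable (by simp) x)]

lemma dirDeriv_sub {w z : E → V} (hw : ContDiff ℝ ∞ w) (hz : ContDiff ℝ ∞ z) (v : E) :
    dirDeriv v (fun x => w x - z x) = fun x => dirDeriv v w x - dirDeriv v z x := by
  ext x
  simp [dirDeriv, fderiv_fun_sub (hw.differentiable (by simp) x) (hz.differentiable (by simp) x)]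

lemma dirDeriv_sum {ι : Type*} (s : Finset ι) {w : ι → E → V} (hw : ∀ i, ContDiff ℝ ∞ (w i))
    (v : E) : dirDeriv v (fun x => ∑ i ∈ s, w i x) = fun x => ∑ i ∈ s, dirDeriv v (w i) x := by
  ext x
  simp [dirDeriv, fderiv_fun_sum fun i _ => (hw i).differentiable (by simp) x]

lemma dirDeriv_const_mul {w : E → ℝ} (hw : ContDiff ℝ ∞ w) (c : ℝ) (v : E) :
    dirDeriv v (fun x => c * w x) = fun x => c * dirDeriv v w x := by
  ext x
  simp [dirDeriv, fderiv_const_mul (hw.differentiable (by simp) x)]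

lemma dirDeriv_mul {a b : E → ℝ} (ha : ContDiff ℝ ∞ a) (hb : ContDiff ℝ ∞ b) (v : E) :
    dirDeriv v (fun x => a x * b x) = fun x => dirDeriv v a x * b x + a x * dirDeriv v b x := by
  ext x
  simp only [dirDeriv, fderiv_fun_mul (ha.differentiable (by simp) x)
    (hb.differentiable (by simp) x), _root_.add_apply, _root_.smul_apply,
    smul_eq_mul]
  ring

protected lemma IsTestFunction.fderiv {w : E → V} (hw : IsTestFunction w) :
    IsTestFunction (fderiv ℝ w) :=
  ⟨hw.contDiff.fderiv_right (by simp), hw.hasCompactSupport.fderiv ℝ⟩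

protected lemma IsTestFunction.dirDeriv {w : E → V} (hw : IsTestFunction w) (v : E) :
    IsTestFunction (dirDeriv v w) :=
  ⟨contDiff_dirDeriv hw.contDiff v, hw.hasCompactSupport.fderiv_apply (𝕜 := ℝ) v⟩

lemma IsTestFunction.add {w z : E → V} (hw : IsTestFunction w) (hz : IsTestFunction z) :
    IsTestFunction (fun x => w x + z x) :=
  ⟨hw.contDiff.add hz.contDiff, hw.hasCompactSupport.add hz.hasCompactSupport⟩

lemma IsTestFunction.sum {ι : Type*} {s : Finset ι} {w : ι → E → V}
    (hw : ∀ i ∈ s, IsTestFunction (w i)) : IsTestFunction (fun x => ∑ i ∈ s, w i x) := by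
  classical
  induction s using Finset.induction_on with
  | empty => exact (⟨contDiff_const, HasCompactSupport.zero⟩ : IsTestFunction (0 : E → V))
  | insert i s hi ih =>
    simp only [Finset.sum_insert hi]
    exact (hw i (Finset.mem_insert_self i s)).add
      (ih fun j hj => hw j (Finset.mem_insert_of_mem hj))

lemma IsTestFunction.smul_left {w : E → V} {a : E → ℝ} (ha : IsTestFunction a)
    (hw : ContDiff ℝ ∞ w) : IsTestFunction (fun x => a x • w x) :=
  ⟨ha.contDiff.smul hw, ha.hasCompactSupport.smul_right⟩

lemma IsTestFunction.mul_right {a b : E → ℝ} (ha : IsTestFunction a) (hb : ContDiff ℝ ∞ b) :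
    IsTestFunction (fun x => a x * b x) := ha.smul_left hb

lemma IsTestFunction.mul_left {a b : E → ℝ} (hb : IsTestFunction b) (ha : ContDiff ℝ ∞ a) :
    IsTestFunction (fun x => a x * b x) :=
  ⟨ha.mul hb.contDiff, hb.hasCompactSupport.mul_left⟩

lemma IsTestFunction.prodMk {w : E → V} {z : E → F} (hw : IsTestFunction w)
    (hz : IsTestFunction z) : IsTestFunction fun x => (w x, z x) :=
  ⟨hw.contDiff.prodMk hz.contDiff, HasCompactSupport.intro
    (hw.hasCompactSupport.union hz.hasCompactSupport) fun x hx => by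
      rw [mem_union, not_or] at hx
      rw [image_eq_zero_of_notMem_tsupport hx.1, image_eq_zero_of_notMem_tsupport hx.2,
        Prod.mk_zero_zero]⟩

lemma dirDeriv_prodMk {w : E → V} {z : E → F} (hw : ContDiff ℝ ∞ w) (hz : ContDiff ℝ ∞ z) (v : E) :
    dirDeriv v (fun x => (w x, z x)) = fun x => (dirDeriv v w x, dirDeriv v z x) := by
  ext1 x
  rw [dirDeriv, (hw.differentiable (by simp) x).fderiv_prodMk (hz.differentiable (by simp) x)]
  rfl

lemma IsTestFunction.comp_homothety {w : E → V} (hw : IsTestFunction w) (x : E) {s : ℝ}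
    (hs : s ≠ 0) : IsTestFunction (fun y => w (x + s • y)) :=
  ⟨hw.contDiff.comp (contDiff_const.add (contDiff_const_smul s)),
    hw.hasCompactSupport.comp_homeomorph
      ((Homeomorph.smulOfNeZero s hs).trans (Homeomorph.addLeft x))⟩

lemma IsTestFunction.comp_neg {w : E → V} (hw : IsTestFunction w) :
    IsTestFunction fun x => w (-x) := by
  simpa using hw.comp_homothety 0 (neg_ne_zero.mpr one_ne_zero)

lemma dirDeriv_comp_homothety {w : E → V} (hw : ContDiff ℝ ∞ w) (v x : E) (s : ℝ) :
    dirDeriv v (fun y => w (x + s • y)) = fun y => s • dirDeriv v w (x + s • y) := by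
  ext y
  have h1 : HasFDerivAt (fun y : E => x + s • y) (s • ContinuousLinearMap.id ℝ E) y :=
    ((hasFDerivAt_id y).const_smul s).const_add x
  have h2 := (hw.differentiable (by simp) (x + s • y)).hasFDerivAt.comp y h1
  simp only [dirDeriv]
  rw [show (fun y => w (x + s • y)) = w ∘ fun y => x + s • y from rfl, h2.fderiv]
  simp

lemma IsTestFunction.exists_norm_le {w : E → V} (hw : IsTestFunction w) : ∃ C, ∀ x, ‖w x‖ ≤ C :=
  hw.hasCompactSupport.exists_bound_of_continuous hw.contDiff.continuous

lemma IsTestFunction.integrable [MeasurableSpace E] [BorelSpace E]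
    {μ : Measure E} [IsFiniteMeasureOnCompacts μ] {w : E → V} (hw : IsTestFunction w) :
    Integrable w μ :=
  hw.contDiff.continuous.integrable_of_hasCompactSupport hw.hasCompactSupport

lemma IsTestFunction.exists_one_add_norm_pow_mul_le {w : E → V} (hw : IsTestFunction w) (N : ℕ) :
    ∃ C, 0 ≤ C ∧ ∀ x, (1 + ‖x‖) ^ N * ‖w x‖ ≤ C := by
  have hc : Continuous fun x => (1 + ‖x‖) ^ N * ‖w x‖ :=
    ((continuous_const.add continuous_norm).pow N).mul hw.contDiff.continuous.norm
  obtain ⟨C, hC⟩ := (hw.hasCompactSupport.norm.mul_left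
    (f := fun x => (1 + ‖x‖) ^ N)).exists_bound_of_continuous hc
  exact ⟨C, (norm_nonneg _).trans (hC 0), fun x => (Real.le_norm_self _).trans (hC x)⟩

section IntegrationByParts

variable [FiniteDimensional ℝ E] [MeasurableSpace E] [BorelSpace E] {μ : Measure E}
  [μ.IsAddHaarMeasure]

lemma IsTestFunction.integral_smul_dirDeriv {a : E → ℝ} {w : E → V} (ha : IsTestFunction a)
    (hw : ContDiff ℝ ∞ w) (v : E) :
    ∫ x, a x • dirDeriv v w x ∂μ = -∫ x, dirDeriv v a x • w x ∂μ :=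
  integral_smul_fderiv_eq_neg_fderiv_smul_of_integrable
    ((ha.dirDeriv v).smul_left hw).integrable
    (ha.smul_left (contDiff_dirDeriv hw v)).integrable (ha.smul_left hw).integrable
    (fun x _ => ha.contDiff.differentiable (by simp) x)
    (fun x _ => hw.differentiable (by simp) x)

end IntegrationByParts

end TestFunctions

section Cutoff

lemma exists_isTestFunction_eq_one {E : Type*} [NormedAddCommGroup E] [NormedSpace ℝ E]
    [HasContDiffBump E] [FiniteDimensional ℝ E] {r δ : ℝ} (hr : 0 < r) (hrδ : r < δ) :
    ∃ κ : E → ℝ, IsTestFunction κ ∧ (∀ y, κ y ∈ Icc 0 1) ∧ (∀ y, ‖y‖ ≤ r → κ y = 1) ∧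
      tsupport κ ⊆ Metric.ball 0 δ := by
  let κ : ContDiffBump (0 : E) := ⟨r, (r + δ) / 2, hr, by linarith⟩
  refine ⟨κ, ⟨κ.contDiff, κ.hasCompactSupport⟩, fun y => ⟨κ.nonneg, κ.le_one⟩,
    fun y hy => κ.one_of_mem_closedBall (mem_closedBall_zero_iff.mpr hy), ?_⟩
  rw [κ.tsupport_eq]
  exact Metric.closedBall_subset_ball (by change (r + δ) / 2 < δ; linarith)

end Cutoff

section Gaussian

variable {E V : Type*} [NormedAddCommGroup E] [InnerProductSpace ℝ E]
  [NormedAddCommGroup V] [NormedSpace ℝ V]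

/-- The density of the standard Gaussian measure with respect to the volume. -/
noncomputable def gaussianDensity (x : E) : ℝ :=
  (2 * Real.pi) ^ (-(finrank ℝ E : ℝ) / 2) * Real.exp (-(‖x‖ ^ 2 / 2))

lemma gaussianDensity_nonneg (x : E) : 0 ≤ gaussianDensity x := by
  unfold gaussianDensity; positivity

lemma contDiff_gaussianDensity : ContDiff ℝ ∞ (gaussianDensity : E → ℝ) :=
  contDiff_const.mul ((contDiff_norm_sq ℝ).div_const 2).neg.exp

lemma dirDeriv_gaussianDensity (v : E) :
    dirDeriv v gaussianDensity = fun x => -(⟪x, v⟫ * gaussianDensity x) := by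
  ext x
  have h1 : HasFDerivAt (fun y : E => -(‖y‖ ^ 2 / 2)) (-innerSL ℝ x) x := by
    convert! ((hasStrictFDerivAt_norm_sq x).hasFDerivAt.mul_const (2⁻¹ : ℝ)).neg using 1
    ext y; simp
  have h2 := h1.exp.const_mul ((2 * Real.pi) ^ (-(finrank ℝ E : ℝ) / 2))
  have h3 : fderiv ℝ gaussianDensity x = _ := h2.fderiv
  simp only [dirDeriv, h3, gaussianDensity]
  simp
  ring

variable [FiniteDimensional ℝ E] [MeasurableSpace E] [BorelSpace E]

lemma integral_gaussianDensity_mul_cexp (t : E) :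
    ∫ x, (gaussianDensity x : ℂ) * Complex.exp (⟪x, t⟫ * Complex.I) =
      Complex.exp (-‖t‖ ^ 2 / 2) := by
  have h := GaussianFourier.integral_cexp_neg_mul_sq_norm_add (V := E) (b := 1 / 2) (by norm_num)
    Complex.I t
  have hpi : (0 : ℝ) ≤ 2 * Real.pi := by positivity
  have hx : ∀ x : E, (gaussianDensity x : ℂ) * Complex.exp (⟪x, t⟫ * Complex.I) =
      ((2 * Real.pi) ^ (-(finrank ℝ E : ℝ) / 2) : ℝ) *
        Complex.exp (-(1 / 2) * ‖x‖ ^ 2 + Complex.I * ⟪t, x⟫) := fun x => by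
    rw [gaussianDensity, Complex.ofReal_mul, mul_assoc, Complex.ofReal_exp, ← Complex.exp_add,
      real_inner_comm]
    congr 3
    · push_cast; ring
    · ring
  have hconst : (((2 * Real.pi) ^ (-(finrank ℝ E : ℝ) / 2) : ℝ) : ℂ) *
      (Real.pi / (1 / 2)) ^ (finrank ℝ E / 2 : ℂ) = 1 := by
    have : ((Real.pi : ℂ) / (1 / 2)) ^ (finrank ℝ E / 2 : ℂ) =
        (((2 * Real.pi) ^ ((finrank ℝ E : ℝ) / 2) : ℝ) : ℂ) := by
      rw [Complex.ofReal_cpow hpi]; push_cast; congr 1; ring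
    rw [this, ← Complex.ofReal_mul, ← Real.rpow_add (by positivity)]
    ring_nf; simp
  simp_rw [hx]
  rw [integral_const_mul, h, ← mul_assoc, hconst, one_mul, Complex.I_sq]
  congr 1; ring

lemma integrable_gaussianDensity : Integrable (gaussianDensity : E → ℝ) := by
  by_contra hn
  have h := integral_gaussianDensity_mul_cexp (0 : E)
  simp only [inner_zero_right, Complex.ofReal_zero, zero_mul, Complex.exp_zero, mul_one,
    integral_complex_ofReal, integral_undef hn] at h
  simp at h

lemma stdGaussian_eq_withDensity : stdGaussian E =
    volume.withDensity fun x => ENNReal.ofReal (gaussianDensity x) := by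
  have : IsFiniteMeasure (volume.withDensity fun x : E => ENNReal.ofReal (gaussianDensity x)) :=
    isFiniteMeasure_withDensity_ofReal integrable_gaussianDensity.2
  refine Measure.ext_of_charFun (funext fun t => ?_)
  rw [charFun_stdGaussian, charFun_apply, integral_withDensity_eq_integral_toReal_smul
    (contDiff_gaussianDensity.continuous.measurable.ennreal_ofReal)
    (ae_of_all _ fun x => ENNReal.ofReal_lt_top), ← integral_gaussianDensity_mul_cexp]
  simp only [ENNReal.toReal_ofReal (gaussianDensity_nonneg _), Complex.real_smul]

lemma integral_stdGaussian (h : E → V) :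
    ∫ x, h x ∂stdGaussian E = ∫ x, gaussianDensity x • h x := by
  rw [stdGaussian_eq_withDensity, integral_withDensity_eq_integral_toReal_smul
    (contDiff_gaussianDensity.continuous.measurable.ennreal_ofReal)
    (ae_of_all _ fun x => ENNReal.ofReal_lt_top)]
  simp only [ENNReal.toReal_ofReal (gaussianDensity_nonneg _)]

lemma integral_inner_smul_stdGaussian {h : E → V} (hh : IsTestFunction h) (v : E) :
    ∫ x, ⟪x, v⟫ • h x ∂stdGaussian E = ∫ x, dirDeriv v h x ∂stdGaussian E := by
  have h1 := integral_smul_fderiv_eq_neg_fderiv_smul_of_integrable (μ := (volume : Measure E))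
    (f := gaussianDensity) (g := h) (v := v)
    (((contDiff_dirDeriv contDiff_gaussianDensity v).continuous.smul
      hh.contDiff.continuous).integrable_of_hasCompactSupport hh.hasCompactSupport.smul_left)
    ((contDiff_gaussianDensity.continuous.smul
      (hh.dirDeriv v).contDiff.continuous).integrable_of_hasCompactSupport
        (hh.dirDeriv v).hasCompactSupport.smul_left)
    ((contDiff_gaussianDensity.continuous.smul
      hh.contDiff.continuous).integrable_of_hasCompactSupport hh.hasCompactSupport.smul_left)
    (fun x _ => contDiff_gaussianDensity.differentiable (by simp) x)
    (fun x _ => hh.contDiff.differentiable (by simp) x)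
  rw [integral_stdGaussian, integral_stdGaussian]
  refine Eq.trans ?_ h1.symm
  rw [← integral_neg]
  refine integral_congr_ae (ae_of_all _ fun x => ?_)
  change _ = -(dirDeriv v gaussianDensity x • h x)
  simp only [dirDeriv_gaussianDensity, neg_smul, neg_neg, smul_smul, mul_comm]

lemma integrable_one_add_norm_pow_stdGaussian (N : ℕ) :
    Integrable (fun x : E => (1 + ‖x‖) ^ N) (stdGaussian E) := by
  have hnorm : MemLp (fun x : E => ‖x‖) N (stdGaussian E) :=
    (IsGaussian.memLp_id (stdGaussian E) N (ENNReal.natCast_ne_top N)).norm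
  have h : MemLp (fun x : E => 1 + ‖x‖) N (stdGaussian E) := (memLp_const (1 : ℝ)).add hnorm
  refine h.integrable_norm_pow'.congr (ae_of_all _ fun x => ?_)
  simp only [Real.norm_of_nonneg (show (0 : ℝ) ≤ 1 + ‖x‖ by positivity)]

lemma stdGaussian_conv_stdGaussian :
    stdGaussian E ∗ stdGaussian E = (stdGaussian E).map (√2 • ·) := by
  refine Measure.ext_of_charFun (funext fun t => ?_)
  rw [charFun_conv, charFun_map_smul, charFun_stdGaussian, charFun_stdGaussian, ← Complex.exp_add,
    norm_smul, Real.norm_of_nonneg (Real.sqrt_nonneg _)]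
  congr 1
  norm_cast
  rw [mul_pow, Real.sq_sqrt zero_le_two]
  ring

lemma map_neg_stdGaussian : (stdGaussian E).map (fun x => -x) = stdGaussian E :=
  stdGaussian_map (LinearIsometryEquiv.neg ℝ)

end Gaussian

section Heat

variable {E V : Type*} [NormedAddCommGroup E] [InnerProductSpace ℝ E] [FiniteDimensional ℝ E]
  [MeasurableSpace E] [BorelSpace E] [NormedAddCommGroup V] [NormedSpace ℝ V]

/-- Gaussian averages `𝔼 w(x + sY)` with `Y` standard Gaussian, that is `e^{(s²/2)Δ} w`: the heat
semigroup parametrised by standard deviation instead of time. -/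
noncomputable def heat (s : ℝ) (w : E → V) (x : E) : V := ∫ y, w (x + s • y) ∂stdGaussian E

lemma heat_zero [CompleteSpace V] (w : E → V) : heat 0 w = w := by
  ext x; simp [heat]

lemma norm_heat_le {w : E → V} {C : ℝ} (hC : ∀ x, ‖w x‖ ≤ C) (s : ℝ) (x : E) :
    ‖heat s w x‖ ≤ C :=
  (norm_integral_le_of_norm_le_const (ae_of_all _ fun y => hC (x + s • y))).trans_eq (by simp)

lemma IsTestFunction.integrable_heat_integrand {w : E → V} (hw : IsTestFunction w) (s : ℝ)
    (x : E) : Integrable (fun y => w (x + s • y)) (stdGaussian E) := by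
  obtain ⟨C, hC⟩ := hw.exists_norm_le
  exact .of_bound (hw.contDiff.continuous.comp (by fun_prop)).aestronglyMeasurable C
    (ae_of_all _ fun y => hC _)

lemma heat_add {w z : E → V} (hw : IsTestFunction w) (hz : IsTestFunction z) (s : ℝ) (x : E) :
    heat s (fun y => w y + z y) x = heat s w x + heat s z x :=
  integral_add (hw.integrable_heat_integrand s x) (hz.integrable_heat_integrand s x)

lemma heat_sum {ι : Type*} {t : Finset ι} {w : ι → E → V} (hw : ∀ i ∈ t, IsTestFunction (w i))
    (s : ℝ) (x : E) : heat s (fun y => ∑ i ∈ t, w i y) x = ∑ i ∈ t, heat s (w i) x :=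
  integral_finsetSum t fun i hi => (hw i hi).integrable_heat_integrand s x

lemma IsTestFunction.continuous_heat_uncurry {w : E → V} (hw : IsTestFunction w) :
    Continuous fun q : ℝ × E => heat q.1 w q.2 := by
  obtain ⟨C, hC⟩ := hw.exists_norm_le
  refine continuous_of_dominated (bound := fun _ => C)
    (fun q => (hw.integrable_heat_integrand q.1 q.2).aestronglyMeasurable)
    (fun q => ae_of_all _ fun y => hC _) (integrable_const C) (ae_of_all _ fun y => ?_)
  exact hw.contDiff.continuous.comp (by fun_prop)

lemma IsTestFunction.continuous_heat {w : E → V} (hw : IsTestFunction w) (s : ℝ) :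
    Continuous (heat s w) :=
  hw.continuous_heat_uncurry.comp (Continuous.prodMk_right s)

-- `1 + ‖x‖ ≤ (1 + ‖x + s y‖)(1 + |s|)(1 + ‖y‖)` moves the weight from `w` to the Gaussian moments.
lemma IsTestFunction.exists_one_add_norm_pow_mul_heat_le {w : E → V} (hw : IsTestFunction w)
    (N : ℕ) : ∃ C, 0 ≤ C ∧ ∀ s x, (1 + ‖x‖) ^ N * ‖heat s w x‖ ≤ C * (1 + |s|) ^ N := by
  obtain ⟨C, hC0, hC⟩ := hw.exists_one_add_norm_pow_mul_le N
  set m := ∫ y : E, (1 + ‖y‖) ^ N ∂stdGaussian E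
  have hm0 : 0 ≤ m := integral_nonneg fun y => by positivity
  refine ⟨C * m, mul_nonneg hC0 hm0, fun s x => ?_⟩
  have hweight : ∀ y : E, (1 + ‖x‖) ^ N ≤ (1 + ‖x + s • y‖) ^ N * ((1 + |s|) * (1 + ‖y‖)) ^ N := by
    intro y
    rw [← mul_pow]
    have h1 : ‖x‖ ≤ ‖x + s • y‖ + |s| * ‖y‖ := by
      have := norm_sub_le (x + s • y) (s • y)
      rwa [add_sub_cancel_right, norm_smul, Real.norm_eq_abs] at this
    have := norm_nonneg (x + s • y)
    have h2 : 0 ≤ ‖x + s • y‖ * (|s| + ‖y‖ + |s| * ‖y‖) := by positivity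
    gcongr
    nlinarith [norm_nonneg y, abs_nonneg s]
  have hpt : ∀ y : E, ‖(1 + ‖x‖) ^ N * ‖w (x + s • y)‖‖ ≤ C * (1 + |s|) ^ N * (1 + ‖y‖) ^ N := by
    intro y
    rw [Real.norm_of_nonneg (by positivity)]
    calc (1 + ‖x‖) ^ N * ‖w (x + s • y)‖
        ≤ (1 + ‖x + s • y‖) ^ N * ((1 + |s|) * (1 + ‖y‖)) ^ N * ‖w (x + s • y)‖ := by
          gcongr; exact hweight y
      _ = (1 + ‖x + s • y‖) ^ N * ‖w (x + s • y)‖ * ((1 + |s|) * (1 + ‖y‖)) ^ N := by ring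
      _ ≤ C * ((1 + |s|) * (1 + ‖y‖)) ^ N := by gcongr; exact hC _
      _ = C * (1 + |s|) ^ N * (1 + ‖y‖) ^ N := by rw [mul_pow, mul_assoc]
  calc (1 + ‖x‖) ^ N * ‖heat s w x‖
      ≤ (1 + ‖x‖) ^ N * ∫ y, ‖w (x + s • y)‖ ∂stdGaussian E := by
        gcongr; exact norm_integral_le_integral_norm _
    _ = ∫ y, (1 + ‖x‖) ^ N * ‖w (x + s • y)‖ ∂stdGaussian E := (integral_const_mul _ _).symm
    _ ≤ ∫ y, C * (1 + |s|) ^ N * (1 + ‖y‖) ^ N ∂stdGaussian E :=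
        (Real.le_norm_self _).trans (norm_integral_le_of_norm_le
          ((integrable_one_add_norm_pow_stdGaussian N).const_mul _) (ae_of_all _ hpt))
    _ = C * m * (1 + |s|) ^ N := by rw [integral_const_mul]; ring

lemma IsTestFunction.hasFDerivAt_heat {w : E → V} (hw : IsTestFunction w) (s : ℝ) (x : E) :
    HasFDerivAt (heat s w) (heat s (fderiv ℝ w) x) x := by
  obtain ⟨C, hC⟩ := hw.fderiv.exists_norm_le
  refine hasFDerivAt_integral_of_dominated_of_fderiv_le (bound := fun _ => C)
    (F' := fun z y => fderiv ℝ w (z + s • y)) univ_mem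
    (Eventually.of_forall fun z => (hw.integrable_heat_integrand s z).aestronglyMeasurable)
    (hw.integrable_heat_integrand s x)
    (hw.fderiv.integrable_heat_integrand s x).aestronglyMeasurable
    (ae_of_all _ fun y z _ => hC _) (integrable_const C) (ae_of_all _ fun y z _ => ?_)
  exact (hasFDerivAt_comp_add_right _).mpr
    (hw.contDiff.differentiable (by simp) (z + s • y)).hasFDerivAt

lemma IsTestFunction.heat_fderiv_apply {w : E → V} (hw : IsTestFunction w) (s : ℝ) (x v : E) :
    heat s (fderiv ℝ w) x v = heat s (dirDeriv v w) x :=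
  ContinuousLinearMap.integral_apply (hw.fderiv.integrable_heat_integrand s x) v

variable {ι : Type*} [Fintype ι] (b : OrthonormalBasis ι ℝ E)

lemma IsTestFunction.integral_fderiv_stdGaussian [CompleteSpace V] {w : E → V}
    (hw : IsTestFunction w) (s : ℝ) (x : E) :
    ∫ y, fderiv ℝ w (x + s • y) y ∂stdGaussian E =
      s • heat s (fun z => ∑ i, dirDeriv (b i) (dirDeriv (b i) w) z) x := by
  rcases eq_or_ne s 0 with rfl | hs
  · have h := (fderiv ℝ w x).integral_comp_comm (IsGaussian.integrable_id (μ := stdGaussian E))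
    simpa using h
  have htest : ∀ i, IsTestFunction fun y => dirDeriv (b i) w (x + s • y) := fun i =>
    (hw.dirDeriv (b i)).comp_homothety x hs
  have hint : ∀ i, Integrable (fun y => ⟪y, b i⟫ • dirDeriv (b i) w (x + s • y))
      (stdGaussian E) := fun i =>
    Continuous.integrable_of_hasCompactSupport
      ((continuous_id.inner continuous_const).smul (htest i).contDiff.continuous)
      (htest i).hasCompactSupport.smul_left
  have hexpand : ∀ y, fderiv ℝ w (x + s • y) y =
      ∑ i, ⟪y, b i⟫ • dirDeriv (b i) w (x + s • y) := fun y => by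
    conv_lhs => enter [2]; rw [← b.sum_repr' y]
    simp only [map_sum, map_smul, dirDeriv, real_inner_comm]
  simp_rw [hexpand]
  rw [integral_finsetSum _ fun i _ => hint i,
    heat_sum fun i _ => (hw.dirDeriv (b i)).dirDeriv (b i), Finset.smul_sum]
  refine Finset.sum_congr rfl fun i _ => ?_
  rw [integral_inner_smul_stdGaussian (htest i) (b i),
    dirDeriv_comp_homothety (hw.dirDeriv (b i)).contDiff, integral_smul, heat]

lemma IsTestFunction.hasDerivAt_heat [CompleteSpace V] {w : E → V} (hw : IsTestFunction w)
    (s : ℝ) (x : E) : HasDerivAt (fun r => heat r w x)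
      (s • heat s (fun z => ∑ i, dirDeriv (b i) (dirDeriv (b i) w) z) x) s := by
  obtain ⟨C, hC⟩ := hw.fderiv.exists_norm_le
  have hbound : ∀ (r : ℝ) (y : E), ‖fderiv ℝ w (x + r • y) y‖ ≤ C * (1 + ‖y‖) ^ 1 := fun r y => by
    have hC0 := (norm_nonneg _).trans (hC x)
    calc ‖fderiv ℝ w (x + r • y) y‖ ≤ ‖fderiv ℝ w (x + r • y)‖ * ‖y‖ :=
          ContinuousLinearMap.le_opNorm _ _
      _ ≤ C * (1 + ‖y‖) ^ 1 := by
          rw [pow_one]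
          exact mul_le_mul (hC _) (by linarith) (norm_nonneg y) hC0
  rw [← hw.integral_fderiv_stdGaussian b]
  refine (hasDerivAt_integral_of_dominated_loc_of_deriv_le (s := univ)
    (bound := fun y => C * (1 + ‖y‖) ^ 1) univ_mem
    (Eventually.of_forall fun r => (hw.integrable_heat_integrand r x).aestronglyMeasurable)
    (hw.integrable_heat_integrand s x) ?_ (ae_of_all _ fun y r _ => hbound r y)
    ((integrable_one_add_norm_pow_stdGaussian 1).const_mul C)
    (ae_of_all _ fun y r _ => ?_)).2
  · exact ((hw.fderiv.contDiff.continuous.comp (by fun_prop : Continuous fun y : E => x + s • y)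
      ).clm_apply continuous_id).aestronglyMeasurable
  · have h1 : HasDerivAt (fun r : ℝ => x + r • y) y r := by
      simpa using ((hasDerivAt_id r).smul_const y).const_add x
    exact ((hw.contDiff.differentiable (by simp)) (x + r • y)).hasFDerivAt.comp_hasDerivAt r h1

lemma integrable_inv_one_add_norm_pow :
    Integrable (fun x : E => ((1 + ‖x‖) ^ (finrank ℝ E + 1))⁻¹) := by
  refine (integrable_one_add_norm (E := E) (μ := volume) (r := (finrank ℝ E + 1 : ℕ))
    (by push_cast; linarith)).congr (ae_of_all _ fun x => ?_)
  simp only [Real.rpow_neg (show (0 : ℝ) ≤ 1 + ‖x‖ by positivity), Real.rpow_natCast]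

end Heat

section Dissipation

variable {E V G : Type*} [NormedAddCommGroup E] [InnerProductSpace ℝ E] [FiniteDimensional ℝ E]
  [MeasurableSpace E] [BorelSpace E] [NormedAddCommGroup V] [NormedSpace ℝ V]
  [NormedAddCommGroup G]

lemma IsTestFunction.exists_norm_heat_le {w : E → V} (hw : IsTestFunction w) :
    ∃ C, 0 ≤ C ∧ ∀ s x, ‖heat s w x‖ ≤
      C * (1 + |s|) ^ (finrank ℝ E + 1) * ((1 + ‖x‖) ^ (finrank ℝ E + 1))⁻¹ := by
  obtain ⟨C, hC0, hC⟩ := hw.exists_one_add_norm_pow_mul_heat_le (finrank ℝ E + 1)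
  refine ⟨C, hC0, fun s x => ?_⟩
  rw [← div_eq_mul_inv, le_div_iff₀ (by positivity), mul_comm]
  exact hC s x

lemma IsTestFunction.integrable_heat {w : E → V} (hw : IsTestFunction w) (s : ℝ) :
    Integrable (heat s w) := by
  obtain ⟨C, -, hC⟩ := hw.exists_norm_heat_le
  exact (integrable_inv_one_add_norm_pow.const_mul _).mono'
    (hw.continuous_heat s).aestronglyMeasurable (ae_of_all _ (hC s))

lemma IsTestFunction.exists_norm_comp_heat_le [ProperSpace V] {w : E → V} (hw : IsTestFunction w)
    {F : V → G} (hF : Continuous F) : ∃ C, 0 ≤ C ∧ ∀ s x, ‖F (heat s w x)‖ ≤ C := by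
  obtain ⟨R, hR⟩ := hw.exists_norm_le
  obtain ⟨C, hC⟩ := (isCompact_closedBall (0 : V) R).exists_bound_of_continuousOn hF.continuousOn
  have h : ∀ s x, ‖F (heat s w x)‖ ≤ C := fun s x =>
    hC _ (mem_closedBall_zero_iff.mpr (norm_heat_le hR s x))
  exact ⟨C, (norm_nonneg _).trans (h 0 0), h⟩

lemma IsTestFunction.integrable_comp_heat [ProperSpace V] {w : E → V} (hw : IsTestFunction w)
    {Q : V → ℝ} (hQ : ContDiff ℝ 1 Q) (hQ0 : Q 0 = 0) (s : ℝ) :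
    Integrable fun x => Q (heat s w x) := by
  obtain ⟨R, hR⟩ := hw.exists_norm_le
  obtain ⟨C, hC⟩ := (isCompact_closedBall (0 : V) R).exists_bound_of_continuousOn
    (hQ.continuous_fderiv (by simp)).continuousOn
  have hR0 : (0 : V) ∈ Metric.closedBall (0 : V) R :=
    Metric.mem_closedBall_self ((norm_nonneg _).trans (hR 0))
  refine ((hw.integrable_heat s).norm.const_mul C).mono'
    (hQ.continuous.comp (hw.continuous_heat s)).aestronglyMeasurable (ae_of_all _ fun x => ?_)
  simpa [hQ0] using (convex_closedBall (0 : V) R).norm_image_sub_le_of_norm_fderiv_le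
    (fun y _ => hQ.differentiable (by simp) y) hC hR0
    (mem_closedBall_zero_iff.mpr (norm_heat_le hR s x))

variable {ι : Type*} [Fintype ι] (b : OrthonormalBasis ι ℝ E)

lemma IsTestFunction.hasDerivAt_integral_comp_heat_fderiv [FiniteDimensional ℝ V] {w : E → V}
    (hw : IsTestFunction w) {Q : V → ℝ} (hQ : ContDiff ℝ 2 Q) (hQ0 : Q 0 = 0) (s : ℝ) :
    HasDerivAt (fun r => ∫ x, Q (heat r w x))
      (∫ x, fderiv ℝ Q (heat s w x)
        (s • heat s (fun z => ∑ i, dirDeriv (b i) (dirDeriv (b i) w) z) x)) s := by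
  set Δw : E → V := fun z => ∑ i, dirDeriv (b i) (dirDeriv (b i) w) z
  have hΔ : IsTestFunction Δw := .sum fun i _ => (hw.dirDeriv (b i)).dirDeriv (b i)
  have hDQ : Continuous (fderiv ℝ Q) := hQ.continuous_fderiv (by simp)
  obtain ⟨C₁, hC₁, hDQb⟩ := hw.exists_norm_comp_heat_le hDQ
  obtain ⟨C₂, hC₂, hΔb⟩ := hΔ.exists_norm_heat_le
  have hmeas : ∀ r, AEStronglyMeasurable fun x => Q (heat r w x) := fun r =>
    (hQ.continuous.comp (hw.continuous_heat r)).aestronglyMeasurable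
  refine (hasDerivAt_integral_of_dominated_loc_of_deriv_le (Metric.ball_mem_nhds s one_pos)
    (F' := fun r x => fderiv ℝ Q (heat r w x) (r • heat r Δw x))
    (Eventually.of_forall hmeas) (hw.integrable_comp_heat (hQ.of_le one_le_two) hQ0 s)
    ((hDQ.comp (hw.continuous_heat s)).clm_apply
      ((hΔ.continuous_heat s).const_smul s)).aestronglyMeasurable
    (ae_of_all _ fun x r hr => ?_)
    (integrable_inv_one_add_norm_pow.const_mul
      (C₁ * ((|s| + 1) * (C₂ * (1 + (|s| + 1)) ^ (finrank ℝ E + 1)))))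
    (ae_of_all _ fun x r _ => ?_)).2
  · have hrs : |r| ≤ |s| + 1 := by
      have : |r - s| < 1 := hr
      linarith [abs_sub_abs_le_abs_sub r s]
    calc ‖fderiv ℝ Q (heat r w x) (r • heat r Δw x)‖
        ≤ ‖fderiv ℝ Q (heat r w x)‖ * (|r| * ‖heat r Δw x‖) := by
          rw [← Real.norm_eq_abs, ← norm_smul]; exact ContinuousLinearMap.le_opNorm _ _
      _ ≤ C₁ * ((|s| + 1) * (C₂ * (1 + (|s| + 1)) ^ (finrank ℝ E + 1) *
            ((1 + ‖x‖) ^ (finrank ℝ E + 1))⁻¹)) := by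
          gcongr
          · exact hDQb r x
          · exact (hΔb r x).trans (by gcongr)
      _ = _ := by ring
  · exact (hQ.differentiable (by simp) _).hasFDerivAt.comp_hasDerivAt r (hw.hasDerivAt_heat b r x)

lemma IsTestFunction.integrable_fderiv_comp_heat [ProperSpace V] {w z : E → V}
    (hw : IsTestFunction w) (hz : IsTestFunction z) {Q : V → ℝ} (hQ : ContDiff ℝ 1 Q) (s : ℝ) :
    Integrable fun x => fderiv ℝ Q (heat s w x) (heat s z x) := by
  have hDQ : Continuous (fderiv ℝ Q) := hQ.continuous_fderiv (by simp)
  obtain ⟨C, _, hDQb⟩ := hw.exists_norm_comp_heat_le hDQ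
  refine ((hz.integrable_heat s).norm.const_mul C).mono'
    ((hDQ.comp (hw.continuous_heat s)).clm_apply
      (hz.continuous_heat s)).aestronglyMeasurable (ae_of_all _ fun x => ?_)
  exact (ContinuousLinearMap.le_opNorm _ _).trans (by gcongr; exact hDQb s x)

lemma IsTestFunction.integrable_hessian_comp_heat [ProperSpace V] {w z : E → V}
    (hw : IsTestFunction w) (hz : IsTestFunction z) {Q : V → ℝ} (hQ : ContDiff ℝ 2 Q) (s : ℝ) :
    Integrable fun x => fderiv ℝ (fderiv ℝ Q) (heat s w x) (heat s z x) (heat s z x) := by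
  have hD2Q := (hQ.fderiv_right (m := 1) (by norm_num)).continuous_fderiv (by simp)
  obtain ⟨C₁, hC₁, hD2Qb⟩ := hw.exists_norm_comp_heat_le hD2Q
  obtain ⟨C₂, hC₂⟩ := hz.exists_norm_le
  refine ((hz.integrable_heat s).norm.const_mul (C₁ * C₂)).mono'
    (((hD2Q.comp (hw.continuous_heat s)).clm_apply (hz.continuous_heat s)).clm_apply
      (hz.continuous_heat s)).aestronglyMeasurable
    (ae_of_all _ fun x => (ContinuousLinearMap.le_opNorm₂ _ _ _).trans ?_)
  gcongr
  · exact hD2Qb s x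
  · exact norm_heat_le hC₂ s x

lemma IsTestFunction.integral_fderiv_comp_heat [ProperSpace V] {w : E → V}
    (hw : IsTestFunction w) {Q : V → ℝ} (hQ : ContDiff ℝ 2 Q) (s : ℝ) (v : E) :
    ∫ x, fderiv ℝ Q (heat s w x) (heat s (dirDeriv v (dirDeriv v w)) x) =
      -∫ x, fderiv ℝ (fderiv ℝ Q) (heat s w x) (heat s (dirDeriv v w) x)
        (heat s (dirDeriv v w) x) := by
  have hQ1 : ContDiff ℝ 1 Q := hQ.of_le one_le_two
  have hDQ : ContDiff ℝ 1 (fderiv ℝ Q) := hQ.fderiv_right (by norm_num)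
  have hv := hw.dirDeriv v
  have key := integral_bilinear_hasFDerivAt_right_eq_neg_left_of_integrable
    (μ := (volume : Measure E)) (v := v) (B := ContinuousLinearMap.id ℝ (V →L[ℝ] ℝ))
    (f := fun x => fderiv ℝ Q (heat s w x)) (g := heat s (dirDeriv v w))
    (f' := fun x => (fderiv ℝ (fderiv ℝ Q) (heat s w x)).comp (heat s (fderiv ℝ w) x))
    (g' := heat s (fderiv ℝ (dirDeriv v w)))
    (by simpa [hw.heat_fderiv_apply] using hw.integrable_hessian_comp_heat hv hQ s)
    (by simpa [hv.heat_fderiv_apply] using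
      hw.integrable_fderiv_comp_heat (hv.dirDeriv v) hQ1 s)
    (by simpa using hw.integrable_fderiv_comp_heat hv hQ1 s)
    (fun x _ => (hDQ.differentiable (by simp) _).hasFDerivAt.comp x (hw.hasFDerivAt_heat s x))
    (fun x _ => hv.hasFDerivAt_heat s x)
  simpa [hw.heat_fderiv_apply, hv.heat_fderiv_apply] using key

/-- Density of the dissipation of `∫ Q(heat s w)` along the heat flow. -/
noncomputable def dissipation (Q : V → ℝ) (w : E → V) (s : ℝ) (x : E) : ℝ :=
  ∑ i, fderiv ℝ (fderiv ℝ Q) (heat s w x) (heat s (dirDeriv (b i) w) x)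
    (heat s (dirDeriv (b i) w) x)

lemma IsTestFunction.integrable_dissipation [ProperSpace V] {w : E → V} (hw : IsTestFunction w)
    {Q : V → ℝ} (hQ : ContDiff ℝ 2 Q) (s : ℝ) : Integrable (dissipation b Q w s) :=
  integrable_finsetSum _ fun i _ => hw.integrable_hessian_comp_heat (hw.dirDeriv (b i)) hQ s

lemma IsTestFunction.hasDerivAt_integral_comp_heat [FiniteDimensional ℝ V] {w : E → V}
    (hw : IsTestFunction w) {Q : V → ℝ} (hQ : ContDiff ℝ 2 Q) (hQ0 : Q 0 = 0) (s : ℝ) :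
    HasDerivAt (fun r => ∫ x, Q (heat r w x)) (-(s * ∫ x, dissipation b Q w s x)) s := by
  have h2 := fun i => (hw.dirDeriv (b i)).dirDeriv (b i)
  convert! hw.hasDerivAt_integral_comp_heat_fderiv b hQ hQ0 s using 1
  simp only [map_smul, smul_eq_mul, heat_sum fun i _ => h2 i, map_sum, dissipation]
  rw [integral_const_mul,
    integral_finsetSum _ fun i _ => hw.integrable_hessian_comp_heat (hw.dirDeriv (b i)) hQ s,
    integral_finsetSum _ fun i _ => hw.integrable_fderiv_comp_heat (h2 i) (hQ.of_le one_le_two) s,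
    ← mul_neg, ← Finset.sum_neg_distrib]
  simp only [hw.integral_fderiv_comp_heat hQ]

end Dissipation

section Bellman

lemma fderiv_fderiv_apply_self_eq {V : Type*} [NormedAddCommGroup V] [NormedSpace ℝ V] {Q : V → ℝ}
    (hQ : ContDiff ℝ 2 Q) {p h : V} {q' : ℝ → ℝ} {q'' : ℝ}
    (hq' : ∀ t, HasDerivAt (fun t : ℝ => Q (p + t • h)) (q' t) t) (hq'' : HasDerivAt q' q'' 0) :
    fderiv ℝ (fderiv ℝ Q) p h h = q'' := by
  have hline : ∀ t : ℝ, HasDerivAt (fun t : ℝ => p + t • h) h t := fun t => by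
    simpa using ((hasDerivAt_id t).smul_const h).const_add p
  have h1 : ∀ t, q' t = fderiv ℝ Q (p + t • h) h := fun t =>
    (hq' t).unique ((hQ.differentiable (by simp) _).hasFDerivAt.comp_hasDerivAt t (hline t))
  have h2 : HasFDerivAt (fderiv ℝ Q) (fderiv ℝ (fderiv ℝ Q) p) (p + (0 : ℝ) • h) := by
    simpa using ((hQ.fderiv_right (m := 1) (by norm_num)).differentiable (by simp) p).hasFDerivAt
  have h3 : HasDerivAt (fun t : ℝ => fderiv ℝ Q (p + t • h)) (fderiv ℝ (fderiv ℝ Q) p h) 0 :=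
    h2.comp_hasDerivAt (0 : ℝ) (hline 0)
  have h4 : HasDerivAt q' (fderiv ℝ (fderiv ℝ Q) p h h) 0 := by
    rw [funext h1]
    exact (ContinuousLinearMap.apply ℝ ℝ h).hasFDerivAt.comp_hasDerivAt (0 : ℝ) h3
  exact h4.unique hq''

/-- The quantity `a² + √(b² + ε²)`, a smooth substitute for `a² + |b|`. -/
noncomputable def bellmanBase (ε : ℝ) (p : ℝ × ℝ) : ℝ := p.1 ^ 2 + √(p.2 ^ 2 + ε ^ 2)

/-- The Bellman function `(a² + |b|)^{3/2}` of the dual pair `(L³, L^{3/2})`, smoothed at scale `ε`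
and normalised to vanish at the origin. -/
noncomputable def bellman (ε : ℝ) (p : ℝ × ℝ) : ℝ :=
  bellmanBase ε p ^ (3 / 2 : ℝ) - ε ^ (3 / 2 : ℝ)

variable {ε : ℝ}

lemma le_bellmanBase (p : ℝ × ℝ) : ε ≤ bellmanBase ε p :=
  le_add_of_nonneg_of_le (sq_nonneg _) (Real.le_sqrt_of_sq_le (by linarith [sq_nonneg p.2]))

lemma bellmanBase_pos (hε : 0 < ε) (p : ℝ × ℝ) : 0 < bellmanBase ε p :=
  hε.trans_le (le_bellmanBase p)

lemma bellman_nonneg (hε : 0 ≤ ε) (p : ℝ × ℝ) : 0 ≤ bellman ε p :=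
  sub_nonneg.mpr (Real.rpow_le_rpow hε (le_bellmanBase p) (by norm_num))

lemma bellman_zero (hε : 0 ≤ ε) : bellman ε 0 = 0 := by
  simp [bellman, bellmanBase, Real.sqrt_sq hε]

lemma continuous_bellman : Continuous fun q : ℝ × ℝ × ℝ => bellman q.1 q.2 := by
  unfold bellman bellmanBase
  exact (Continuous.rpow_const (by fun_prop) fun _ => .inr (by norm_num)).sub
    (continuous_fst.rpow_const fun _ => .inr (by norm_num))

lemma contDiff_bellman (hε : 0 < ε) : ContDiff ℝ 2 (bellman ε) := by
  have hsqrt : ContDiff ℝ 2 fun p : ℝ × ℝ => √(p.2 ^ 2 + ε ^ 2) :=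
    ((contDiff_snd.pow 2).add contDiff_const).sqrt fun p => by positivity
  exact (((contDiff_fst.pow 2).add hsqrt).rpow_const_of_ne
    fun p => (bellmanBase_pos hε p).ne').sub contDiff_const

-- With `k = √(b² + ε²)`, `m = b/k = ∂k/∂b` and `ε²/k³ = ∂²k/∂b²`.
lemma hessian_bellman (hε : 0 < ε) (p h : ℝ × ℝ) :
    fderiv ℝ (fderiv ℝ (bellman ε)) p h h =
      3 / 4 * (2 * p.1 * h.1 + p.2 / √(p.2 ^ 2 + ε ^ 2) * h.2) ^ 2 / √(bellmanBase ε p) +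
      3 / 2 * √(bellmanBase ε p) * (2 * h.1 ^ 2 + ε ^ 2 / √(p.2 ^ 2 + ε ^ 2) ^ 3 * h.2 ^ 2) := by
  set k : ℝ → ℝ := fun t => √((p.2 + t * h.2) ^ 2 + ε ^ 2)
  set S : ℝ → ℝ := fun t => bellmanBase ε (p + t • h)
  set S' : ℝ → ℝ := fun t => 2 * (p.1 + t * h.1) * h.1 + (p.2 + t * h.2) * h.2 / k t
  have hk0 : ∀ t, 0 < k t := fun t => Real.sqrt_pos.mpr (by positivity)
  have hS0 : ∀ t, 0 < S t := fun t => bellmanBase_pos hε _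
  have hline : ∀ c d t : ℝ, HasDerivAt (fun t => c + t * d) d t := fun c d t => by
    simpa using ((hasDerivAt_id t).mul_const d).const_add c
  have hk : ∀ t, HasDerivAt k ((p.2 + t * h.2) * h.2 / k t) t := fun t => by
    have hpos : (p.2 + t * h.2) ^ 2 + ε ^ 2 ≠ 0 := by positivity
    convert! (((hline p.2 h.2 t).fun_pow 2).add_const (ε ^ 2)).sqrt hpos using 1
    simp only [k]; ring
  have hS : ∀ t, HasDerivAt S (S' t) t := fun t => by
    convert! ((hline p.1 h.1 t).fun_pow 2).add (hk t) using 1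
    simp only [S']; ring
  have hS' : HasDerivAt S' (2 * h.1 ^ 2 + ε ^ 2 / k 0 ^ 3 * h.2 ^ 2) 0 := by
    convert! (((hline p.1 h.1 0).const_mul 2).mul_const h.1).add
      (((hline p.2 h.2 0).mul_const h.2).div (hk 0) (hk0 0).ne') using 1
    have hk2 : k 0 ^ 2 = p.2 ^ 2 + ε ^ 2 := by
      simp only [k, zero_mul, add_zero]
      exact Real.sq_sqrt (by positivity)
    have := (hk0 0).ne'
    field_simp
    linear_combination (-h.2 ^ 2) * hk2
  refine (fderiv_fderiv_apply_self_eq (contDiff_bellman hε) (q' := fun t => 3 / 2 * √(S t) * S' t)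
    (fun t => ?_) (((hS 0).sqrt (hS0 0).ne').const_mul (3 / 2) |>.mul hS')).trans ?_
  · convert! ((hS t).rpow_const (.inl (hS0 t).ne') (p := 3 / 2)).sub_const (ε ^ (3 / 2 : ℝ)) using 1
    rw [Real.sqrt_eq_rpow]; norm_num; ring
  · have := (Real.sqrt_pos.mpr (hS0 0)).ne'
    simp only [S, S', k, zero_smul, add_zero, zero_mul]
    field_simp
    ring

lemma mul_sq_le_hessian_bellman (hε : 0 < ε) (p h : ℝ × ℝ) :
    3 * √(bellmanBase ε p) * h.1 ^ 2 ≤ fderiv ℝ (fderiv ℝ (bellman ε)) p h h := by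
  rw [hessian_bellman hε]
  have : 0 ≤ 3 / 4 * (2 * p.1 * h.1 + p.2 / √(p.2 ^ 2 + ε ^ 2) * h.2) ^ 2 / √(bellmanBase ε p) +
    3 / 2 * √(bellmanBase ε p) * (ε ^ 2 / √(p.2 ^ 2 + ε ^ 2) ^ 3 * h.2 ^ 2) := by positivity
  linarith

-- `m² + ε²/k² = 1` splits `h.2²`; the part `m² h.2²` is recovered from the square in the Hessian
-- at the expense of `(2 p.1 h.1)²`.
lemma sq_le_mul_hessian_bellman (hε : 0 < ε) (p h : ℝ × ℝ) :
    3 * h.2 ^ 2 ≤ 8 * √(bellmanBase ε p) * fderiv ℝ (fderiv ℝ (bellman ε)) p h h := by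
  set k := √(p.2 ^ 2 + ε ^ 2) with hk
  set σ := √(bellmanBase ε p) with hσ
  have hk0 : 0 < k := Real.sqrt_pos.mpr (by positivity)
  have hσ0 : 0 < σ := Real.sqrt_pos.mpr (bellmanBase_pos hε p)
  have hk2 : k ^ 2 = p.2 ^ 2 + ε ^ 2 := Real.sq_sqrt (by positivity)
  have hσ2 : σ ^ 2 = p.1 ^ 2 + k := Real.sq_sqrt (bellmanBase_pos hε p).le
  set m := p.2 / k with hm
  set n := ε ^ 2 / k ^ 3 with hn
  have hmn : m ^ 2 + k * n = 1 := by
    rw [hm, hn]; field_simp; linarith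
  have hH : σ * fderiv ℝ (fderiv ℝ (bellman ε)) p h h =
      3 / 4 * (2 * p.1 * h.1 + m * h.2) ^ 2 + 3 / 2 * σ ^ 2 * (2 * h.1 ^ 2 + n * h.2 ^ 2) := by
    rw [hessian_bellman hε, ← hk, ← hσ, ← hm, ← hn]; field_simp
  have hnp : 0 ≤ n * h.2 ^ 2 * p.1 ^ 2 := by positivity
  have hnk : 0 ≤ n * h.2 ^ 2 * k := by positivity
  have hkh : 0 ≤ k * h.1 ^ 2 := by positivity
  rw [mul_assoc, hH, hσ2]
  have hsplit : h.2 ^ 2 = m ^ 2 * h.2 ^ 2 + k * n * h.2 ^ 2 := by rw [← add_mul, hmn, one_mul]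
  nlinarith [sq_nonneg (2 * (2 * p.1 * h.1) + m * h.2)]

end Bellman

section BilinearEmbedding

variable {E : Type*} [NormedAddCommGroup E] [InnerProductSpace ℝ E] [FiniteDimensional ℝ E]
  [MeasurableSpace E] [BorelSpace E] {g f : E → ℝ}

lemma IsTestFunction.heat_prodMk (hg : IsTestFunction g) (hf : IsTestFunction f) (s : ℝ) (x : E) :
    heat s (fun y => (g y, f y)) x = (heat s g x, heat s f x) :=
  integral_pair (hg.integrable_heat_integrand s x) (hf.integrable_heat_integrand s x)

variable {ι : Type*} [Fintype ι] (b : OrthonormalBasis ι ℝ E)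

lemma IsTestFunction.abs_heat_mul_heat_le_dissipation (hg : IsTestFunction g)
    (hf : IsTestFunction f) {ε : ℝ} (hε : 0 < ε) (i j : ι) (s : ℝ) (x : E) :
    |heat s (dirDeriv (b i) g) x * heat s (dirDeriv (b j) f) x| ≤
      dissipation b (bellman ε) (fun y => (g y, f y)) s x := by
  set p := heat s (fun y => (g y, f y)) x
  set h : ι → ℝ × ℝ := fun l => (heat s (dirDeriv (b l) g) x, heat s (dirDeriv (b l) f) x)
  set H : ι → ℝ := fun l => fderiv ℝ (fderiv ℝ (bellman ε)) p (h l) (h l)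
  have hD : dissipation b (bellman ε) (fun y => (g y, f y)) s x = ∑ l, H l := by
    simp only [dissipation, dirDeriv_prodMk hg.contDiff hf.contDiff,
      (hg.dirDeriv _).heat_prodMk (hf.dirDeriv _)]
    rfl
  have hσ : 0 < √(bellmanBase ε p) := Real.sqrt_pos.mpr (bellmanBase_pos hε p)
  have hH1 : ∀ l, 3 * √(bellmanBase ε p) * (h l).1 ^ 2 ≤ H l := fun l =>
    mul_sq_le_hessian_bellman hε p (h l)
  have hH2 : 3 * (h j).2 ^ 2 ≤ 8 * √(bellmanBase ε p) * H j := sq_le_mul_hessian_bellman hε p (h j)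
  have hH0 : ∀ l, 0 ≤ H l := fun l => le_trans (by positivity) (hH1 l)
  have hle : ∀ l, H l ≤ ∑ l, H l := fun l =>
    Finset.single_le_sum (fun l _ => hH0 l) (Finset.mem_univ l)
  rw [hD]
  refine abs_le_of_sq_le_sq ?_ (Finset.sum_nonneg fun l _ => hH0 l)
  have hprod : (3 * √(bellmanBase ε p) * (h i).1 ^ 2) * (3 * (h j).2 ^ 2) ≤
      H i * (8 * √(bellmanBase ε p) * H j) :=
    mul_le_mul (hH1 i) hH2 (by positivity) (hH0 i)
  have h9 : 9 * ((h i).1 * (h j).2) ^ 2 ≤ 8 * (H i * H j) := by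
    refine le_of_mul_le_mul_left ?_ hσ
    linarith
  have hHH : H i * H j ≤ (∑ l, H l) ^ 2 := by
    rw [sq]; exact mul_le_mul (hle i) (hle j) (hH0 j) ((hH0 i).trans (hle i))
  linarith [sq_nonneg ((h i).1 * (h j).2)]

lemma IsTestFunction.continuousOn_integral_heat_mul_heat {a c : E → ℝ} (ha : IsTestFunction a)
    (hc : IsTestFunction c) (T : ℝ) :
    ContinuousOn (fun s => ∫ x, heat s a x * heat s c x) (Icc 0 T) := by
  obtain ⟨A, hA⟩ := ha.exists_norm_le
  obtain ⟨C, hC, hdecay⟩ := hc.exists_norm_heat_le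
  have hA0 : 0 ≤ A := (norm_nonneg _).trans (hA 0)
  refine continuousOn_of_dominated (bound := fun x =>
      A * (C * (1 + T) ^ (finrank ℝ E + 1) * ((1 + ‖x‖) ^ (finrank ℝ E + 1))⁻¹))
    (fun s _ => ((ha.continuous_heat s).mul (hc.continuous_heat s)).aestronglyMeasurable)
    (fun s hs => ae_of_all _ fun x => ?_)
    ((integrable_inv_one_add_norm_pow.const_mul _).const_mul _)
    (ae_of_all _ fun x => ((ha.continuous_heat_uncurry.comp (Continuous.prodMk_left x)).mul
      (hc.continuous_heat_uncurry.comp (Continuous.prodMk_left x))).continuousOn)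
  rw [norm_mul]
  gcongr
  · exact norm_heat_le hA s x
  · refine (hdecay s x).trans ?_
    rw [abs_of_nonneg hs.1]
    have := hs.1
    gcongr
    exact hs.2

lemma IsTestFunction.integral_mul_abs_integral_heat_le_bellman (hg : IsTestFunction g)
    (hf : IsTestFunction f) {ε : ℝ} (hε : 0 < ε) (i j : ι) {T : ℝ} (hT : 0 ≤ T) :
    ∫ s in 0..T, s * |∫ x, heat s (dirDeriv (b i) g) x * heat s (dirDeriv (b j) f) x| ≤
      ∫ x, bellman ε (g x, f x) := by
  set w : E → ℝ × ℝ := fun y => (g y, f y)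
  have hw : IsTestFunction w := hg.prodMk hf
  have hQ := contDiff_bellman hε
  set F : ℝ → ℝ := fun s => -∫ x, bellman ε (heat s w x)
  have hF : ∀ s, HasDerivAt F (s * ∫ x, dissipation b (bellman ε) w s x) s := fun s => by
    simpa using (hw.hasDerivAt_integral_comp_heat b hQ (bellman_zero hε.le) s).fun_neg
  calc ∫ s in 0..T, s * |∫ x, heat s (dirDeriv (b i) g) x * heat s (dirDeriv (b j) f) x|
      ≤ F T - F 0 := by
        refine intervalIntegral.integral_le_sub_of_hasDeriv_right_of_le hT
          (fun s _ => (hF s).continuousAt.continuousWithinAt)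
          (fun s _ => (hF s).hasDerivWithinAt)
          ((continuousOn_id.mul ((hg.dirDeriv _).continuousOn_integral_heat_mul_heat
            (hf.dirDeriv _) T).abs).integrableOn_compact isCompact_Icc) fun s hs => ?_
        refine mul_le_mul_of_nonneg_left ?_ hs.1.le
        exact abs_integral_le_integral_abs.trans (integral_mono_of_nonneg
          (ae_of_all _ fun _ => abs_nonneg _) (hw.integrable_dissipation b hQ s)
          (ae_of_all _ fun x => hg.abs_heat_mul_heat_le_dissipation b hf hε i j s x))
    _ = (∫ x, bellman ε (w x)) - ∫ x, bellman ε (heat T w x) := by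
        simp only [F, heat_zero]; ring
    _ ≤ ∫ x, bellman ε (w x) :=
        sub_le_self _ (integral_nonneg fun x => bellman_nonneg hε.le _)

/-- `∫|g|³ + ∫|f|^{3/2}`, which controls the duality pairing of `L³` and `L^{3/2}` through Young's
inequality. -/
noncomputable def youngMass (g f : E → ℝ) : ℝ := (∫ x, |g x| ^ 3) + ∫ x, |f x| ^ (3 / 2 : ℝ)

lemma bellman_zero_le (p : ℝ × ℝ) : bellman 0 p ≤ 2 * (|p.1| ^ 3 + |p.2| ^ (3 / 2 : ℝ)) := by
  have hcube : (p.1 ^ 2) ^ (3 / 2 : ℝ) = |p.1| ^ 3 := by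
    rw [← sq_abs, ← Real.rpow_natCast, ← Real.rpow_mul (abs_nonneg _), ← Real.rpow_natCast]
    norm_num
  have hadd : ∀ x y : NNReal, ((x : ℝ) + y) ^ (3 / 2 : ℝ) ≤
      2 ^ (3 / 2 - 1 : ℝ) * ((x : ℝ) ^ (3 / 2 : ℝ) + (y : ℝ) ^ (3 / 2 : ℝ)) := fun x y => by
    exact_mod_cast NNReal.rpow_add_le_mul_rpow_add_rpow x y (p := 3 / 2) (by norm_num)
  have h2 : (2 : ℝ) ^ (3 / 2 - 1 : ℝ) ≤ 2 := by
    simpa using Real.rpow_le_rpow_of_exponent_le one_le_two (by norm_num : (3 / 2 - 1 : ℝ) ≤ 1)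
  calc bellman 0 p = (p.1 ^ 2 + |p.2|) ^ (3 / 2 : ℝ) := by
        simp [bellman, bellmanBase, Real.sqrt_sq_eq_abs]
    _ ≤ 2 ^ (3 / 2 - 1 : ℝ) * ((p.1 ^ 2) ^ (3 / 2 : ℝ) + |p.2| ^ (3 / 2 : ℝ)) :=
        hadd ⟨p.1 ^ 2, sq_nonneg _⟩ ⟨|p.2|, abs_nonneg _⟩
    _ ≤ 2 * (|p.1| ^ 3 + |p.2| ^ (3 / 2 : ℝ)) := by rw [hcube]; gcongr

lemma IsTestFunction.integrable_abs_pow_three (hg : IsTestFunction g) :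
    Integrable fun x => |g x| ^ 3 := by
  have hg' := hg.contDiff.continuous
  have hcont : Continuous fun x => |g x| ^ 3 := by fun_prop
  exact hcont.integrable_of_hasCompactSupport
    (hg.hasCompactSupport.comp_left (g := fun t : ℝ => |t| ^ 3) (by simp))

lemma IsTestFunction.integrable_abs_rpow (hf : IsTestFunction f) :
    Integrable fun x => |f x| ^ (3 / 2 : ℝ) :=
  (hf.contDiff.continuous.abs.rpow_const fun _ =>
    .inr (by norm_num)).integrable_of_hasCompactSupport
      (hf.hasCompactSupport.comp_left (g := fun t : ℝ => |t| ^ (3 / 2 : ℝ))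
      (by rw [abs_zero, Real.zero_rpow (by norm_num)]))

lemma IsTestFunction.tendsto_integral_bellman (hg : IsTestFunction g) (hf : IsTestFunction f) :
    Tendsto (fun ε => ∫ x, bellman ε (g x, f x)) (𝓝[>] 0) (𝓝 (∫ x, bellman 0 (g x, f x))) := by
  set w : E → ℝ × ℝ := fun y => (g y, f y)
  have hw : IsTestFunction w := hg.prodMk hf
  have hsupp : ∀ ε, 0 ≤ ε → ∫ x in tsupport w, bellman ε (w x) = ∫ x, bellman ε (w x) :=
    fun ε hε => setIntegral_eq_integral_of_forall_compl_eq_zero fun x hx => by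
      rw [image_eq_zero_of_notMem_tsupport hx, bellman_zero hε]
  have hcont : Continuous fun ε => ∫ x in tsupport w, bellman ε (w x) :=
    continuous_parametric_integral_of_continuous (f := fun ε x => bellman ε (w x))
      (continuous_bellman.comp (continuous_id.prodMap hw.contDiff.continuous))
      hw.hasCompactSupport.isCompact
  have hlim := (hcont.tendsto 0).mono_left (nhdsWithin_le_nhds (s := Ioi 0))
  rw [hsupp 0 le_rfl] at hlim
  exact hlim.congr' (eventually_nhdsWithin_of_forall fun ε hε => hsupp ε (le_of_lt hε))

theorem IsTestFunction.integral_mul_abs_integral_heat_le (hg : IsTestFunction g)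
    (hf : IsTestFunction f) (i j : ι) {T : ℝ} (hT : 0 ≤ T) :
    ∫ s in 0..T, s * |∫ x, heat s (dirDeriv (b i) g) x * heat s (dirDeriv (b j) f) x| ≤
      2 * youngMass g f := by
  refine (ge_of_tendsto (hg.tendsto_integral_bellman hf) (eventually_nhdsWithin_of_forall
    fun ε hε => hg.integral_mul_abs_integral_heat_le_bellman b hf hε i j hT)).trans ?_
  rw [youngMass, ← integral_add hg.integrable_abs_pow_three hf.integrable_abs_rpow,
    ← integral_const_mul]
  exact integral_mono_of_nonneg (ae_of_all _ fun x => bellman_nonneg le_rfl _)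
    ((hg.integrable_abs_pow_three.add hf.integrable_abs_rpow).const_mul 2)
    (ae_of_all _ fun x => bellman_zero_le _)

end BilinearEmbedding

section CrossCorrelation

variable {E : Type*} [NormedAddCommGroup E] [InnerProductSpace ℝ E] [FiniteDimensional ℝ E]
  [MeasurableSpace E] [BorelSpace E] {a b : E → ℝ}

/-- The cross-correlation `y ↦ ∫ a(x) b(x + y) dx`. -/
noncomputable def crossCorr (a b : E → ℝ) (y : E) : ℝ := ∫ x, a x * b (x + y)

lemma crossCorr_zero (a b : E → ℝ) : crossCorr a b 0 = ∫ x, a x * b x := by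
  simp only [crossCorr, add_zero]

open scoped Convolution in
lemma crossCorr_eq_convolution (a b : E → ℝ) :
    crossCorr a b = (fun x => a (-x)) ⋆[ContinuousLinearMap.mul ℝ ℝ] b := by
  ext y
  rw [crossCorr, ← integral_neg_eq_self]
  simp only [convolution_def, ContinuousLinearMap.mul_apply', neg_add_eq_sub]

lemma IsTestFunction.contDiff_crossCorr (ha : IsTestFunction a) (hb : Continuous b) :
    ContDiff ℝ ∞ (crossCorr a b) := by
  rw [crossCorr_eq_convolution]
  exact ha.comp_neg.hasCompactSupport.contDiff_convolution_left _ ha.comp_neg.contDiff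
    hb.locallyIntegrable

protected lemma IsTestFunction.crossCorr (ha : IsTestFunction a) (hb : IsTestFunction b) :
    IsTestFunction (crossCorr a b) := by
  refine ⟨ha.contDiff_crossCorr hb.contDiff.continuous, ?_⟩
  rw [crossCorr_eq_convolution]
  exact ha.comp_neg.hasCompactSupport.convolution _ hb.hasCompactSupport

lemma IsTestFunction.crossCorr_dirDeriv (ha : IsTestFunction a) (hb : ContDiff ℝ ∞ b) (v y : E) :
    crossCorr (dirDeriv v a) b y = -crossCorr a (dirDeriv v b) y := by
  have hshift : dirDeriv v (fun x => b (x + y)) = fun x => dirDeriv v b (x + y) := by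
    simpa only [one_smul, add_comm y] using dirDeriv_comp_homothety hb v y 1
  have h := ha.integral_smul_dirDeriv (μ := volume) (w := fun x => b (x + y))
    (hb.comp (contDiff_id.add contDiff_const)) v
  rw [hshift] at h
  simp only [crossCorr, smul_eq_mul] at h ⊢
  rw [h, neg_neg]

lemma IsTestFunction.dirDeriv_crossCorr (ha : IsTestFunction a) (hb : ContDiff ℝ ∞ b) (v : E) :
    dirDeriv v (crossCorr a b) = crossCorr a (dirDeriv v b) := by
  ext y
  have hneg : dirDeriv v (fun x => a (-x)) = fun x => -dirDeriv v a (-x) := by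
    simpa using dirDeriv_comp_homothety ha.contDiff v 0 (-1)
  have hd := ha.comp_neg.hasCompactSupport.hasFDerivAt_convolution_left (μ := volume)
    (ContinuousLinearMap.mul ℝ ℝ) (ha.comp_neg.contDiff.of_le (by simp))
    hb.continuous.locallyIntegrable y
  have hint := (ha.comp_neg.hasCompactSupport.fderiv ℝ).convolutionExists_left (μ := volume)
    ((ContinuousLinearMap.mul ℝ ℝ).precompL E) (ha.comp_neg.contDiff.continuous_fderiv (by simp))
    hb.continuous.locallyIntegrable y
  rw [← neg_neg (crossCorr a _ y), ← ha.crossCorr_dirDeriv hb, crossCorr_eq_convolution, dirDeriv,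
    hd.fderiv, convolution_def, ContinuousLinearMap.integral_apply hint, crossCorr_eq_convolution,
    convolution_def, ← integral_neg]
  refine integral_congr_ae (ae_of_all _ fun x => ?_)
  have hx : fderiv ℝ (fun x => a (-x)) x v = -dirDeriv v a (-x) := congrFun hneg x
  simp [hx]

lemma IsTestFunction.integral_abs_crossCorr_le (ha : IsTestFunction a) (hb : IsTestFunction b) :
    ∫ y, |crossCorr a b y| ≤ (∫ x, |a x|) * ∫ x, |b x| := by
  have h : ∫ y, crossCorr (fun x => |a x|) (fun x => |b x|) y =
      (∫ x, |a x|) * ∫ x, |b x| := by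
    rw [crossCorr_eq_convolution, integral_convolution _ ha.comp_neg.integrable.abs
      hb.integrable.abs, integral_neg_eq_self (fun x => |a x|)]
    rfl
  rw [← h]
  refine integral_mono (ha.crossCorr hb).integrable.abs ?_ fun y => ?_
  · rw [crossCorr_eq_convolution]
    exact ha.comp_neg.integrable.abs.integrable_convolution _ hb.integrable.abs
  · simp only [crossCorr, ← abs_mul]
    exact abs_integral_le_integral_abs

end CrossCorrelation

section HeatCrossCorrelation

variable {E : Type*} [NormedAddCommGroup E] [InnerProductSpace ℝ E] [FiniteDimensional ℝ E]
  [MeasurableSpace E] [BorelSpace E] {a b : E → ℝ}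

lemma heat_neg (ha : Continuous a) (r : ℝ) (x : E) : heat (-r) a x = heat r a x := by
  rw [heat, heat, ← map_neg_stdGaussian (E := E), integral_map (by fun_prop) (by fun_prop),
    map_neg_stdGaussian]
  simp only [smul_neg, neg_smul, neg_neg]

lemma integral_translate_mul_translate (a b : E → ℝ) (y z : E) :
    ∫ x, a (x - y) * b (x + z) = crossCorr a b (z + y) := by
  have h := integral_sub_right_eq_self (fun x => a x * b (x + (z + y))) (μ := volume) y
  simpa only [crossCorr, sub_add_add_cancel, add_comm z y, ← add_assoc, sub_add_cancel] using h

lemma IsTestFunction.integrable_translate_mul_translate (ha : IsTestFunction a)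
    (hb : IsTestFunction b) (r : ℝ) (μ : Measure (E × E)) [IsFiniteMeasure μ] :
    Integrable (fun p : E × E × E => a (p.1 - r • p.2.1) * b (p.1 + r • p.2.2))
      (volume.prod μ) := by
  have hac := ha.contDiff.continuous
  have hbc := hb.contDiff.continuous
  obtain ⟨C, hC⟩ := hb.exists_norm_le
  refine Integrable.mul_bdd (c := C) ?_ (by fun_prop) (ae_of_all _ fun p => hC _)
  rw [integrable_prod_iff' (by fun_prop)]
  refine ⟨ae_of_all _ fun y => ha.integrable.comp_sub_right (r • y.1), ?_⟩
  simp only [integral_sub_right_eq_self (fun x => ‖a x‖)]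
  exact integrable_const _

lemma IsTestFunction.heat_crossCorr (ha : IsTestFunction a) (hb : IsTestFunction b) (r : ℝ) :
    heat (√2 * r) (crossCorr a b) 0 = ∫ x, heat r a x * heat r b x := by
  have hc := ha.crossCorr hb
  have hcc := hc.contDiff.continuous
  symm
  calc ∫ x, heat r a x * heat r b x
      = ∫ x, ∫ p : E × E, a (x - r • p.1) * b (x + r • p.2)
          ∂((stdGaussian E).prod (stdGaussian E)) := by
        refine integral_congr_ae (ae_of_all _ fun x => ?_)
        beta_reduce
        rw [integral_prod_mul (fun y => a (x - r • y)) fun z => b (x + r • z),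
          ← heat_neg ha.contDiff.continuous r]
        simp only [heat, neg_smul, sub_eq_add_neg]
    _ = ∫ p : E × E, crossCorr a b (r • (p.1 + p.2))
          ∂((stdGaussian E).prod (stdGaussian E)) := by
        rw [integral_integral_swap (ha.integrable_translate_mul_translate hb r _)]
        simp only [integral_translate_mul_translate, smul_add, add_comm]
    _ = ∫ y, crossCorr a b (r • y) ∂(stdGaussian E ∗ stdGaussian E) := by
        rw [Measure.conv, integral_map (by fun_prop) (by fun_prop)]
    _ = heat (√2 * r) (crossCorr a b) 0 := by
        rw [stdGaussian_conv_stdGaussian, integral_map (by fun_prop) (by fun_prop)]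
        simp only [heat, zero_add, smul_smul, mul_comm]

lemma IsTestFunction.heat_dirDeriv_crossCorr (ha : IsTestFunction a) (hb : IsTestFunction b)
    (v w : E) (r : ℝ) :
    heat (√2 * r) (dirDeriv v (dirDeriv w (crossCorr a b))) 0 =
      -∫ x, heat r (dirDeriv v a) x * heat r (dirDeriv w b) x := by
  have h : dirDeriv v (dirDeriv w (crossCorr a b)) =
      fun y => -crossCorr (dirDeriv v a) (dirDeriv w b) y := by
    ext y
    rw [ha.dirDeriv_crossCorr hb.contDiff, ha.dirDeriv_crossCorr (hb.dirDeriv w).contDiff,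
      ha.crossCorr_dirDeriv (hb.dirDeriv w).contDiff, neg_neg]
  rw [h, ← (ha.dirDeriv v).heat_crossCorr (hb.dirDeriv w)]
  exact integral_neg _

end HeatCrossCorrelation

section OffDiagonal

variable {E : Type*} [NormedAddCommGroup E] {h κ : E → ℝ} {c δ : ℝ}

/-- A function decreasing faster than any power; no condition is put on its derivatives. -/
def IsRapidlyDecreasing (h : E → ℝ) : Prop :=
  ∀ N : ℕ, ∃ C, ∀ x, (1 + ‖x‖) ^ N * |h x| ≤ C

lemma IsRapidlyDecreasing.linear_combination {k : E → ℝ} (hh : IsRapidlyDecreasing h)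
    (hk : IsRapidlyDecreasing k) (α β : ℝ) : IsRapidlyDecreasing fun x => α * h x + β * k x :=
  fun N => by
  obtain ⟨A, hA⟩ := hh N
  obtain ⟨B, hB⟩ := hk N
  refine ⟨|α| * A + |β| * B, fun x => ?_⟩
  calc (1 + ‖x‖) ^ N * |α * h x + β * k x|
      ≤ (1 + ‖x‖) ^ N * (|α| * |h x| + |β| * |k x|) := by
        rw [← abs_mul, ← abs_mul]
        gcongr
        exact abs_add_le _ _
    _ = |α| * ((1 + ‖x‖) ^ N * |h x|) + |β| * ((1 + ‖x‖) ^ N * |k x|) := by ring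
    _ ≤ |α| * A + |β| * B := by gcongr <;> apply_assumption

variable [InnerProductSpace ℝ E]

lemma IsRapidlyDecreasing.inner_mul (hh : IsRapidlyDecreasing h) (v : E) :
    IsRapidlyDecreasing fun x => ⟪x, v⟫ * h x := fun N => by
  obtain ⟨C, hC⟩ := hh (N + 1)
  refine ⟨‖v‖ * C, fun x => ?_⟩
  calc (1 + ‖x‖) ^ N * |⟪x, v⟫ * h x|
      ≤ (1 + ‖x‖) ^ N * (((1 + ‖x‖) * ‖v‖) * |h x|) := by
        rw [abs_mul]
        gcongr
        exact (abs_real_inner_le_norm x v).trans (by gcongr; linarith)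
    _ = ‖v‖ * ((1 + ‖x‖) ^ (N + 1) * |h x|) := by ring
    _ ≤ ‖v‖ * C := by gcongr; exact hC x

lemma isRapidlyDecreasing_gaussianDensity : IsRapidlyDecreasing (gaussianDensity : E → ℝ) :=
  fun N => by
  refine ⟨(2 * Real.pi) ^ (-(finrank ℝ E : ℝ) / 2) * (N.factorial * Real.exp (3 / 2)), fun x => ?_⟩
  have hpow := Real.pow_div_factorial_le_exp (x := 1 + ‖x‖) (by positivity) N
  rw [div_le_iff₀' (by positivity)] at hpow
  have hexp : Real.exp (1 + ‖x‖) * Real.exp (-(‖x‖ ^ 2 / 2)) ≤ Real.exp (3 / 2) := by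
    rw [← Real.exp_add, Real.exp_le_exp]
    linarith [sq_nonneg (‖x‖ - 1)]
  rw [abs_of_nonneg (gaussianDensity_nonneg x), gaussianDensity, mul_left_comm]
  refine mul_le_mul_of_nonneg_left ?_ (by positivity)
  calc (1 + ‖x‖) ^ N * Real.exp (-(‖x‖ ^ 2 / 2))
      ≤ N.factorial * Real.exp (1 + ‖x‖) * Real.exp (-(‖x‖ ^ 2 / 2)) := by gcongr
    _ ≤ N.factorial * Real.exp (3 / 2) := by rw [mul_assoc]; gcongr

lemma isRapidlyDecreasing_dirDeriv_gaussianDensity (v : E) :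
    IsRapidlyDecreasing (dirDeriv v gaussianDensity) := by
  rw [dirDeriv_gaussianDensity]
  simpa using (isRapidlyDecreasing_gaussianDensity.inner_mul v).linear_combination
    isRapidlyDecreasing_gaussianDensity (-1) 0

lemma dirDeriv_inner (v w : E) : dirDeriv w (fun x => ⟪x, v⟫) = fun _ => ⟪w, v⟫ := by
  ext x
  simp only [dirDeriv, real_inner_comm v]
  exact congrArg (· w) (innerSL ℝ v).fderiv

lemma dirDeriv_dirDeriv_gaussianDensity (v w : E) :
    dirDeriv w (dirDeriv v gaussianDensity) = fun x =>
      -⟪w, v⟫ * gaussianDensity x + ⟪x, v⟫ * (⟪x, w⟫ * gaussianDensity x) := by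
  have hlin : ContDiff ℝ ∞ fun x : E => ⟪x, v⟫ := contDiff_id.inner ℝ contDiff_const
  have hneg : dirDeriv v gaussianDensity = fun x : E => -1 * (⟪x, v⟫ * gaussianDensity x) := by
    simp only [dirDeriv_gaussianDensity, neg_one_mul]
  rw [hneg, dirDeriv_const_mul (hlin.mul contDiff_gaussianDensity),
    dirDeriv_mul hlin contDiff_gaussianDensity, dirDeriv_inner, dirDeriv_gaussianDensity]
  ext x
  ring

lemma isRapidlyDecreasing_dirDeriv_dirDeriv_gaussianDensity (v w : E) :
    IsRapidlyDecreasing (dirDeriv w (dirDeriv v gaussianDensity)) := by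
  rw [dirDeriv_dirDeriv_gaussianDensity]
  simpa using isRapidlyDecreasing_gaussianDensity.linear_combination
    ((isRapidlyDecreasing_gaussianDensity.inner_mul w).inner_mul v) (-⟪w, v⟫) 1

lemma IsRapidlyDecreasing.exists_abs_rescale_le (hh : IsRapidlyDecreasing h) (m : ℕ) (hδ : 0 < δ) :
    ∃ C, 0 ≤ C ∧ ∀ s > 0, ∀ y, δ ≤ ‖y‖ → |s⁻¹ ^ m * h (s⁻¹ • y)| ≤ C := by
  obtain ⟨C, hC⟩ := hh m
  have hC0 : 0 ≤ C := le_trans (by positivity) (hC 0)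
  refine ⟨δ⁻¹ ^ m * C, by positivity, fun s hs y hy => ?_⟩
  have hsδ : s⁻¹ ≤ δ⁻¹ * (1 + ‖s⁻¹ • y‖) := by
    rw [norm_smul, Real.norm_of_nonneg (by positivity), le_inv_mul_iff₀ hδ]
    nlinarith [inv_pos.mpr hs]
  calc |s⁻¹ ^ m * h (s⁻¹ • y)| = s⁻¹ ^ m * |h (s⁻¹ • y)| := by
        rw [abs_mul, abs_of_nonneg (by positivity)]
    _ ≤ (δ⁻¹ * (1 + ‖s⁻¹ • y‖)) ^ m * |h (s⁻¹ • y)| := by gcongr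
    _ = δ⁻¹ ^ m * ((1 + ‖s⁻¹ • y‖) ^ m * |h (s⁻¹ • y)|) := by
        rw [mul_pow, mul_assoc]
    _ ≤ δ⁻¹ ^ m * C := by gcongr; exact hC _

lemma IsTestFunction.exists_abs_sub_mul_rescale_le (hκ : IsTestFunction κ)
    (hκc : ∀ y, ‖y‖ < δ → κ y = c) (hδ : 0 < δ) (hh : IsRapidlyDecreasing h) (m : ℕ) :
    ∃ C, ∀ s > 0, ∀ y, |(κ y - c) * (s⁻¹ ^ m * h (s⁻¹ • y))| ≤ C := by
  obtain ⟨A, hA⟩ := hκ.exists_norm_le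
  obtain ⟨B, hB0, hB⟩ := hh.exists_abs_rescale_le m hδ
  have hA0 : 0 ≤ A := (norm_nonneg _).trans (hA 0)
  refine ⟨(A + |c|) * B, fun s hs y => ?_⟩
  rcases lt_or_ge ‖y‖ δ with hy | hy
  · rw [hκc y hy, sub_self, zero_mul, abs_zero]; positivity
  · rw [abs_mul]
    exact mul_le_mul ((abs_sub _ _).trans (by gcongr; exact hA y)) (hB s hs y hy) (abs_nonneg _)
      (by positivity)

lemma dirDeriv_eq_zero_of_eq_const (hκc : ∀ y, ‖y‖ < δ → κ y = c) (v y : E) (hy : ‖y‖ < δ) :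
    dirDeriv v κ y = 0 := by
  have : κ =ᶠ[𝓝 y] fun _ => c := by
    filter_upwards [Metric.isOpen_ball.mem_nhds (mem_ball_zero_iff.mpr hy)] with z hz
      using hκc z (mem_ball_zero_iff.mp hz)
  rw [dirDeriv, this.fderiv_eq]
  simp

lemma contDiff_sub_mul_rescale (hκ : ContDiff ℝ ∞ κ) (hh : ContDiff ℝ ∞ h) (c : ℝ) (m : ℕ)
    (s : ℝ) : ContDiff ℝ ∞ fun y => (κ y - c) * (s⁻¹ ^ m * h (s⁻¹ • y)) :=
  (hκ.sub contDiff_const).mul (contDiff_const.mul (hh.comp (contDiff_const_smul _)))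

lemma dirDeriv_sub_mul_rescale (hκ : ContDiff ℝ ∞ κ) (hh : ContDiff ℝ ∞ h) (c : ℝ) (m : ℕ)
    (s : ℝ) (v : E) :
    dirDeriv v (fun y => (κ y - c) * (s⁻¹ ^ m * h (s⁻¹ • y))) = fun y =>
      (dirDeriv v κ y - 0) * (s⁻¹ ^ m * h (s⁻¹ • y)) +
        (κ y - c) * (s⁻¹ ^ (m + 1) * dirDeriv v h (s⁻¹ • y)) := by
  have hsmul : ContDiff ℝ ∞ fun y => h (s⁻¹ • y) := hh.comp (contDiff_const_smul _)
  have h1 := dirDeriv_comp_homothety hh v 0 s⁻¹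
  simp only [zero_add] at h1
  rw [dirDeriv_mul (hκ.sub contDiff_const) (contDiff_const.mul hsmul),
    dirDeriv_sub hκ contDiff_const, dirDeriv_const_mul hsmul, h1]
  ext y
  simp only [dirDeriv, fderiv_const_apply, _root_.zero_apply, smul_eq_mul]
  ring

lemma IsTestFunction.exists_abs_dirDeriv_sub_mul_rescale_le (hκ : IsTestFunction κ)
    (hκc : ∀ y, ‖y‖ < δ → κ y = c) (hδ : 0 < δ) (hsmooth : ContDiff ℝ ∞ h)
    (hh : IsRapidlyDecreasing h) (m : ℕ) (v : E) (hh' : IsRapidlyDecreasing (dirDeriv v h)) :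
    ∃ C, ∀ s > 0, ∀ y,
      |dirDeriv v (fun y => (κ y - c) * (s⁻¹ ^ m * h (s⁻¹ • y))) y| ≤ C := by
  obtain ⟨A, hA⟩ := (hκ.dirDeriv v).exists_abs_sub_mul_rescale_le
    (dirDeriv_eq_zero_of_eq_const hκc v) hδ hh m
  obtain ⟨B, hB⟩ := hκ.exists_abs_sub_mul_rescale_le hκc hδ hh' (m + 1)
  refine ⟨A + B, fun s hs y => ?_⟩
  rw [dirDeriv_sub_mul_rescale hκ.contDiff hsmooth]
  exact (abs_add_le _ _).trans (add_le_add (hA s hs y) (hB s hs y))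

lemma IsTestFunction.exists_abs_dirDeriv_dirDeriv_sub_mul_rescale_le (hκ : IsTestFunction κ)
    (hκc : ∀ y, ‖y‖ < δ → κ y = c) (hδ : 0 < δ) (m : ℕ) (v w : E) :
    ∃ C, ∀ s > 0, ∀ y, |dirDeriv w (dirDeriv v
      (fun y => (κ y - c) * (s⁻¹ ^ m * gaussianDensity (s⁻¹ • y)))) y| ≤ C := by
  have hγ : ContDiff ℝ ∞ (gaussianDensity : E → ℝ) := contDiff_gaussianDensity
  have hγv := contDiff_dirDeriv hγ v
  obtain ⟨A, hA⟩ := (hκ.dirDeriv v).exists_abs_dirDeriv_sub_mul_rescale_le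
    (dirDeriv_eq_zero_of_eq_const hκc v) hδ hγ isRapidlyDecreasing_gaussianDensity m w
    (isRapidlyDecreasing_dirDeriv_gaussianDensity w)
  obtain ⟨B, hB⟩ := hκ.exists_abs_dirDeriv_sub_mul_rescale_le hκc hδ hγv
    (isRapidlyDecreasing_dirDeriv_gaussianDensity v) (m + 1) w
    (isRapidlyDecreasing_dirDeriv_dirDeriv_gaussianDensity v w)
  refine ⟨A + B, fun s hs y => ?_⟩
  rw [dirDeriv_sub_mul_rescale hκ.contDiff hγ, dirDeriv_add
    (contDiff_sub_mul_rescale (hκ.dirDeriv v).contDiff hγ 0 m s)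
    (contDiff_sub_mul_rescale hκ.contDiff hγv c (m + 1) s)]
  exact (abs_add_le _ _).trans (add_le_add (hA s hs y) (hB s hs y))

variable [FiniteDimensional ℝ E] [MeasurableSpace E] [BorelSpace E]

lemma heat_apply_zero (w : E → ℝ) {s : ℝ} (hs : 0 < s) :
    heat s w 0 = ∫ y, w y * (s⁻¹ ^ finrank ℝ E * gaussianDensity (s⁻¹ • y)) := by
  have h := Measure.integral_comp_smul (μ := volume)
    (fun y : E => w y * (s⁻¹ ^ finrank ℝ E * gaussianDensity (s⁻¹ • y))) s
  rw [smul_eq_mul, abs_of_pos (by positivity), eq_inv_mul_iff_mul_eq₀ (by positivity)] at h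
  rw [heat, integral_stdGaussian, ← h, ← integral_const_mul]
  refine integral_congr_ae (ae_of_all _ fun y => ?_)
  simp only [zero_add, smul_eq_mul, inv_smul_smul₀ hs.ne', inv_pow]
  field_simp

lemma IsTestFunction.abs_integral_mul_le {ψ K : E → ℝ} {C : ℝ} (hψ : IsTestFunction ψ)
    (hK : ∀ y, |K y| ≤ C) : |∫ y, ψ y * K y| ≤ C * ∫ y, |ψ y| := by
  rw [← integral_const_mul, ← Real.norm_eq_abs (∫ y, ψ y * K y)]
  have hint : Integrable (fun y => C * |ψ y|) := (hψ.integrable (μ := volume)).abs.const_mul C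
  refine norm_integral_le_of_norm_le hint (ae_of_all _ fun y => ?_)
  rw [Real.norm_eq_abs, abs_mul, mul_comm]
  exact mul_le_mul_of_nonneg_right (hK y) (abs_nonneg _)

lemma IsTestFunction.abs_integral_dirDeriv_mul {ψ K : E → ℝ} (hψ : IsTestFunction ψ)
    (hK : ContDiff ℝ ∞ K) (v : E) :
    |∫ y, dirDeriv v ψ y * K y| = |∫ y, ψ y * dirDeriv v K y| := by
  have h := hψ.integral_smul_dirDeriv (μ := volume) hK v
  simp only [smul_eq_mul] at h
  rw [h, abs_neg]

lemma heat_sub_mul_apply_zero (κ u : E → ℝ) (c : ℝ) {s : ℝ} (hs : 0 < s) :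
    heat s (fun y => (κ y - c) * u y) 0 =
      ∫ y, u y * ((κ y - c) * (s⁻¹ ^ finrank ℝ E * gaussianDensity (s⁻¹ • y))) := by
  rw [heat_apply_zero _ hs]
  exact integral_congr_ae (ae_of_all _ fun y => by ring)

-- The heat kernel is bounded together with its derivatives, uniformly in time, off the origin,
-- where `κ - c` lives; so the derivatives can be moved from `ψ` to the kernel.
lemma IsTestFunction.exists_abs_heat_sub_mul_dirDeriv_le (hκ : IsTestFunction κ)
    (hκc : ∀ y, ‖y‖ < δ → κ y = c) (hδ : 0 < δ) (v : E) :
    ∃ C, ∀ s > 0, ∀ ψ : E → ℝ, IsTestFunction ψ →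
      |heat s (fun y => (κ y - c) * dirDeriv v ψ y) 0| ≤ C * ∫ y, |ψ y| := by
  obtain ⟨C, hC⟩ := hκ.exists_abs_dirDeriv_sub_mul_rescale_le hκc hδ contDiff_gaussianDensity
    isRapidlyDecreasing_gaussianDensity (finrank ℝ E) v
    (isRapidlyDecreasing_dirDeriv_gaussianDensity v)
  refine ⟨C, fun s hs ψ hψ => ?_⟩
  rw [heat_sub_mul_apply_zero _ _ _ hs, hψ.abs_integral_dirDeriv_mul
    (contDiff_sub_mul_rescale hκ.contDiff contDiff_gaussianDensity c _ s)]
  exact hψ.abs_integral_mul_le (hC s hs)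

lemma IsTestFunction.exists_abs_heat_sub_mul_dirDeriv_dirDeriv_le (hκ : IsTestFunction κ)
    (hκc : ∀ y, ‖y‖ < δ → κ y = c) (hδ : 0 < δ) (v w : E) :
    ∃ C, ∀ s > 0, ∀ ψ : E → ℝ, IsTestFunction ψ →
      |heat s (fun y => (κ y - c) * dirDeriv v (dirDeriv w ψ) y) 0| ≤ C * ∫ y, |ψ y| := by
  obtain ⟨C, hC⟩ := hκ.exists_abs_dirDeriv_dirDeriv_sub_mul_rescale_le hκc hδ (finrank ℝ E) v w
  refine ⟨C, fun s hs ψ hψ => ?_⟩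
  have hK := contDiff_sub_mul_rescale hκ.contDiff contDiff_gaussianDensity c (finrank ℝ E) s
  rw [heat_sub_mul_apply_zero _ _ _ hs, (hψ.dirDeriv w).abs_integral_dirDeriv_mul hK,
    hψ.abs_integral_dirDeriv_mul (contDiff_dirDeriv hK v)]
  exact hψ.abs_integral_mul_le (hC s hs)

end OffDiagonal

section Young

variable {E : Type*} [NormedAddCommGroup E] [InnerProductSpace ℝ E] [FiniteDimensional ℝ E]
  [MeasurableSpace E] [BorelSpace E] {g f : E → ℝ} {B : Set E}

lemma mul_le_pow_three_add_rpow {x y : ℝ} (hx : 0 ≤ x) (hy : 0 ≤ y) :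
    x * y ≤ x ^ 3 + y ^ (3 / 2 : ℝ) := by
  have h := Real.young_inequality_of_nonneg hx hy (p := 3) (q := 3 / 2)
    ⟨by norm_num, by norm_num, by norm_num⟩
  have h3 : x ^ (3 : ℝ) = x ^ 3 := by exact_mod_cast Real.rpow_natCast x 3
  rw [h3] at h
  linarith [pow_nonneg hx 3, Real.rpow_nonneg hy (3 / 2)]

lemma IsTestFunction.integral_abs_mul_integral_abs_le (hg : IsTestFunction g)
    (hf : IsTestFunction f) (hB : volume B ≠ ⊤) (hgB : Function.support g ⊆ B)
    (hfB : Function.support f ⊆ B) :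
    (∫ x, |g x|) * (∫ x, |f x|) ≤ volume.real B * youngMass g f := by
  have : IsFiniteMeasure (volume.restrict B) := isFiniteMeasure_restrict.mpr hB
  have hrestrict : ∀ {w : E → ℝ} (φ : ℝ → ℝ), φ 0 = 0 → Function.support w ⊆ B →
      ∫ x, φ (w x) = ∫ x in B, φ (w x) := fun φ hφ hw =>
    (setIntegral_eq_integral_of_forall_compl_eq_zero fun x hx => by
      rw [Function.notMem_support.mp fun h => hx (hw h), hφ]).symm
  have hg3 : Integrable (fun x => |g x| ^ 3) (volume.restrict B) :=
    hg.integrable_abs_pow_three.integrableOn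
  have hf32 : Integrable (fun x => |f x| ^ (3 / 2 : ℝ)) (volume.restrict B) :=
    hf.integrable_abs_rpow.integrableOn
  rw [youngMass, hrestrict (|·|) abs_zero hgB, hrestrict (|·|) abs_zero hfB,
    hrestrict (fun t => |t| ^ 3) (by simp) hgB,
    hrestrict (fun t => |t| ^ (3 / 2 : ℝ)) (by simp) hfB]
  calc (∫ x in B, |g x|) * (∫ x in B, |f x|)
      = ∫ z : E × E, |g z.1| * |f z.2| ∂(volume.restrict B).prod (volume.restrict B) :=
        (integral_prod_mul _ _).symm
    _ ≤ ∫ z : E × E, |g z.1| ^ 3 + |f z.2| ^ (3 / 2 : ℝ)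
          ∂(volume.restrict B).prod (volume.restrict B) :=
        integral_mono (hg.integrable.abs.mul_prod hf.integrable.abs)
          ((hg3.comp_fst _).add (hf32.comp_snd _))
          fun z => mul_le_pow_three_add_rpow (abs_nonneg _) (abs_nonneg _)
    _ = volume.real B * ((∫ x in B, |g x| ^ 3) + ∫ x in B, |f x| ^ (3 / 2 : ℝ)) := by
        rw [integral_add (hg3.comp_fst _) (hf32.comp_snd _), integral_fun_fst (fun x => |g x| ^ 3),
          integral_fun_snd (fun x => |f x| ^ (3 / 2 : ℝ)), mul_add]
        simp

end Young

section Oscillation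

variable {E : Type*} [NormedAddCommGroup E] [NormedSpace ℝ E] {K V : Set E}

lemma abs_sub_le_of_mem_ball {c : E → ℝ} {M r : ℝ} {x y : E} (hc : Differentiable ℝ c) (hr : r ≤ 1)
    (hV : Metric.ball x r ⊆ V) (hM : ∀ z ∈ V, ‖fderiv ℝ c z‖ ≤ M) (hy : y ∈ Metric.ball x r) :
    |c y - c x| ≤ M := by
  have hx : x ∈ Metric.ball x r := Metric.mem_ball_self (dist_nonneg.trans_lt hy)
  have h := (convex_ball x r).norm_image_sub_le_of_norm_fderiv_le (𝕜 := ℝ) (fun z _ => hc z)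
    (fun z hz => hM z (hV hz)) hx hy
  have hM0 : 0 ≤ M := (norm_nonneg _).trans (hM x (hV hx))
  rw [Metric.mem_ball, dist_eq_norm] at hy
  exact h.trans (mul_le_of_le_one_right hM0 (hy.le.trans hr))

lemma exists_nhds_abs_sub_le (hV : IsOpen V) {x : E} (hx : x ∈ V) :
    ∃ N ∈ 𝓝 x, ∀ y ∈ N, ∀ (c : E → ℝ) (M : ℝ), Differentiable ℝ c →
      (∀ z ∈ V, ‖fderiv ℝ c z‖ ≤ M) → |c y - c x| ≤ M := by
  obtain ⟨r, hr, hball⟩ := Metric.isOpen_iff.mp hV x hx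
  exact ⟨Metric.ball x (min r 1), Metric.ball_mem_nhds x (by positivity), fun y hy c M hc hM =>
    abs_sub_le_of_mem_ball hc (min_le_right _ _)
      ((Metric.ball_subset_ball (min_le_left _ _)).trans hball) hM hy⟩

lemma exists_abs_sub_le_of_isPreconnected (hK : IsPreconnected K) (hV : IsOpen V) (hKV : K ⊆ V)
    {x y : E} (hx : x ∈ K) (hy : y ∈ K) :
    ∃ C : ℝ, ∀ (c : E → ℝ) (M : ℝ), Differentiable ℝ c →
      (∀ z ∈ V, ‖fderiv ℝ c z‖ ≤ M) → |c x - c y| ≤ C * M := by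
  refine hK.induction₂ (fun x y => ∃ C : ℝ, ∀ (c : E → ℝ) (M : ℝ), Differentiable ℝ c →
      (∀ z ∈ V, ‖fderiv ℝ c z‖ ≤ M) → |c x - c y| ≤ C * M) (fun x hx => ?_) ?_ ?_ hx hy
  · obtain ⟨N, hN, hosc⟩ := exists_nhds_abs_sub_le hV (hKV hx)
    filter_upwards [mem_nhdsWithin_of_mem_nhds hN] with y hy
    refine ⟨1, fun c M hc hM => ?_⟩
    rw [abs_sub_comm, one_mul]
    exact hosc y hy c M hc hM
  · rintro x y z - - - ⟨C, hC⟩ ⟨D, hD⟩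
    refine ⟨C + D, fun c M hc hM => ?_⟩
    rw [add_mul]
    exact (abs_sub_le _ (c y) _).trans (add_le_add (hC c M hc hM) (hD c M hc hM))
  · rintro x y - - ⟨C, hC⟩
    exact ⟨C, fun c M hc hM => by rw [abs_sub_comm]; exact hC c M hc hM⟩

lemma exists_abs_sub_le_of_isCompact (hK : IsCompact K) (hKp : IsConnected K) (hV : IsOpen V)
    (hKV : K ⊆ V) :
    ∃ x₀ ∈ K, ∃ C : ℝ, ∀ x ∈ K, ∀ (c : E → ℝ) (M : ℝ), Differentiable ℝ c →
      (∀ z ∈ V, ‖fderiv ℝ c z‖ ≤ M) → |c x - c x₀| ≤ C * M := by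
  obtain ⟨x₀, hx₀⟩ := hKp.nonempty
  have hM0 : ∀ {c : E → ℝ} {M : ℝ}, (∀ z ∈ V, ‖fderiv ℝ c z‖ ≤ M) → 0 ≤ M := fun hM =>
    (norm_nonneg _).trans (hM x₀ (hKV hx₀))
  refine ⟨x₀, hx₀, hK.induction_on (p := fun s => ∃ C : ℝ, ∀ x ∈ s, ∀ (c : E → ℝ) (M : ℝ),
    Differentiable ℝ c → (∀ z ∈ V, ‖fderiv ℝ c z‖ ≤ M) → |c x - c x₀| ≤ C * M) ⟨0, by simp⟩
    ?_ ?_ fun x hx => ?_⟩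
  · rintro s t hst ⟨C, hC⟩
    exact ⟨C, fun x hx => hC x (hst hx)⟩
  · rintro s t ⟨C, hC⟩ ⟨D, hD⟩
    refine ⟨max C D, fun x hx c M hc hM => ?_⟩
    rcases hx with hx | hx
    · exact (hC x hx c M hc hM).trans
        (mul_le_mul_of_nonneg_right (le_max_left _ _) (hM0 hM))
    · exact (hD x hx c M hc hM).trans
        (mul_le_mul_of_nonneg_right (le_max_right _ _) (hM0 hM))
  · obtain ⟨N, hN, hosc⟩ := exists_nhds_abs_sub_le hV (hKV hx)
    obtain ⟨C, hC⟩ := exists_abs_sub_le_of_isPreconnected hKp.isPreconnected hV hKV hx hx₀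
    refine ⟨N, mem_nhdsWithin_of_mem_nhds hN, 1 + C, fun y hy c M hc hM => ?_⟩
    rw [add_mul, one_mul]
    exact (abs_sub_le _ (c x) _).trans (add_le_add (hosc y hy c M hc hM) (hC c M hc hM))

end Oscillation

section LocalPressure

lemma add_mem_thickening {E : Type*} [SeminormedAddCommGroup E] {K : Set E} {r δ : ℝ} {y z : E}
    (hy : ‖y‖ < r) (hz : z ∈ Metric.thickening δ K) : y + z ∈ Metric.thickening (r + δ) K := by
  obtain ⟨k, hk, hzk⟩ := Metric.mem_thickening_iff.mp hz
  refine Metric.mem_thickening_iff.mpr ⟨k, hk, ?_⟩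
  rw [dist_eq_norm] at hzk ⊢
  calc ‖y + z - k‖ ≤ ‖y‖ + ‖z - k‖ := by rw [add_sub_assoc]; exact norm_add_le _ _
    _ < r + δ := add_lt_add hy hzk

variable {E ι : Type*} [NormedAddCommGroup E] [InnerProductSpace ℝ E] [Fintype ι]

lemma norm_fderiv_le_sum_abs_dirDeriv (b : OrthonormalBasis ι ℝ E) (c : E → ℝ) (x : E) :
    ‖fderiv ℝ c x‖ ≤ ∑ i, |dirDeriv (b i) c x| := by
  refine ContinuousLinearMap.opNorm_le_bound _ (by positivity) fun v => ?_
  calc ‖fderiv ℝ c x v‖ = |∑ i, ⟪b i, v⟫ * dirDeriv (b i) c x| := by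
        conv_lhs => rw [← b.sum_repr' v]
        simp only [map_sum, map_smul, smul_eq_mul, dirDeriv, Real.norm_eq_abs]
    _ ≤ ∑ i, ‖v‖ * |dirDeriv (b i) c x| := by
        refine (Finset.abs_sum_le_sum_abs _ _).trans (Finset.sum_le_sum fun i _ => ?_)
        rw [abs_mul]
        gcongr
        simpa using abs_real_inner_le_norm (b i) v
    _ = (∑ i, |dirDeriv (b i) c x|) * ‖v‖ := by rw [← Finset.mul_sum, mul_comm]

variable [FiniteDimensional ℝ E] [MeasurableSpace E] [BorelSpace E]

lemma integral_mul_crossCorr_comm {ζ g π : E → ℝ} (hζ : IsTestFunction ζ) (hg : IsTestFunction g)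
    (hπ : Continuous π) :
    ∫ y, ζ y * crossCorr g π y = ∫ x, g x * crossCorr ζ π x := by
  have hcont : Continuous (Function.uncurry fun y x => ζ y * (g x * π (x + y))) :=
    (hζ.contDiff.continuous.comp continuous_fst).mul
      ((hg.contDiff.continuous.comp continuous_snd).mul
        (hπ.comp (continuous_snd.add continuous_fst)))
  have hsupp : HasCompactSupport (Function.uncurry fun y x => ζ y * (g x * π (x + y))) :=
    .intro (hζ.hasCompactSupport.prod hg.hasCompactSupport) fun z hz => by
      rcases not_and_or.mp hz with h | h <;>
        simp [Function.uncurry, image_eq_zero_of_notMem_tsupport h]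
  simp only [crossCorr, ← integral_const_mul]
  rw [integral_integral_swap_of_hasCompactSupport hcont hsupp]
  exact integral_congr_ae (ae_of_all _ fun x => integral_congr_ae (ae_of_all _ fun y => by
    simp only [add_comm y x]; ring))

lemma IsTestFunction.abs_integral_mul_le_of_abs_sub_le {K : Set E} {g c : E → ℝ}
    (hg : IsTestFunction g) (hgK : Function.support g ⊆ K) (hmean : ∫ x, g x = 0)
    (hc : ContDiff ℝ ∞ c) {a M : ℝ} (hM : ∀ x ∈ K, |c x - a| ≤ M) :
    |∫ x, g x * c x| ≤ (∫ x, |g x|) * M := by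
  have hsub : ∫ x, g x * c x = ∫ x, g x * (c x - a) := by
    simp only [mul_sub]
    rw [integral_sub (hg.mul_right hc).integrable (hg.integrable.mul_const a),
      integral_mul_const, hmean, zero_mul, sub_zero]
  rw [hsub, ← integral_mul_const, ← Real.norm_eq_abs (∫ x, g x * (c x - a))]
  refine norm_integral_le_of_norm_le (hg.integrable.abs.mul_const M) (ae_of_all _ fun x => ?_)
  rw [norm_mul, Real.norm_eq_abs, Real.norm_eq_abs]
  by_cases hx : g x = 0
  · simp [hx]
  · exact mul_le_mul_of_nonneg_left (hM x (hgK hx)) (abs_nonneg _)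

/-- The total size of a weight `g` and a tensor field `f` in the pressure estimate. -/
noncomputable def tensorMass (g : E → ℝ) (f : ι → ι → E → ℝ) : ℝ := ∑ i, ∑ j, youngMass g (f i j)

/-- The data of the pressure estimate: a pressure `π` whose gradient on `U` is the divergence of a
stress tensor `f`, in the coordinates of `b`, and a weight `g` of mean zero. -/
structure IsLocalPressure (b : OrthonormalBasis ι ℝ E) (K U B : Set E) (π g : E → ℝ)
    (f : ι → ι → E → ℝ) : Prop where
  contDiff_pressure : ContDiff ℝ ∞ π
  isTestFunction_weight : IsTestFunction g
  support_weight_subset : Function.support g ⊆ K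
  integral_weight : ∫ x, g x = 0
  isTestFunction_stress : ∀ i j, IsTestFunction (f i j)
  support_stress_subset : ∀ i j, Function.support (f i j) ⊆ B
  dirDeriv_pressure : ∀ x ∈ U, ∀ i, dirDeriv (b i) π x = ∑ j, dirDeriv (b j) (f i j) x

variable {b : OrthonormalBasis ι ℝ E} {K U B : Set E} {π g ζ : E → ℝ} {f : ι → ι → E → ℝ}

lemma IsLocalPressure.dirDeriv_crossCorr (h : IsLocalPressure b K U B π g f)
    (hζ : IsTestFunction ζ) {x : E} (hx : ∀ y ∈ Function.support ζ, y + x ∈ U) (i : ι) :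
    dirDeriv (b i) (crossCorr ζ π) x = ∑ j, dirDeriv (b j) (crossCorr ζ (f i j)) x := by
  have hint : ∀ j, Integrable fun y => ζ y * dirDeriv (b j) (f i j) (y + x) := fun j =>
    (hζ.mul_right ((contDiff_dirDeriv (h.isTestFunction_stress i j).contDiff _).comp
      (contDiff_id.add contDiff_const))).integrable
  simp only [hζ.dirDeriv_crossCorr h.contDiff_pressure,
    hζ.dirDeriv_crossCorr (h.isTestFunction_stress i _).contDiff, crossCorr]
  rw [← integral_finsetSum _ fun j _ => hint j]
  refine integral_congr_ae (ae_of_all _ fun y => ?_)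
  by_cases hy : ζ y = 0
  · simp [hy]
  · simp only [h.dirDeriv_pressure _ (hx y hy) i, Finset.mul_sum]

lemma IsLocalPressure.abs_dirDeriv_crossCorr_le (h : IsLocalPressure b K U B π g f)
    (hζ : IsTestFunction ζ) {L : ℝ} (hL : ∀ j y, |dirDeriv (b j) ζ y| ≤ L) {x : E}
    (hx : ∀ y ∈ Function.support ζ, y + x ∈ U) (i : ι) :
    |dirDeriv (b i) (crossCorr ζ π) x| ≤ ∑ j, L * ∫ y, |f i j y| := by
  rw [h.dirDeriv_crossCorr hζ hx i]
  refine (Finset.abs_sum_le_sum_abs _ _).trans (Finset.sum_le_sum fun j _ => ?_)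
  have hf := h.isTestFunction_stress i j
  rw [hζ.dirDeriv_crossCorr hf.contDiff, ← abs_neg, ← hζ.crossCorr_dirDeriv hf.contDiff, crossCorr]
  have hshift : IsTestFunction fun y => f i j (y + x) := by
    simpa only [one_smul, add_comm x] using hf.comp_homothety x one_ne_zero
  have hle := hshift.abs_integral_mul_le (hL j)
  rw [integral_add_right_eq_self (fun y => |f i j y|)] at hle
  simpa only [mul_comm (f i j _)] using hle

lemma IsLocalPressure.norm_fderiv_crossCorr_le (h : IsLocalPressure b K U B π g f)
    (hζ : IsTestFunction ζ) {L : ℝ} (hL : ∀ j y, |dirDeriv (b j) ζ y| ≤ L) {x : E}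
    (hx : ∀ y ∈ Function.support ζ, y + x ∈ U) :
    ‖fderiv ℝ (crossCorr ζ π) x‖ ≤ L * ∑ i, ∑ j, ∫ y, |f i j y| := by
  refine (norm_fderiv_le_sum_abs_dirDeriv b _ x).trans ?_
  simp only [Finset.mul_sum]
  exact Finset.sum_le_sum fun i _ => h.abs_dirDeriv_crossCorr_le hζ hL hx i

lemma IsLocalPressure.integral_abs_mul_integral_abs_le (h : IsLocalPressure b K U B π g f)
    (hB : volume B ≠ ⊤) (hKB : K ⊆ B) (i j : ι) :
    (∫ x, |g x|) * (∫ x, |f i j x|) ≤ volume.real B * youngMass g (f i j) :=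
  h.isTestFunction_weight.integral_abs_mul_integral_abs_le (h.isTestFunction_stress i j) hB
    (h.support_weight_subset.trans hKB) (h.support_stress_subset i j)

-- Since `g` has mean zero, only the oscillation over `K` of the mollified pressure `crossCorr ζ π`
-- matters, and its gradient is controlled by moving one derivative onto `ζ`.
lemma exists_abs_integral_mul_crossCorr_le [Nonempty ι] (b : OrthonormalBasis ι ℝ E)
    (hK : IsCompact K) (hKp : IsConnected K) (hB : volume B ≠ ⊤) (hKB : K ⊆ B) {δ : ℝ} (hδ : 0 < δ)
    (hKU : Metric.thickening δ K ⊆ U) :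
    ∃ C, ∀ ζ L, IsTestFunction ζ → Function.support ζ ⊆ Metric.ball 0 (δ / 2) →
      (∀ j y, |dirDeriv (b j) ζ y| ≤ L) → ∀ π g f, IsLocalPressure b K U B π g f →
      |∫ y, ζ y * crossCorr g π y| ≤ C * L * tensorMass g f := by
  obtain ⟨x₀, -, C, hC⟩ := exists_abs_sub_le_of_isCompact hK hKp
    (V := Metric.thickening (δ / 2) K) Metric.isOpen_thickening
    (Metric.self_subset_thickening (half_pos hδ) K)
  refine ⟨|C| * volume.real B, fun ζ L hζ hsupp hL π g f h => ?_⟩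
  have hL0 : 0 ≤ L := (abs_nonneg _).trans (hL (Classical.arbitrary ι) 0)
  have hosc : ∀ x ∈ K, |crossCorr ζ π x - crossCorr ζ π x₀| ≤ C * (L * ∑ i, ∑ j, ∫ y, |f i j y|) :=
    fun x hx => hC x hx _ _
      ((hζ.contDiff_crossCorr h.contDiff_pressure.continuous).differentiable (by simp))
      fun z hz => h.norm_fderiv_crossCorr_le hζ hL fun y hy =>
        hKU (by simpa using add_mem_thickening (mem_ball_zero_iff.mp (hsupp hy)) hz)
  rw [integral_mul_crossCorr_comm hζ h.isTestFunction_weight h.contDiff_pressure.continuous]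
  calc |∫ x, g x * crossCorr ζ π x|
      ≤ (∫ x, |g x|) * (C * (L * ∑ i, ∑ j, ∫ y, |f i j y|)) :=
        h.isTestFunction_weight.abs_integral_mul_le_of_abs_sub_le h.support_weight_subset
          h.integral_weight (hζ.contDiff_crossCorr h.contDiff_pressure.continuous) hosc
    _ = C * L * ∑ i, ∑ j, (∫ x, |g x|) * ∫ y, |f i j y| := by
        simp only [← Finset.mul_sum]; ring
    _ ≤ |C| * L * ∑ i, ∑ j, volume.real B * youngMass g (f i j) := by
        refine mul_le_mul (mul_le_mul_of_nonneg_right (le_abs_self C) hL0)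
          (Finset.sum_le_sum fun i _ => Finset.sum_le_sum fun j _ =>
            h.integral_abs_mul_integral_abs_le hB hKB i j) ?_ (by positivity)
        positivity
    _ = |C| * volume.real B * L * tensorMass g f := by
        simp only [tensorMass, ← Finset.mul_sum]; ring

end LocalPressure

section PressureEstimate

variable {E ι : Type*} [NormedAddCommGroup E] [InnerProductSpace ℝ E] [FiniteDimensional ℝ E]
  [MeasurableSpace E] [BorelSpace E] [Fintype ι] {b : OrthonormalBasis ι ℝ E} {K U B : Set E}
  {π g κ : E → ℝ} {f : ι → ι → E → ℝ} {δ : ℝ}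

lemma IsTestFunction.continuous_mul_abs_heat {w : E → ℝ} (hw : IsTestFunction w) (x : E) :
    Continuous fun s => s * |heat s w x| :=
  continuous_id.mul (hw.continuous_heat_uncurry.comp (Continuous.prodMk_left x)).abs

lemma IsTestFunction.abs_apply_le (b : OrthonormalBasis ι ℝ E) {w : E → ℝ} (hw : IsTestFunction w)
    (x : E) :
    |w x| ≤ |heat 1 w x| +
      ∫ s in (0 : ℝ)..1, s * |heat s (fun y => ∑ i, dirDeriv (b i) (dirDeriv (b i) w) y) x| := by
  have hlap : IsTestFunction fun y => ∑ i, dirDeriv (b i) (dirDeriv (b i) w) y :=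
    .sum fun i _ => (hw.dirDeriv _).dirDeriv _
  have hcont : Continuous fun s : ℝ =>
      s • heat s (fun y => ∑ i, dirDeriv (b i) (dirDeriv (b i) w) y) x :=
    continuous_id.smul (hlap.continuous_heat_uncurry.comp (Continuous.prodMk_left x))
  have hftc := intervalIntegral.integral_eq_sub_of_hasDerivAt
    (fun s _ => hw.hasDerivAt_heat b s x) (hcont.intervalIntegrable 0 1)
  have hle := intervalIntegral.abs_integral_le_integral_abs (μ := volume)
    (f := fun s : ℝ => s • heat s (fun y => ∑ i, dirDeriv (b i) (dirDeriv (b i) w) y) x)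
    zero_le_one
  have habs : ∫ s in (0 : ℝ)..1, |s • heat s (fun y => ∑ i, dirDeriv (b i) (dirDeriv (b i) w) y) x|
      = ∫ s in (0 : ℝ)..1, s * |heat s (fun y => ∑ i, dirDeriv (b i) (dirDeriv (b i) w) y) x| :=
    intervalIntegral.integral_congr fun s hs => by
      rw [uIcc_of_le zero_le_one] at hs
      simp only [smul_eq_mul, abs_mul, abs_of_nonneg hs.1]
  rw [hftc, habs, heat_zero] at hle
  linarith [abs_sub_abs_le_abs_sub (w x) (heat 1 w x), abs_sub_comm (w x) (heat 1 w x)]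

lemma IsTestFunction.integral_mul_abs_heat_crossCorr_le {g f : E → ℝ} (hg : IsTestFunction g)
    (hf : IsTestFunction f) (b : OrthonormalBasis ι ℝ E) (i j : ι) :
    ∫ s in (0 : ℝ)..1, s * |heat s (dirDeriv (b i) (dirDeriv (b j) (crossCorr g f))) 0| ≤
      4 * youngMass g f := by
  have hsqrt : √2 * √2 = 2 := Real.mul_self_sqrt (by norm_num)
  have hsub := intervalIntegral.mul_integral_comp_mul_left (a := 0) (b := 1 / √2) (c := √2)
    (f := fun s => s * |heat s (dirDeriv (b i) (dirDeriv (b j) (crossCorr g f))) 0|)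
  rw [mul_zero, mul_one_div_cancel (by positivity)] at hsub
  rw [← hsub, ← intervalIntegral.integral_const_mul]
  calc ∫ r in (0 : ℝ)..1 / √2,
        √2 * (√2 * r * |heat (√2 * r) (dirDeriv (b i) (dirDeriv (b j) (crossCorr g f))) 0|)
      = 2 * ∫ r in (0 : ℝ)..1 / √2,
          r * |∫ x, heat r (dirDeriv (b i) g) x * heat r (dirDeriv (b j) f) x| := by
        rw [← intervalIntegral.integral_const_mul]
        refine intervalIntegral.integral_congr fun r _ => ?_
        simp only [hg.heat_dirDeriv_crossCorr hf, abs_neg, ← mul_assoc, hsqrt]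
    _ ≤ 2 * (2 * youngMass g f) := by
        gcongr
        exact hg.integral_mul_abs_integral_heat_le b hf i j (by positivity)
    _ = 4 * youngMass g f := by ring

lemma youngMass_nonneg (g f : E → ℝ) : 0 ≤ youngMass g f :=
  add_nonneg (integral_nonneg fun x => by positivity) (integral_nonneg fun x => by positivity)

lemma youngMass_le_tensorMass (g : E → ℝ) (f : ι → ι → E → ℝ) (i j : ι) :
    youngMass g (f i j) ≤ tensorMass g f :=
  (Finset.single_le_sum (f := fun j => youngMass g (f i j)) (fun _ _ => youngMass_nonneg _ _)
    (Finset.mem_univ j)).trans (Finset.single_le_sum (f := fun i => ∑ j, youngMass g (f i j))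
      (fun _ _ => Finset.sum_nonneg fun _ _ => youngMass_nonneg _ _) (Finset.mem_univ i))

lemma IsLocalPressure.mul_dirDeriv_crossCorr (h : IsLocalPressure b K U B π g f)
    (hKU : Metric.thickening δ K ⊆ U) {η : E → ℝ} (hη : Function.support η ⊆ Metric.ball 0 δ)
    (i : ι) (y : E) :
    η y * dirDeriv (b i) (crossCorr g π) y =
      ∑ j, η y * dirDeriv (b j) (crossCorr g (f i j)) y := by
  by_cases hy : η y = 0
  · simp [hy]
  · rw [← Finset.mul_sum, ← h.dirDeriv_crossCorr h.isTestFunction_weight fun x hx => hKU ?_]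
    refine Metric.mem_thickening_iff.mpr ⟨x, h.support_weight_subset hx, ?_⟩
    simpa [dist_eq_norm] using hη hy

lemma IsLocalPressure.dirDeriv_dirDeriv_mul_crossCorr (h : IsLocalPressure b K U B π g f)
    (hKU : Metric.thickening δ K ⊆ U) (hκ : IsTestFunction κ) (hκδ : tsupport κ ⊆ Metric.ball 0 δ)
    (i : ι) :
    dirDeriv (b i) (dirDeriv (b i) fun y => κ y * crossCorr g π y) = fun y =>
      dirDeriv (b i) (dirDeriv (b i) κ) y * crossCorr g π y +
        ∑ j, (2 * dirDeriv (b i) κ y * dirDeriv (b j) (crossCorr g (f i j)) y +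
          (κ y - 1) * dirDeriv (b i) (dirDeriv (b j) (crossCorr g (f i j))) y +
          dirDeriv (b i) (dirDeriv (b j) (crossCorr g (f i j))) y) := by
  have hψ : ContDiff ℝ ∞ (crossCorr g π) :=
    h.isTestFunction_weight.contDiff_crossCorr h.contDiff_pressure.continuous
  have hψf : ∀ j, ContDiff ℝ ∞ (dirDeriv (b j) (crossCorr g (f i j))) := fun j =>
    contDiff_dirDeriv (h.isTestFunction_weight.crossCorr (h.isTestFunction_stress i j)).contDiff _
  have hdκ : ContDiff ℝ ∞ (dirDeriv (b i) κ) := contDiff_dirDeriv hκ.contDiff _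
  have hmulκ := h.mul_dirDeriv_crossCorr hKU ((subset_tsupport κ).trans hκδ) i
  have hmuldκ := h.mul_dirDeriv_crossCorr hKU ((subset_tsupport (dirDeriv (b i) κ)).trans
    ((tsupport_fderiv_apply_subset ℝ (b i)).trans hκδ)) i
  rw [dirDeriv_mul hκ.contDiff hψ]
  simp only [hmulκ]
  rw [dirDeriv_add (hdκ.mul hψ) (.sum fun j _ => hκ.contDiff.mul (hψf j)), dirDeriv_mul hdκ hψ,
    dirDeriv_sum _ fun j => hκ.contDiff.mul (hψf j)]
  simp only [hmuldκ, dirDeriv_mul hκ.contDiff (hψf _), add_assoc, ← Finset.sum_add_distrib]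
  ext y
  congr 1
  exact Finset.sum_congr rfl fun j _ => by ring

end PressureEstimate

section PressureEstimate

variable {E ι : Type*} [NormedAddCommGroup E] [InnerProductSpace ℝ E] [FiniteDimensional ℝ E]
  [MeasurableSpace E] [BorelSpace E] [Fintype ι] {b : OrthonormalBasis ι ℝ E} {K U B : Set E}
  {π g κ η : E → ℝ} {f : ι → ι → E → ℝ} {δ : ℝ}

lemma tensorMass_nonneg (g : E → ℝ) (f : ι → ι → E → ℝ) : 0 ≤ tensorMass g f :=
  Finset.sum_nonneg fun _ _ => Finset.sum_nonneg fun _ _ => youngMass_nonneg _ _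

lemma exists_abs_heat_mul_crossCorr_le [Nonempty ι] (b : OrthonormalBasis ι ℝ E) (hK : IsCompact K)
    (hKp : IsConnected K) (hB : volume B ≠ ⊤) (hKB : K ⊆ B) (hδ : 0 < δ)
    (hKU : Metric.thickening δ K ⊆ U) (hη : IsTestFunction η)
    (hηδ : tsupport η ⊆ Metric.ball 0 (δ / 2)) {S : Set ℝ} (hS : ∀ s ∈ S, 0 < s)
    (hL : ∀ j, ∃ L, ∀ s ∈ S, ∀ y,
      |dirDeriv (b j) (fun y => η y * (s⁻¹ ^ finrank ℝ E * gaussianDensity (s⁻¹ • y))) y| ≤ L) :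
    ∃ C, ∀ s ∈ S, ∀ π g f, IsLocalPressure b K U B π g f →
      |heat s (fun y => η y * crossCorr g π y) 0| ≤ C * tensorMass g f := by
  obtain ⟨C, hC⟩ := exists_abs_integral_mul_crossCorr_le b hK hKp hB hKB hδ hKU
  choose L hL using hL
  obtain ⟨M, hM⟩ := Finite.exists_le L
  refine ⟨C * M, fun s hs π g f h => ?_⟩
  rw [heat_apply_zero _ (hS s hs)]
  simp only [mul_right_comm (η _) (crossCorr g π _)]
  refine hC _ M (hη.mul_right ?_) ((Function.support_mul_subset_left _ _).trans
    ((subset_tsupport η).trans hηδ)) (fun j y => (hL j s hs y).trans (hM j)) π g f h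
  exact contDiff_const.mul (contDiff_gaussianDensity.comp (contDiff_const_smul _))

lemma exists_abs_heat_laplacian_summand_le (b : OrthonormalBasis ι ℝ E) (hB : volume B ≠ ⊤)
    (hKB : K ⊆ B) (hδ : 0 < δ) (hκ : IsTestFunction κ) (hκ1 : ∀ y, ‖y‖ < δ → κ y = 1) (i j : ι) :
    ∃ C, ∀ s > 0, ∀ π g f, IsLocalPressure b K U B π g f →
      |heat s (fun y => 2 * dirDeriv (b i) κ y * dirDeriv (b j) (crossCorr g (f i j)) y) 0| +
        |heat s (fun y => (κ y - 1) * dirDeriv (b i) (dirDeriv (b j) (crossCorr g (f i j))) y) 0|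
      ≤ C * tensorMass g f := by
  have hκ' : IsTestFunction fun y => 2 * dirDeriv (b i) κ y :=
    ⟨contDiff_const.mul (hκ.dirDeriv _).contDiff, (hκ.dirDeriv _).hasCompactSupport.mul_left⟩
  obtain ⟨C, hC⟩ := hκ'.exists_abs_heat_sub_mul_dirDeriv_le (c := 0)
    (fun y hy => by rw [dirDeriv_eq_zero_of_eq_const hκ1 _ y hy, mul_zero]) hδ (b j)
  obtain ⟨D, hD⟩ := hκ.exists_abs_heat_sub_mul_dirDeriv_dirDeriv_le hκ1 hδ (b i) (b j)
  simp only [sub_zero] at hC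
  refine ⟨(|C| + |D|) * volume.real B, fun s hs π g f h => ?_⟩
  have hf := h.isTestFunction_stress i j
  have hψ := h.isTestFunction_weight.crossCorr hf
  calc _ ≤ C * (∫ y, |crossCorr g (f i j) y|) + D * ∫ y, |crossCorr g (f i j) y| :=
        add_le_add (hC s hs _ hψ) (hD s hs _ hψ)
    _ ≤ (|C| + |D|) * ∫ y, |crossCorr g (f i j) y| := by
        rw [← add_mul]
        gcongr <;> exact le_abs_self _
    _ ≤ (|C| + |D|) * (volume.real B * tensorMass g f) := by
        gcongr
        exact ((h.isTestFunction_weight.integral_abs_crossCorr_le hf).trans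
          (h.integral_abs_mul_integral_abs_le hB hKB i j)).trans
          (mul_le_mul_of_nonneg_left (youngMass_le_tensorMass g f i j) measureReal_nonneg)
    _ = _ := by ring

lemma IsLocalPressure.abs_heat_laplacian_le (h : IsLocalPressure b K U B π g f)
    (hKU : Metric.thickening δ K ⊆ U) (hκ : IsTestFunction κ) (hκδ : tsupport κ ⊆ Metric.ball 0 δ)
    (s : ℝ) :
    |heat s (fun y => ∑ i, dirDeriv (b i) (dirDeriv (b i) fun y => κ y * crossCorr g π y) y) 0| ≤
      ∑ i, (|heat s (fun y => dirDeriv (b i) (dirDeriv (b i) κ) y * crossCorr g π y) 0| +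
        ∑ j, (|heat s (fun y =>
              2 * dirDeriv (b i) κ y * dirDeriv (b j) (crossCorr g (f i j)) y) 0| +
          |heat s (fun y =>
              (κ y - 1) * dirDeriv (b i) (dirDeriv (b j) (crossCorr g (f i j))) y) 0| +
          |heat s (dirDeriv (b i) (dirDeriv (b j) (crossCorr g (f i j)))) 0|)) := by
  have hψ : ∀ i j, IsTestFunction (crossCorr g (f i j)) := fun i j =>
    h.isTestFunction_weight.crossCorr (h.isTestFunction_stress i j)
  have hψ2 : ∀ i j, IsTestFunction (dirDeriv (b i) (dirDeriv (b j) (crossCorr g (f i j)))) :=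
    fun i j => ((hψ i j).dirDeriv _).dirDeriv _
  have h1 : ∀ i, IsTestFunction fun y =>
      dirDeriv (b i) (dirDeriv (b i) κ) y * crossCorr g π y := fun i =>
    ((hκ.dirDeriv _).dirDeriv _).mul_right
      (h.isTestFunction_weight.contDiff_crossCorr h.contDiff_pressure.continuous)
  have h2 : ∀ i j, IsTestFunction fun y =>
      2 * dirDeriv (b i) κ y * dirDeriv (b j) (crossCorr g (f i j)) y := fun i j =>
    ((hψ i j).dirDeriv _).mul_left (contDiff_const.mul (hκ.dirDeriv _).contDiff)
  have h3 : ∀ i j, IsTestFunction fun y =>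
      (κ y - 1) * dirDeriv (b i) (dirDeriv (b j) (crossCorr g (f i j))) y := fun i j =>
    (hψ2 i j).mul_left (hκ.contDiff.sub contDiff_const)
  simp only [h.dirDeriv_dirDeriv_mul_crossCorr hKU hκ hκδ]
  rw [heat_sum fun i _ => (h1 i).add (.sum fun j _ => ((h2 i j).add (h3 i j)).add (hψ2 i j))]
  refine (Finset.abs_sum_le_sum_abs _ _).trans (Finset.sum_le_sum fun i _ => ?_)
  rw [heat_add (h1 i) (.sum fun j _ => ((h2 i j).add (h3 i j)).add (hψ2 i j)),
    heat_sum fun j _ => ((h2 i j).add (h3 i j)).add (hψ2 i j)]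
  refine (abs_add_le _ _).trans (add_le_add le_rfl
    ((Finset.abs_sum_le_sum_abs _ _).trans (Finset.sum_le_sum fun j _ => ?_)))
  rw [heat_add ((h2 i j).add (h3 i j)) (hψ2 i j), heat_add (h2 i j) (h3 i j)]
  exact abs_add_three _ _ _

variable [Nonempty ι]

lemma exists_abs_heat_laplacian_le (b : OrthonormalBasis ι ℝ E) (hK : IsCompact K)
    (hKp : IsConnected K) (hB : volume B ≠ ⊤) (hKB : K ⊆ B) (hδ : 0 < δ)
    (hKU : Metric.thickening δ K ⊆ U) {r : ℝ} (hr : 0 < r) (hκ : IsTestFunction κ)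
    (hκ1 : ∀ y, ‖y‖ < r → κ y = 1) (hκδ : tsupport κ ⊆ Metric.ball 0 (δ / 2)) :
    ∃ C, ∀ s > 0, ∀ π g f, IsLocalPressure b K U B π g f →
      |heat s (fun y => ∑ i, dirDeriv (b i) (dirDeriv (b i) fun y => κ y * crossCorr g π y) y) 0| ≤
        C * tensorMass g f +
          ∑ i, ∑ j, |heat s (dirDeriv (b i) (dirDeriv (b j) (crossCorr g (f i j)))) 0| := by
  have hlow : ∀ i, ∃ C, ∀ s > 0, ∀ π g f, IsLocalPressure b K U B π g f →
      |heat s (fun y => dirDeriv (b i) (dirDeriv (b i) κ) y * crossCorr g π y) 0| ≤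
        C * tensorMass g f := fun i => by
    have hκ2 := (hκ.dirDeriv (b i)).dirDeriv (b i)
    refine exists_abs_heat_mul_crossCorr_le b hK hKp hB hKB hδ hKU hκ2
      ((tsupport_fderiv_apply_subset ℝ (b i)).trans
        ((tsupport_fderiv_apply_subset ℝ (b i)).trans hκδ)) (S := Ioi 0) (fun s hs => hs)
      fun j => ?_
    simpa only [sub_zero, mem_Ioi] using hκ2.exists_abs_dirDeriv_sub_mul_rescale_le
      (dirDeriv_eq_zero_of_eq_const (dirDeriv_eq_zero_of_eq_const hκ1 _) _) hr
      contDiff_gaussianDensity isRapidlyDecreasing_gaussianDensity (finrank ℝ E) (b j)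
      (isRapidlyDecreasing_dirDeriv_gaussianDensity (b j))
  choose A hA using hlow
  choose D hD using exists_abs_heat_laplacian_summand_le (U := U) b hB hKB hr hκ hκ1
  refine ⟨∑ i, (A i + ∑ j, D i j), fun s hs π g f h => ?_⟩
  have hball : Metric.ball (0 : E) (δ / 2) ⊆ Metric.ball 0 δ :=
    Metric.ball_subset_ball (by linarith)
  refine (h.abs_heat_laplacian_le hKU hκ (hκδ.trans hball) s).trans ?_
  rw [Finset.sum_mul, ← Finset.sum_add_distrib]
  refine Finset.sum_le_sum fun i _ => ?_
  rw [add_mul, Finset.sum_mul, add_assoc, ← Finset.sum_add_distrib]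
  exact add_le_add (hA i s hs π g f h) (Finset.sum_le_sum fun j _ =>
    add_le_add_left (hD i j s hs π g f h) _)

lemma exists_abs_heat_one_mul_crossCorr_le (b : OrthonormalBasis ι ℝ E) (hK : IsCompact K)
    (hKp : IsConnected K) (hB : volume B ≠ ⊤) (hKB : K ⊆ B) (hδ : 0 < δ)
    (hKU : Metric.thickening δ K ⊆ U) (hκ : IsTestFunction κ)
    (hκδ : tsupport κ ⊆ Metric.ball 0 (δ / 2)) :
    ∃ C, ∀ π g f, IsLocalPressure b K U B π g f →
      |heat 1 (fun y => κ y * crossCorr g π y) 0| ≤ C * tensorMass g f := by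
  obtain ⟨C, hC⟩ := exists_abs_heat_mul_crossCorr_le b hK hKp hB hKB hδ hKU hκ hκδ (S := {1})
    (by simp) fun j => by
      have hζ : IsTestFunction fun y =>
          κ y * ((1 : ℝ)⁻¹ ^ finrank ℝ E * gaussianDensity ((1 : ℝ)⁻¹ • y)) :=
        hκ.mul_right (contDiff_const.mul (contDiff_gaussianDensity.comp (contDiff_const_smul _)))
      obtain ⟨L, hL⟩ := (hζ.dirDeriv (b j)).exists_norm_le
      exact ⟨L, by rintro s rfl; exact hL⟩
  exact ⟨C, hC 1 rfl⟩

lemma exists_integral_mul_abs_heat_laplacian_le (b : OrthonormalBasis ι ℝ E) (hK : IsCompact K)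
    (hKp : IsConnected K) (hB : volume B ≠ ⊤) (hKB : K ⊆ B) (hδ : 0 < δ)
    (hKU : Metric.thickening δ K ⊆ U) {r : ℝ} (hr : 0 < r) (hκ : IsTestFunction κ)
    (hκ1 : ∀ y, ‖y‖ < r → κ y = 1) (hκδ : tsupport κ ⊆ Metric.ball 0 (δ / 2)) :
    ∃ C, ∀ π g f, IsLocalPressure b K U B π g f →
      ∫ s in (0 : ℝ)..1, s * |heat s (fun y =>
        ∑ i, dirDeriv (b i) (dirDeriv (b i) fun y => κ y * crossCorr g π y) y) 0| ≤
      C * tensorMass g f := by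
  obtain ⟨C, hC⟩ := exists_abs_heat_laplacian_le b hK hKp hB hKB hδ hKU hr hκ hκ1 hκδ
  refine ⟨C / 2 + 4, fun π g f h => ?_⟩
  have hf := h.isTestFunction_stress
  have hlap : IsTestFunction fun y =>
      ∑ i, dirDeriv (b i) (dirDeriv (b i) fun y => κ y * crossCorr g π y) y :=
    .sum fun i _ => ((hκ.mul_right (h.isTestFunction_weight.contDiff_crossCorr
      h.contDiff_pressure.continuous)).dirDeriv _).dirDeriv _
  have hint : ∀ i j, Continuous fun s =>
      s * |heat s (dirDeriv (b i) (dirDeriv (b j) (crossCorr g (f i j)))) 0| := fun i j =>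
    (((h.isTestFunction_weight.crossCorr (hf i j)).dirDeriv _).dirDeriv _).continuous_mul_abs_heat 0
  calc ∫ s in (0 : ℝ)..1, s * |heat s (fun y =>
        ∑ i, dirDeriv (b i) (dirDeriv (b i) fun y => κ y * crossCorr g π y) y) 0|
      ≤ ∫ s in (0 : ℝ)..1, (s * (C * tensorMass g f) +
        ∑ i, ∑ j, s * |heat s (dirDeriv (b i) (dirDeriv (b j) (crossCorr g (f i j)))) 0|) := by
        refine intervalIntegral.integral_mono_on_of_le_Ioo zero_le_one
          ((hlap.continuous_mul_abs_heat 0).intervalIntegrable _ _)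
          (Continuous.intervalIntegrable (by fun_prop) _ _) fun s hs => ?_
        simp only [← Finset.mul_sum, ← mul_add]
        exact mul_le_mul_of_nonneg_left (hC s hs.1 π g f h) hs.1.le
    _ = C / 2 * tensorMass g f + ∑ i, ∑ j, ∫ s in (0 : ℝ)..1,
        s * |heat s (dirDeriv (b i) (dirDeriv (b j) (crossCorr g (f i j)))) 0| := by
        rw [intervalIntegral.integral_add (Continuous.intervalIntegrable (by fun_prop) _ _)
          (Continuous.intervalIntegrable (by fun_prop) _ _), intervalIntegral.integral_mul_const,
          integral_id, intervalIntegral.integral_finsetSum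
            fun i _ => Continuous.intervalIntegrable (by fun_prop) _ _]
        simp only [intervalIntegral.integral_finsetSum
          fun j _ => (hint _ j).intervalIntegrable (μ := volume) 0 1]
        ring
    _ ≤ C / 2 * tensorMass g f + ∑ i, ∑ j, 4 * youngMass g (f i j) := by
        gcongr with i _ j _
        exact h.isTestFunction_weight.integral_mul_abs_heat_crossCorr_le (hf i j) b i j
    _ = (C / 2 + 4) * tensorMass g f := by
        simp only [tensorMass, ← Finset.mul_sum]; ring

-- With `κ` cut off near the origin, `∫ g π = (κ · crossCorr g π) 0` is recovered from its heat
-- flow; there `Δ` falls on second derivatives of `crossCorr g (f i j)`, up to localized errors.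
lemma exists_abs_integral_mul_pressure_le (b : OrthonormalBasis ι ℝ E) (hK : IsCompact K)
    (hKp : IsConnected K) (hB : volume B ≠ ⊤) (hKB : K ⊆ B) (hU : IsOpen U) (hKU : K ⊆ U) :
    ∃ C, ∀ π g f, IsLocalPressure b K U B π g f → |∫ x, g x * π x| ≤ C * tensorMass g f := by
  obtain ⟨δ, hδ, hδU⟩ := hK.exists_thickening_subset_open hU hKU
  obtain ⟨κ, hκ, -, hκ1, hκδ⟩ := exists_isTestFunction_eq_one (E := E) (r := δ / 4) (δ := δ / 2)
    (by positivity) (by linarith)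
  obtain ⟨A, hA⟩ := exists_abs_heat_one_mul_crossCorr_le b hK hKp hB hKB hδ hδU hκ hκδ
  obtain ⟨C, hC⟩ := exists_integral_mul_abs_heat_laplacian_le b hK hKp hB hKB hδ hδU
    (r := δ / 4) (by positivity) hκ (fun y hy => hκ1 y hy.le) hκδ
  refine ⟨A + C, fun π g f h => ?_⟩
  have hκψ : IsTestFunction fun y => κ y * crossCorr g π y := hκ.mul_right
    (h.isTestFunction_weight.contDiff_crossCorr h.contDiff_pressure.continuous)
  have hzero : ∫ x, g x * π x = κ 0 * crossCorr g π 0 := by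
    rw [hκ1 0 (by rw [norm_zero]; positivity), one_mul, crossCorr_zero]
  rw [hzero, add_mul]
  exact (hκψ.abs_apply_le b 0).trans (add_le_add (hA π g f h) (hC π g f h))

end PressureEstimate

section Homogeneity

-- The scale `l = (F / G) ^ (2 / 9)` balances the two terms.
lemma le_mul_rpow_mul_rpow_of_forall_scale_of_pos {X A G F : ℝ} (hG : 0 < G) (hF : 0 < F)
    (h : ∀ l : ℝ, 0 < l → X ≤ A * (l ^ 3 * G + l⁻¹ ^ (3 / 2 : ℝ) * F)) :
    X ≤ 2 * A * (G ^ (1 / 3 : ℝ) * F ^ (2 / 3 : ℝ)) := by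
  have hFG : 0 < F / G := div_pos hF hG
  have hcube : ((F / G) ^ (2 / 9 : ℝ)) ^ 3 * G = G ^ (1 / 3 : ℝ) * F ^ (2 / 3 : ℝ) := by
    rw [← Real.rpow_natCast, ← Real.rpow_mul hFG.le, Real.div_rpow hF.le hG.le, div_mul_eq_mul_div,
      div_eq_iff (by positivity), mul_right_comm, ← Real.rpow_add hG, mul_comm]
    norm_num
  have hsqrt : (((F / G) ^ (2 / 9 : ℝ))⁻¹) ^ (3 / 2 : ℝ) * F =
      G ^ (1 / 3 : ℝ) * F ^ (2 / 3 : ℝ) := by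
    rw [← Real.inv_rpow hFG.le, ← Real.rpow_mul (by positivity), inv_div, Real.div_rpow hG.le hF.le,
      div_mul_eq_mul_div, div_eq_iff (by positivity), mul_assoc, ← Real.rpow_add hF]
    norm_num
  have hscale := h _ (Real.rpow_pos_of_pos hFG (2 / 9))
  rw [hcube, hsqrt] at hscale
  exact hscale.trans_eq (by ring)

lemma le_mul_rpow_mul_rpow_of_forall_scale {X A G F : ℝ} (hA : 0 ≤ A) (hG : 0 ≤ G) (hF : 0 ≤ F)
    (h : ∀ l : ℝ, 0 < l → X ≤ A * (l ^ 3 * G + l⁻¹ ^ (3 / 2 : ℝ) * F)) :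
    X ≤ 2 * A * (G ^ (1 / 3 : ℝ) * F ^ (2 / 3 : ℝ)) := by
  have hlim : Tendsto (fun ε : ℝ => 2 * A * ((G + ε) ^ (1 / 3 : ℝ) * (F + ε) ^ (2 / 3 : ℝ)))
      (𝓝[>] 0) (𝓝 (2 * A * (G ^ (1 / 3 : ℝ) * F ^ (2 / 3 : ℝ)))) := by
    have hcont : Continuous fun ε : ℝ =>
        2 * A * ((G + ε) ^ (1 / 3 : ℝ) * (F + ε) ^ (2 / 3 : ℝ)) :=
      continuous_const.mul (((continuous_const.add continuous_id).rpow_const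
        fun _ => .inr (by norm_num)).mul ((continuous_const.add continuous_id).rpow_const
        fun _ => .inr (by norm_num)))
    simpa only [add_zero] using (hcont.tendsto 0).mono_left nhdsWithin_le_nhds
  refine ge_of_tendsto hlim (eventually_nhdsWithin_of_forall fun ε (hε : 0 < ε) => ?_)
  refine le_mul_rpow_mul_rpow_of_forall_scale_of_pos (by positivity) (by positivity) fun l hl =>
    (h l hl).trans ?_
  gcongr <;> exact le_add_of_nonneg_right hε.le

variable {E ι : Type*} [NormedAddCommGroup E] [InnerProductSpace ℝ E] [FiniteDimensional ℝ E]
  [MeasurableSpace E] [BorelSpace E] [Fintype ι] {b : OrthonormalBasis ι ℝ E} {K U B : Set E}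
  {π g : E → ℝ} {f : ι → ι → E → ℝ}

lemma IsLocalPressure.const_mul (h : IsLocalPressure b K U B π g f) (a c : ℝ) :
    IsLocalPressure b K U B (fun x => a * π x) (fun x => c * g x) fun i j x => a * f i j x where
  contDiff_pressure := contDiff_const.mul h.contDiff_pressure
  isTestFunction_weight := h.isTestFunction_weight.mul_left contDiff_const
  support_weight_subset := (Function.support_mul_subset_right _ _).trans h.support_weight_subset
  integral_weight := by rw [integral_const_mul, h.integral_weight, mul_zero]
  isTestFunction_stress i j := (h.isTestFunction_stress i j).mul_left contDiff_const
  support_stress_subset i j :=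
    (Function.support_mul_subset_right _ _).trans (h.support_stress_subset i j)
  dirDeriv_pressure x hx i := by
    simp only [dirDeriv_const_mul h.contDiff_pressure, ← Finset.mul_sum,
      dirDeriv_const_mul (h.isTestFunction_stress i _).contDiff, h.dirDeriv_pressure x hx i]

lemma youngMass_const_mul {l : ℝ} (hl : 0 < l) (g f : E → ℝ) :
    youngMass (fun x => l * g x) (fun x => l⁻¹ * f x) =
      l ^ 3 * (∫ x, |g x| ^ 3) + l⁻¹ ^ (3 / 2 : ℝ) * ∫ x, |f x| ^ (3 / 2 : ℝ) := by
  simp only [youngMass, abs_mul, abs_of_pos hl, abs_of_pos (inv_pos.mpr hl), mul_pow,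
    Real.mul_rpow (inv_pos.mpr hl).le (abs_nonneg _), integral_const_mul]

-- The estimate is applied to `l⁻¹ π`, `l g`, `l⁻¹ f`, which have the same pairing, for all `l`.
lemma exists_abs_integral_mul_pressure_le_mul_rpow [Nonempty ι] (b : OrthonormalBasis ι ℝ E)
    (hK : IsCompact K) (hKp : IsConnected K) (hB : volume B ≠ ⊤) (hKB : K ⊆ B) (hU : IsOpen U)
    (hKU : K ⊆ U) :
    ∃ C, 0 ≤ C ∧ ∀ π g f, IsLocalPressure b K U B π g f →
      |∫ x, g x * π x| ≤ C * ((∫ x, |g x| ^ 3) ^ (1 / 3 : ℝ) *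
        (∑ i, ∑ j, ∫ x, |f i j x| ^ (3 / 2 : ℝ)) ^ (2 / 3 : ℝ)) := by
  obtain ⟨C, hC⟩ := exists_abs_integral_mul_pressure_le b hK hKp hB hKB hU hKU
  set n : ℝ := (Fintype.card ι : ℝ) ^ 2
  have hn : 1 ≤ n := one_le_pow₀ (mod_cast Fintype.card_pos)
  refine ⟨2 * (|C| * n), by positivity, fun π g f h =>
    le_mul_rpow_mul_rpow_of_forall_scale (by positivity) (by positivity)
      (Finset.sum_nonneg fun i _ => Finset.sum_nonneg fun j _ => by positivity) fun l hl => ?_⟩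
  set G := ∫ x, |g x| ^ 3
  set F := ∑ i, ∑ j, ∫ x, |f i j x| ^ (3 / 2 : ℝ)
  have : 0 ≤ F := Finset.sum_nonneg fun i _ => Finset.sum_nonneg fun j _ => by positivity
  calc |∫ x, g x * π x| = |∫ x, l * g x * (l⁻¹ * π x)| := by
        congr! 3 with x
        field_simp
    _ ≤ |C| * ∑ i, ∑ j, youngMass (fun x => l * g x) fun x => l⁻¹ * f i j x :=
        (hC _ _ _ (h.const_mul l⁻¹ l)).trans
          (mul_le_mul_of_nonneg_right (le_abs_self C) (tensorMass_nonneg _ _))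
    _ = |C| * (n * (l ^ 3 * G) + l⁻¹ ^ (3 / 2 : ℝ) * F) := by
        simp only [youngMass_const_mul hl, Finset.sum_add_distrib, Finset.sum_const,
          Finset.card_univ, nsmul_eq_mul, ← Finset.mul_sum, n, F, G]
        ring
    _ ≤ |C| * (n * (l ^ 3 * G) + n * (l⁻¹ ^ (3 / 2 : ℝ) * F)) :=
        mul_le_mul_of_nonneg_left (add_le_add_right
          (le_mul_of_one_le_left (by positivity) hn) _) (abs_nonneg C)
    _ = _ := by ring

end Homogeneity

section Shell

/-- The closed shell `{r ≤ ‖x‖ ≤ s}`. -/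
def closedShell (E : Type*) [Norm E] (r s : ℝ) : Set E := {x | ‖x‖ ∈ Icc r s}

/-- The open shell `{r < ‖x‖ < s}`. -/
def openShell (E : Type*) [Norm E] (r s : ℝ) : Set E := {x | ‖x‖ ∈ Ioo r s}

variable {E : Type*} [NormedAddCommGroup E]

lemma isOpen_openShell (r s : ℝ) : IsOpen (openShell E r s) := isOpen_Ioo.preimage continuous_norm

lemma isCompact_closedShell [ProperSpace E] (r s : ℝ) : IsCompact (closedShell E r s) :=
  (isCompact_closedBall (0 : E) s).of_isClosed_subset (isClosed_Icc.preimage continuous_norm)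
    fun _ hx => mem_closedBall_zero_iff.mpr hx.2

lemma openShell_subset_ball (r s : ℝ) : openShell E r s ⊆ Metric.ball 0 s :=
  fun _ hx => mem_ball_zero_iff.mpr hx.2

lemma isBounded_openShell (r s : ℝ) : Bornology.IsBounded (openShell E r s) :=
  Metric.isBounded_ball.subset (openShell_subset_ball r s)

lemma isConnected_closedShell [NormedSpace ℝ E] (h : 1 < Module.rank ℝ E) {r s : ℝ} (hr : 0 < r)
    (hrs : r ≤ s) : IsConnected (closedShell E r s) := by
  have himage : closedShell E r s =
      (fun q : ℝ × E => q.1 • q.2) '' (Icc r s ×ˢ Metric.sphere 0 1) := by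
    ext x
    constructor
    · intro hx
      have hx0 : ‖x‖ ≠ 0 := (hr.trans_le hx.1).ne'
      exact ⟨(‖x‖, ‖x‖⁻¹ • x), ⟨hx, by simp [norm_smul, hx0]⟩, smul_inv_smul₀ hx0 x⟩
    · rintro ⟨⟨t, y⟩, ⟨ht, hy⟩, rfl⟩
      rw [mem_sphere_zero_iff_norm] at hy
      simpa [closedShell, norm_smul, hy, abs_of_pos (hr.trans_le ht.1)] using ht
  rw [himage]
  exact ((isConnected_Icc hrs).prod (isConnected_sphere h 0 zero_le_one)).image _
    (continuous_fst.smul continuous_snd).continuousOn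

end Shell

section NavierStokes

variable {E ι : Type*} [NormedAddCommGroup E] [InnerProductSpace ℝ E] [Fintype ι]

/-- A smooth solution of `-Δu + ρ(u·∇)u + ∇π = 0`, `div u = 0`, `div (ρu) = 0` on `E`; the velocity
is given by its coordinates in the orthonormal basis `b`. -/
structure IsStationaryNavierStokes (b : OrthonormalBasis ι ℝ E) (ρ : E → ℝ)
    (u : E → EuclideanSpace ℝ ι) (π : E → ℝ) : Prop where
  contDiff_density : ContDiff ℝ ∞ ρ
  contDiff_velocity : ContDiff ℝ ∞ u
  contDiff_pressure : ContDiff ℝ ∞ π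
  momentum : ∀ x i, -(∑ j, dirDeriv (b j) (dirDeriv (b j) fun y => u y i) x) +
    ρ x * (∑ j, u x j * dirDeriv (b j) (fun y => u y i) x) + dirDeriv (b i) π x = 0
  div_velocity : ∀ x, ∑ i, dirDeriv (b i) (fun y => u y i) x = 0
  div_density_mul_velocity : ∀ x, ∑ i, dirDeriv (b i) (fun y => ρ y * u y i) x = 0

/-- The tensor `∇u - c ρ u ⊗ u`: for `c = 1` its divergence is `∇π`, and for `c = 1 / 2` its
contraction with `u`, together with `-π u`, is the energy flux. -/
noncomputable def stress (b : OrthonormalBasis ι ℝ E) (c : ℝ) (ρ : E → ℝ)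
    (u : E → EuclideanSpace ℝ ι) (i j : ι) (x : E) : ℝ :=
  dirDeriv (b j) (fun y => u y i) x - c * (u x i * (ρ x * u x j))

/-- The energy flux `V_j = ∑ i, u_i (∂_j u_i - ρ u_i u_j / 2) - π u_j`. -/
noncomputable def energyFlux (b : OrthonormalBasis ι ℝ E) (ρ : E → ℝ)
    (u : E → EuclideanSpace ℝ ι) (π : E → ℝ) (j : ι) (x : E) : ℝ :=
  ∑ i, u x i * stress b (1 / 2) ρ u i j x - π x * u x j

variable {b : OrthonormalBasis ι ℝ E} {ρ π φ : E → ℝ} {u : E → EuclideanSpace ℝ ι}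

lemma IsStationaryNavierStokes.contDiff_coord (h : IsStationaryNavierStokes b ρ u π) (i : ι) :
    ContDiff ℝ ∞ fun x => u x i := contDiff_euclidean.mp h.contDiff_velocity i

lemma IsStationaryNavierStokes.contDiff_stress (h : IsStationaryNavierStokes b ρ u π) (c : ℝ)
    (i j : ι) : ContDiff ℝ ∞ (stress b c ρ u i j) :=
  (contDiff_dirDeriv (h.contDiff_coord i) _).sub
    (contDiff_const.mul ((h.contDiff_coord i).mul (h.contDiff_density.mul (h.contDiff_coord j))))

lemma IsStationaryNavierStokes.sum_dirDeriv_stress (h : IsStationaryNavierStokes b ρ u π) (c : ℝ)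
    (i : ι) (x : E) :
    ∑ j, dirDeriv (b j) (stress b c ρ u i j) x =
      dirDeriv (b i) π x + (1 - c) * (ρ x * ∑ j, u x j * dirDeriv (b j) (fun y => u y i) x) := by
  have hu := h.contDiff_coord
  have hρu : ∀ j, ContDiff ℝ ∞ fun y => ρ y * u y j := fun j => h.contDiff_density.mul (hu j)
  have hstress : ∀ j, dirDeriv (b j) (stress b c ρ u i j) x =
      dirDeriv (b j) (dirDeriv (b j) fun y => u y i) x -
        c * (ρ x * (u x j * dirDeriv (b j) (fun y => u y i) x)) -
        c * (u x i * dirDeriv (b j) (fun y => ρ y * u y j) x) := fun j => by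
    unfold stress
    rw [dirDeriv_sub (contDiff_dirDeriv (hu i) _) (contDiff_const.mul ((hu i).mul (hρu j))),
      dirDeriv_const_mul ((hu i).mul (hρu j)), dirDeriv_mul (hu i) (hρu j)]
    ring
  simp only [hstress, Finset.sum_sub_distrib, ← Finset.mul_sum]
  linear_combination -h.momentum x i - c * u x i * h.div_density_mul_velocity x

lemma IsStationaryNavierStokes.contDiff_energyFlux (h : IsStationaryNavierStokes b ρ u π) (j : ι) :
    ContDiff ℝ ∞ (energyFlux b ρ u π j) :=
  (ContDiff.sum fun i _ => (h.contDiff_coord i).mul (h.contDiff_stress _ i j)).sub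
    (h.contDiff_pressure.mul (h.contDiff_coord j))

lemma IsStationaryNavierStokes.sum_dirDeriv_energyFlux (h : IsStationaryNavierStokes b ρ u π)
    (x : E) :
    ∑ j, dirDeriv (b j) (energyFlux b ρ u π j) x =
      ∑ i, ∑ j, dirDeriv (b j) (fun y => u y i) x ^ 2 := by
  have hu := h.contDiff_coord
  have hS := h.contDiff_stress (1 / 2)
  have hflux : ∀ j, dirDeriv (b j) (energyFlux b ρ u π j) x =
      ∑ i, (dirDeriv (b j) (fun y => u y i) x ^ 2 -
        u x i * ((1 - 1 / 2) * (ρ x * (u x j * dirDeriv (b j) (fun y => u y i) x))) +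
        u x i * dirDeriv (b j) (stress b (1 / 2) ρ u i j) x) -
      (u x j * dirDeriv (b j) π x + π x * dirDeriv (b j) (fun y => u y j) x) := fun j => by
    unfold energyFlux
    rw [dirDeriv_sub (.sum fun i _ => (hu i).mul (hS i j)) (h.contDiff_pressure.mul (hu j)),
      dirDeriv_sum _ fun i => (hu i).mul (hS i j), dirDeriv_mul h.contDiff_pressure (hu j)]
    simp only [dirDeriv_mul (hu _) (hS _ j)]
    rw [mul_comm (u x j)]
    congr 1
    refine Finset.sum_congr rfl fun i _ => ?_
    rw [stress]
    ring
  simp only [hflux, Finset.sum_sub_distrib, Finset.sum_add_distrib]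
  rw [Finset.sum_comm (f := fun j i => u x i * dirDeriv (b j) (stress b (1 / 2) ρ u i j) x),
    Finset.sum_comm (f := fun j i => dirDeriv (b j) (fun y => u y i) x ^ 2),
    Finset.sum_comm (f := fun j i =>
      u x i * ((1 - 1 / 2) * (ρ x * (u x j * dirDeriv (b j) (fun y => u y i) x))))]
  simp only [← Finset.mul_sum, h.sum_dirDeriv_stress, h.div_velocity, mul_add,
    Finset.sum_add_distrib, mul_zero]
  abel

lemma dirDeriv_const_mul_comp_smul {w : E → ℝ} (hw : ContDiff ℝ ∞ w) (c R : ℝ) (v : E) :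
    dirDeriv v (fun y => c * w (R • y)) = fun y => c * R * dirDeriv v w (R • y) := by
  have hcomp := dirDeriv_comp_homothety hw v 0 R
  simp only [zero_add, smul_eq_mul] at hcomp
  have hwR : ContDiff ℝ ∞ fun y => w (R • y) := hw.comp (contDiff_const_smul R)
  rw [dirDeriv_const_mul hwR, hcomp]
  simp only [mul_assoc]

lemma IsStationaryNavierStokes.rescale (h : IsStationaryNavierStokes b ρ u π) (R : ℝ) :
    IsStationaryNavierStokes b (fun x => ρ (R • x)) (fun x => R • u (R • x))
      (fun x => R ^ 2 * π (R • x)) := by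
  have hu := h.contDiff_coord
  have hρu : ∀ i, ContDiff ℝ ∞ fun y => ρ y * u y i := fun i => h.contDiff_density.mul (hu i)
  constructor
  case contDiff_density => exact h.contDiff_density.comp (contDiff_const_smul R)
  case contDiff_velocity =>
    exact (contDiff_const_smul R).comp (h.contDiff_velocity.comp (contDiff_const_smul R))
  case contDiff_pressure =>
    exact contDiff_const.mul (h.contDiff_pressure.comp (contDiff_const_smul R))
  case momentum =>
    intro x i
    simp only [PiLp.smul_apply, smul_eq_mul, dirDeriv_const_mul_comp_smul (hu _),
      dirDeriv_const_mul_comp_smul (contDiff_dirDeriv (hu _) _),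
      dirDeriv_const_mul_comp_smul h.contDiff_pressure, ← Finset.mul_sum, mul_mul_mul_comm R]
    linear_combination R ^ 3 * h.momentum (R • x) i
  case div_velocity =>
    intro x
    simp only [PiLp.smul_apply, smul_eq_mul, dirDeriv_const_mul_comp_smul (hu _),
      ← Finset.mul_sum, h.div_velocity, mul_zero]
  case div_density_mul_velocity =>
    intro x
    simp only [PiLp.smul_apply, smul_eq_mul, mul_left_comm _ R,
      dirDeriv_const_mul_comp_smul (hρu _), ← Finset.mul_sum, h.div_density_mul_velocity, mul_zero]

lemma IsStationaryNavierStokes.isTestFunction_sum_dirDeriv_mul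
    (h : IsStationaryNavierStokes b ρ u π) (hφ : IsTestFunction φ) :
    IsTestFunction fun x => ∑ j, dirDeriv (b j) φ x * u x j :=
  .sum fun j _ => (hφ.dirDeriv _).mul_right (h.contDiff_coord j)

lemma IsStationaryNavierStokes.isTestFunction_sum_dirDeriv_mul_stress
    (h : IsStationaryNavierStokes b ρ u π) (hφ : IsTestFunction φ) (c : ℝ) :
    IsTestFunction fun x => ∑ j, dirDeriv (b j) φ x * ∑ i, u x i * stress b c ρ u i j x :=
  .sum fun j _ => (hφ.dirDeriv _).mul_right
    (.sum fun i _ => (h.contDiff_coord i).mul (h.contDiff_stress c i j))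

variable [FiniteDimensional ℝ E] [MeasurableSpace E] [BorelSpace E]

lemma IsTestFunction.integral_mul_sum_dirDeriv (hφ : IsTestFunction φ) {V : ι → E → ℝ}
    (hV : ∀ j, ContDiff ℝ ∞ (V j)) (v : ι → E) :
    ∫ x, φ x * ∑ j, dirDeriv (v j) (V j) x = -∫ x, ∑ j, dirDeriv (v j) φ x * V j x := by
  simp only [Finset.mul_sum]
  rw [integral_finsetSum _ fun j _ => (hφ.mul_right (contDiff_dirDeriv (hV j) _)).integrable,
    integral_finsetSum _ fun j _ => ((hφ.dirDeriv _).mul_right (hV j)).integrable,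
    ← Finset.sum_neg_distrib]
  refine Finset.sum_congr rfl fun j _ => ?_
  simpa only [smul_eq_mul] using hφ.integral_smul_dirDeriv (hV j) (v j)

lemma IsStationaryNavierStokes.integral_sum_dirDeriv_mul (h : IsStationaryNavierStokes b ρ u π)
    (hφ : IsTestFunction φ) : ∫ x, ∑ j, dirDeriv (b j) φ x * u x j = 0 := by
  rw [← neg_eq_zero, ← hφ.integral_mul_sum_dirDeriv h.contDiff_coord]
  simp only [h.div_velocity, mul_zero, integral_zero]

lemma IsStationaryNavierStokes.integral_mul_sum_sq (h : IsStationaryNavierStokes b ρ u π)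
    (hφ : IsTestFunction φ) :
    ∫ x, φ x * ∑ i, ∑ j, dirDeriv (b j) (fun y => u y i) x ^ 2 =
      (∫ x, (∑ j, dirDeriv (b j) φ x * u x j) * π x) -
        ∫ x, ∑ j, dirDeriv (b j) φ x * ∑ i, u x i * stress b (1 / 2) ρ u i j x := by
  simp only [← h.sum_dirDeriv_energyFlux]
  rw [hφ.integral_mul_sum_dirDeriv h.contDiff_energyFlux,
    ← integral_sub
    ((h.isTestFunction_sum_dirDeriv_mul hφ).mul_right h.contDiff_pressure).integrable
    (h.isTestFunction_sum_dirDeriv_mul_stress hφ _).integrable, ← integral_neg]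
  refine integral_congr_ae (ae_of_all _ fun x => ?_)
  simp only [energyFlux, mul_sub, Finset.sum_sub_distrib, Finset.sum_mul]
  rw [neg_sub]
  congr 1
  exact Finset.sum_congr rfl fun j _ => by ring

end NavierStokes

section Cutoff

variable {E : Type*} [NormedAddCommGroup E] [InnerProductSpace ℝ E]

lemma support_dirDeriv_subset_closedShell {φ : E → ℝ} {r s : ℝ} (hφ1 : ∀ y, ‖y‖ ≤ r → φ y = 1)
    (hφs : tsupport φ ⊆ Metric.ball 0 s) (v : E) :
    Function.support (dirDeriv v φ) ⊆ closedShell E r s := by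
  intro x hx
  refine ⟨le_of_not_gt fun hlt => hx ?_, (mem_ball_zero_iff.mp (hφs ?_)).le⟩
  · exact dirDeriv_eq_zero_of_eq_const (fun y hy => hφ1 y (le_of_lt hy)) v x hlt
  · exact tsupport_fderiv_apply_subset ℝ v (subset_tsupport _ hx)

lemma exists_isTestFunction_eq_one_openShell [FiniteDimensional ℝ E] {r₁ r₂ s₂ s₁ : ℝ}
    (hr₁ : 0 < r₁) (hr : r₁ < r₂) (hs₂ : 0 < s₂) (hs : s₂ < s₁) :
    ∃ χ : E → ℝ, IsTestFunction χ ∧ (∀ x, |χ x| ≤ 1) ∧ (∀ x ∈ openShell E r₂ s₂, χ x = 1) ∧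
      Function.support χ ⊆ openShell E r₁ s₁ := by
  obtain ⟨κ, hκ, hκ01, hκ1, hκs⟩ := exists_isTestFunction_eq_one (E := E) hs₂ hs
  obtain ⟨η, hη, hη01, hη1, hηs⟩ := exists_isTestFunction_eq_one (E := E) hr₁ hr
  refine ⟨fun x => κ x * (1 - η x), hκ.mul_right (contDiff_const.sub hη.contDiff), fun x => ?_,
    fun x hx => ?_, fun x hx => ⟨lt_of_not_ge fun hle => hx ?_, ?_⟩⟩
  · rw [abs_of_nonneg (mul_nonneg (hκ01 x).1 (sub_nonneg.mpr (hη01 x).2))]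
    exact mul_le_one₀ (hκ01 x).2 (sub_nonneg.mpr (hη01 x).2) (sub_le_self _ (hη01 x).1)
  · have hη0 : η x = 0 := image_eq_zero_of_notMem_tsupport fun hmem =>
      hx.1.not_gt (mem_ball_zero_iff.mp (hηs hmem))
    simp only [hκ1 x hx.2.le, hη0, sub_zero, one_mul]
  · simp only [hη1 x hle, sub_self, mul_zero]
  · exact mem_ball_zero_iff.mp (hκs (subset_tsupport _ (left_ne_zero_of_mul hx)))

end Cutoff

section StressBound

variable {E ι : Type*} [NormedAddCommGroup E] [InnerProductSpace ℝ E] [Fintype ι]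
  {b : OrthonormalBasis ι ℝ E} {ρ π : E → ℝ} {u : E → EuclideanSpace ℝ ι}

lemma dirDeriv_coord (hu : ContDiff ℝ ∞ u) (v : E) (i : ι) (x : E) :
    dirDeriv v (fun y => u y i) x = fderiv ℝ u x v i := by
  have hcoord := ((EuclideanSpace.proj (𝕜 := ℝ) i).hasFDerivAt (x := u x)).comp x
    (hu.differentiable (by simp) x).hasFDerivAt
  exact congrArg (· v) hcoord.fderiv

lemma abs_dirDeriv_coord_le (hu : ContDiff ℝ ∞ u) (i j : ι) (x : E) :
    |dirDeriv (b j) (fun y => u y i) x| ≤ ‖fderiv ℝ u x‖ := by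
  rw [dirDeriv_coord hu, ← Real.norm_eq_abs]
  refine (PiLp.norm_apply_le _ i).trans ((ContinuousLinearMap.le_opNorm _ _).trans_eq ?_)
  rw [b.norm_eq_one, mul_one]

lemma norm_fderiv_sq_le_sum_sq (hu : ContDiff ℝ ∞ u) (b : OrthonormalBasis ι ℝ E) (x : E) :
    ‖fderiv ℝ u x‖ ^ 2 ≤ ∑ i, ∑ j, dirDeriv (b j) (fun y => u y i) x ^ 2 := by
  have hrow : ∀ i, ∑ j, dirDeriv (b j) (fun y => u y i) x ^ 2 =
      ‖(EuclideanSpace.proj (𝕜 := ℝ) i).comp (fderiv ℝ u x)‖ ^ 2 := fun i => by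
    rw [b.norm_dual]
    exact Finset.sum_congr rfl fun j _ => by rw [dirDeriv_coord hu]; rfl
  simp only [hrow]
  refine (Real.le_sqrt (norm_nonneg _) (by positivity)).mp
    (ContinuousLinearMap.opNorm_le_bound _ (Real.sqrt_nonneg _) fun v => ?_)
  rw [EuclideanSpace.norm_eq, ← Real.sqrt_sq (norm_nonneg v), ← Real.sqrt_mul (by positivity),
    Finset.sum_mul]
  refine Real.sqrt_le_sqrt (Finset.sum_le_sum fun i _ => ?_)
  rw [← mul_pow]
  exact pow_le_pow_left₀ (norm_nonneg _)
    (((EuclideanSpace.proj (𝕜 := ℝ) i).comp (fderiv ℝ u x)).le_opNorm v) 2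

/-- The density `‖∇u‖ + ‖u‖²`, which dominates the stress when the density is bounded. -/
noncomputable def stressBound (u : E → EuclideanSpace ℝ ι) (x : E) : ℝ :=
  ‖fderiv ℝ u x‖ + ‖u x‖ ^ 2

lemma stressBound_nonneg (u : E → EuclideanSpace ℝ ι) (x : E) : 0 ≤ stressBound u x := by
  unfold stressBound; positivity

lemma continuous_stressBound (hu : ContDiff ℝ ∞ u) : Continuous (stressBound u) :=
  (hu.continuous_fderiv (by simp)).norm.add (hu.continuous.norm.pow 2)

lemma abs_stress_le (hu : ContDiff ℝ ∞ u) {c M : ℝ} (hc : |c| ≤ 1) {x : E} (hM : |ρ x| ≤ M)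
    (i j : ι) : |stress b c ρ u i j x| ≤ (1 + M) * stressBound u x := by
  have hM0 : 0 ≤ M := (abs_nonneg _).trans hM
  have hui : ∀ k, |u x k| ≤ ‖u x‖ := fun k => PiLp.norm_apply_le (u x) k
  calc |stress b c ρ u i j x|
      ≤ |dirDeriv (b j) (fun y => u y i) x| + |c| * (|u x i| * (|ρ x| * |u x j|)) := by
        simpa only [stress, abs_mul] using abs_sub (dirDeriv (b j) (fun y => u y i) x)
            (c * (u x i * (ρ x * u x j)))
    _ ≤ ‖fderiv ℝ u x‖ + 1 * (‖u x‖ * (M * ‖u x‖)) := by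
        gcongr
        exacts [abs_dirDeriv_coord_le hu i j x, hui i, hui j]
    _ ≤ (1 + M) * stressBound u x := by
        unfold stressBound
        nlinarith [mul_nonneg hM0 (norm_nonneg (fderiv ℝ u x)), sq_nonneg ‖u x‖]

end StressBound

section Integration

lemma integral_le_setIntegral_of_support_subset {α : Type*} [MeasurableSpace α] {μ : Measure α}
    {A : Set α} {f F : α → ℝ} (hA : MeasurableSet A) (hfA : Function.support f ⊆ A)
    (hf : Integrable f μ) (hF : IntegrableOn F A μ) (hle : ∀ x ∈ A, f x ≤ F x) :
    ∫ x, f x ∂μ ≤ ∫ x in A, F x ∂μ := by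
  rw [← setIntegral_eq_integral_of_forall_compl_eq_zero
    fun x hx => Function.notMem_support.mp fun h => hx (hfA h)]
  exact setIntegral_mono_on hf.integrableOn hF hA hle

lemma memLp_restrict_of_isBounded {X V : Type*} [PseudoMetricSpace X] [ProperSpace X]
    [MeasurableSpace X] [BorelSpace X] {μ : Measure X} [IsFiniteMeasureOnCompacts μ]
    [NormedAddCommGroup V] {A : Set X} {f : X → V} (hf : Continuous f)
    (hA : Bornology.IsBounded A) (p : ℝ≥0∞) :
    MemLp f p (μ.restrict A) := by
  have hcpt := hA.isCompact_closure
  have : IsFiniteMeasure (μ.restrict (closure A)) := ⟨by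
    rw [Measure.restrict_apply_univ]; exact hcpt.measure_lt_top⟩
  obtain ⟨C, hC⟩ := hcpt.exists_bound_of_continuousOn hf.continuousOn
  exact (MemLp.of_bound hf.aestronglyMeasurable C
    ((ae_restrict_mem isClosed_closure.measurableSet).mono hC)).mono_measure
    (Measure.restrict_mono subset_closure le_rfl)

end Integration

section UnitScale

variable {E ι : Type*} [NormedAddCommGroup E] [InnerProductSpace ℝ E] [FiniteDimensional ℝ E]
  [MeasurableSpace E] [BorelSpace E] [Fintype ι] {b : OrthonormalBasis ι ℝ E} {ρ π φ χ : E → ℝ}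
  {u : E → EuclideanSpace ℝ ι} {A : Set E} {L M c : ℝ}

lemma integrableOn_of_isBounded {f : E → ℝ} (hf : Continuous f) (hA : Bornology.IsBounded A) :
    IntegrableOn f A := memLp_one_iff_integrable.mp (memLp_restrict_of_isBounded hf hA 1)

lemma IsStationaryNavierStokes.integral_abs_sum_dirDeriv_mul_pow_three_le
    (h : IsStationaryNavierStokes b ρ u π) (hφ : IsTestFunction φ)
    (hφA : ∀ j, Function.support (dirDeriv (b j) φ) ⊆ A) (hL : ∀ j x, |dirDeriv (b j) φ x| ≤ L)
    (hA : MeasurableSet A) (hAb : Bornology.IsBounded A) :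
    ∫ x, |∑ j, dirDeriv (b j) φ x * u x j| ^ 3 ≤
      (Fintype.card ι * L) ^ 3 * ∫ x in A, ‖u x‖ ^ 3 := by
  have hu : Continuous fun x => ‖u x‖ ^ 3 := h.contDiff_velocity.continuous.norm.pow 3
  rw [← integral_const_mul]
  refine integral_le_setIntegral_of_support_subset hA (fun x hx => ?_)
    (h.isTestFunction_sum_dirDeriv_mul hφ).integrable_abs_pow_three
    ((integrableOn_of_isBounded hu hAb).const_mul _) fun x _ => ?_
  · obtain ⟨j, -, hj⟩ := Finset.exists_ne_zero_of_sum_ne_zero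
      (abs_ne_zero.mp (pow_ne_zero_iff three_ne_zero |>.mp hx))
    exact hφA j (left_ne_zero_of_mul hj)
  · rw [← mul_pow]
    refine pow_le_pow_left₀ (abs_nonneg _) ((Finset.abs_sum_le_sum_abs _ _).trans ?_) 3
    calc ∑ j, |dirDeriv (b j) φ x * u x j| ≤ ∑ _j : ι, L * ‖u x‖ := by
          refine Finset.sum_le_sum fun j _ => ?_
          rw [abs_mul]
          exact mul_le_mul (hL j x) (PiLp.norm_apply_le (u x) j) (abs_nonneg _)
            ((abs_nonneg _).trans (hL j x))
      _ = Fintype.card ι * L * ‖u x‖ := by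
          rw [Finset.sum_const, Finset.card_univ, nsmul_eq_mul, mul_assoc]

lemma IsStationaryNavierStokes.integral_abs_mul_stress_rpow_le
    (h : IsStationaryNavierStokes b ρ u π) (hM : ∀ x, |ρ x| ≤ M) (hχ : IsTestFunction χ)
    (hχA : Function.support χ ⊆ A) (hχ1 : ∀ x, |χ x| ≤ 1) (hA : MeasurableSet A)
    (hAb : Bornology.IsBounded A) (hc : |c| ≤ 1) (i j : ι) :
    ∫ x, |χ x * stress b c ρ u i j x| ^ (3 / 2 : ℝ) ≤
      (1 + M) ^ (3 / 2 : ℝ) * ∫ x in A, stressBound u x ^ (3 / 2 : ℝ) := by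
  have hM0 : 0 ≤ M := (abs_nonneg _).trans (hM 0)
  rw [← integral_const_mul]
  refine integral_le_setIntegral_of_support_subset hA (fun x hx => hχA fun hχ0 => hx ?_)
    (hχ.mul_right (h.contDiff_stress c i j)).integrable_abs_rpow
    ((integrableOn_of_isBounded ((continuous_stressBound h.contDiff_velocity).rpow_const
      fun _ => .inr (by norm_num)) hAb).const_mul _) fun x _ => ?_
  · simp only [hχ0, zero_mul, abs_zero]
    exact Real.zero_rpow (by norm_num)
  · rw [← Real.mul_rpow (by positivity) (stressBound_nonneg u x)]
    refine Real.rpow_le_rpow (abs_nonneg _) ?_ (by norm_num)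
    rw [abs_mul]
    exact (mul_le_of_le_one_left (abs_nonneg _) (hχ1 x)).trans
      (abs_stress_le h.contDiff_velocity hc (hM x) i j)

lemma setIntegral_norm_mul_stressBound_le (hu : ContDiff ℝ ∞ u) (hAb : Bornology.IsBounded A) :
    ∫ x in A, ‖u x‖ * stressBound u x ≤ (∫ x in A, ‖u x‖ ^ 3) ^ (1 / 3 : ℝ) *
      (∫ x in A, stressBound u x ^ (3 / 2 : ℝ)) ^ (2 / 3 : ℝ) := by
  have hexp : (3 : ℝ).HolderConjugate (3 / 2) := by
    rw [Real.holderConjugate_iff]; norm_num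
  have hHolder := integral_mul_le_Lp_mul_Lq_of_nonneg hexp
    (ae_of_all _ fun x => norm_nonneg (u x)) (ae_of_all _ (stressBound_nonneg u))
    (memLp_restrict_of_isBounded (μ := volume) hu.continuous.norm hAb _)
    (memLp_restrict_of_isBounded (continuous_stressBound hu) hAb _)
  norm_num at hHolder ⊢
  exact hHolder

lemma IsStationaryNavierStokes.abs_integral_sum_dirDeriv_mul_stress_le
    (h : IsStationaryNavierStokes b ρ u π) (hM : ∀ x, |ρ x| ≤ M) (hφ : IsTestFunction φ)
    (hφA : ∀ j, Function.support (dirDeriv (b j) φ) ⊆ A) (hL : ∀ j x, |dirDeriv (b j) φ x| ≤ L)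
    (hA : MeasurableSet A) (hAb : Bornology.IsBounded A) (hc : |c| ≤ 1) :
    |∫ x, ∑ j, dirDeriv (b j) φ x * ∑ i, u x i * stress b c ρ u i j x| ≤
      Fintype.card ι * (Fintype.card ι * (L * (1 + M))) *
        ∫ x in A, ‖u x‖ * stressBound u x := by
  have hu := h.contDiff_velocity
  refine abs_integral_le_integral_abs.trans ?_
  rw [← integral_const_mul]
  refine integral_le_setIntegral_of_support_subset hA (fun x hx => ?_)
    (h.isTestFunction_sum_dirDeriv_mul_stress hφ c).integrable.abs
    ((integrableOn_of_isBounded (hu.continuous.norm.mul (continuous_stressBound hu)) hAb).const_mul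
      _) fun x _ => ?_
  · obtain ⟨j, -, hj⟩ := Finset.exists_ne_zero_of_sum_ne_zero (abs_ne_zero.mp hx)
    exact hφA j (left_ne_zero_of_mul hj)
  · calc |∑ j, dirDeriv (b j) φ x * ∑ i, u x i * stress b c ρ u i j x|
        ≤ ∑ j, |dirDeriv (b j) φ x| * ∑ i, |u x i| * |stress b c ρ u i j x| := by
          refine (Finset.abs_sum_le_sum_abs _ _).trans (Finset.sum_le_sum fun j _ => ?_)
          rw [abs_mul]
          gcongr
          simpa only [abs_mul] using
            Finset.abs_sum_le_sum_abs (fun i => u x i * stress b c ρ u i j x) Finset.univ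
      _ ≤ ∑ _j : ι, L * ∑ _i : ι, ‖u x‖ * ((1 + M) * stressBound u x) := by
          gcongr with j _ i _
          · exact (abs_nonneg _).trans (hL j x)
          · exact hL j x
          · exact PiLp.norm_apply_le (u x) i
          · exact abs_stress_le hu hc (hM x) i j
      _ = _ := by
          simp only [Finset.sum_const, Finset.card_univ, nsmul_eq_mul]
          ring

end UnitScale

section RealEstimate

variable {E ι : Type*} [NormedAddCommGroup E] [InnerProductSpace ℝ E]

/-- The cutoffs of the energy estimate between the spheres of radii `r` and `s`: `φ` multiplies the
energy balance and its gradient lives in `K`, while `χ` localizes the stress and is `1` on the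
neighbourhood `U` of `K`. -/
structure IsCutoffPair (r s : ℝ) (K U : Set E) (φ χ : E → ℝ) : Prop where
  isTestFunction_energy : IsTestFunction φ
  energy_nonneg : ∀ x, 0 ≤ φ x
  energy_eq_one : ∀ x ∈ Metric.ball 0 r, φ x = 1
  support_dirDeriv_subset : ∀ v, Function.support (dirDeriv v φ) ⊆ K
  isCompact : IsCompact K
  isConnected : IsConnected K
  isOpen : IsOpen U
  subset : K ⊆ U
  isTestFunction_stress : IsTestFunction χ
  abs_stress_le_one : ∀ x, |χ x| ≤ 1
  stress_eq_one : ∀ x ∈ U, χ x = 1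
  support_stress_subset : Function.support χ ⊆ openShell E r s

variable {r s M : ℝ} {ρ π φ χ : E → ℝ} {K U : Set E}

lemma IsCutoffPair.subset_openShell (hc : IsCutoffPair r s K U φ χ) : U ⊆ openShell E r s :=
  fun x hx => hc.support_stress_subset (by simp [hc.stress_eq_one x hx])

lemma IsTestFunction.exists_forall_abs_dirDeriv_le [Finite ι] (hφ : IsTestFunction φ) (v : ι → E) :
    ∃ L, 0 ≤ L ∧ ∀ j x, |dirDeriv (v j) φ x| ≤ L := by
  choose B hB using fun j => (hφ.dirDeriv (v j)).exists_norm_le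
  obtain ⟨L, hL⟩ := Finite.exists_le B
  exact ⟨|L|, abs_nonneg L, fun j x => (hB j x).trans ((hL j).trans (le_abs_self L))⟩

variable [FiniteDimensional ℝ E]

lemma exists_isCutoffPair (hE : 1 < Module.rank ℝ E) (hr : 0 < r) (hrs : r < s) :
    ∃ K U φ χ, IsCutoffPair (E := E) r s K U φ χ := by
  obtain ⟨d, hd, hds⟩ : ∃ d, 0 < d ∧ r + 5 * d = s := ⟨(s - r) / 5, by linarith, by ring⟩
  obtain ⟨φ, hφ, hφ01, hφ1, hφs⟩ := exists_isTestFunction_eq_one (E := E) (r := r + 2 * d)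
    (δ := r + 3 * d) (by linarith) (by linarith)
  obtain ⟨χ, hχ, hχ1, hχU, hχA⟩ := exists_isTestFunction_eq_one_openShell (E := E) (r₂ := r + d)
    (s₂ := r + 4 * d) hr (by linarith) (by linarith) (by linarith : _ < s)
  refine ⟨closedShell E (r + 2 * d) (r + 3 * d), openShell E (r + d) (r + 4 * d), φ, χ, hφ,
    fun x => (hφ01 x).1, fun x hx => hφ1 x ?_, support_dirDeriv_subset_closedShell hφ1 hφs,
    isCompact_closedShell _ _, isConnected_closedShell hE (by linarith) (by linarith),
    isOpen_openShell _ _, fun x hx => ⟨?_, ?_⟩, hχ, hχ1, hχU, hχA⟩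
  · linarith [mem_ball_zero_iff.mp hx]
  · linarith [hx.1]
  · linarith [hx.2]

variable [MeasurableSpace E] [BorelSpace E] [Fintype ι] {b : OrthonormalBasis ι ℝ E}
  {u : E → EuclideanSpace ℝ ι}

lemma IsStationaryNavierStokes.isLocalPressure (h : IsStationaryNavierStokes b ρ u π)
    (hc : IsCutoffPair r s K U φ χ) :
    IsLocalPressure b K U (openShell E r s) π (fun x => ∑ j, dirDeriv (b j) φ x * u x j)
      (fun i j x => χ x * stress b 1 ρ u i j x) where
  contDiff_pressure := h.contDiff_pressure
  isTestFunction_weight := h.isTestFunction_sum_dirDeriv_mul hc.isTestFunction_energy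
  support_weight_subset x hx := by
    obtain ⟨j, -, hj⟩ := Finset.exists_ne_zero_of_sum_ne_zero hx
    exact hc.support_dirDeriv_subset _ (left_ne_zero_of_mul hj)
  integral_weight := h.integral_sum_dirDeriv_mul hc.isTestFunction_energy
  isTestFunction_stress i j := hc.isTestFunction_stress.mul_right (h.contDiff_stress 1 i j)
  support_stress_subset i j x hx := hc.support_stress_subset (left_ne_zero_of_mul hx)
  dirDeriv_pressure x hx i := by
    have hlocal : ∀ j, (fun x => χ x * stress b 1 ρ u i j x) =ᶠ[𝓝 x] stress b 1 ρ u i j :=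
      fun j => by
        filter_upwards [hc.isOpen.mem_nhds hx] with y hy
        rw [hc.stress_eq_one y hy, one_mul]
    simp only [dirDeriv, (hlocal _).fderiv_eq]
    simpa [dirDeriv] using (h.sum_dirDeriv_stress 1 i x).symm

lemma IsStationaryNavierStokes.setIntegral_norm_fderiv_sq_le
    (h : IsStationaryNavierStokes b ρ u π) (hc : IsCutoffPair r s K U φ χ) :
    ∫ x in Metric.ball 0 r, ‖fderiv ℝ u x‖ ^ 2 ≤
      ∫ x, φ x * ∑ i, ∑ j, dirDeriv (b j) (fun y => u y i) x ^ 2 := by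
  have hu := h.contDiff_velocity
  have hφ := hc.isTestFunction_energy
  have henergy : IsTestFunction fun x =>
      φ x * ∑ i, ∑ j, dirDeriv (b j) (fun y => u y i) x ^ 2 :=
    hφ.mul_right (.sum fun i _ => .sum fun j _ => (contDiff_dirDeriv (h.contDiff_coord i) _).pow 2)
  have hcut : Integrable fun x => φ x * ‖fderiv ℝ u x‖ ^ 2 :=
    (hφ.contDiff.continuous.mul ((hu.continuous_fderiv (by simp)).norm.pow 2)
      ).integrable_of_hasCompactSupport hφ.hasCompactSupport.mul_right
  calc ∫ x in Metric.ball 0 r, ‖fderiv ℝ u x‖ ^ 2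
      = ∫ x in Metric.ball 0 r, φ x * ‖fderiv ℝ u x‖ ^ 2 :=
        setIntegral_congr_fun measurableSet_ball fun x hx => by
          simp only [hc.energy_eq_one x hx, one_mul]
    _ ≤ ∫ x, φ x * ‖fderiv ℝ u x‖ ^ 2 := setIntegral_le_integral hcut
        (ae_of_all _ fun x => mul_nonneg (hc.energy_nonneg x) (by positivity))
    _ ≤ _ := integral_mono hcut henergy.integrable fun x =>
        mul_le_mul_of_nonneg_left (norm_fderiv_sq_le_sum_sq hu b x) (hc.energy_nonneg x)

lemma IsCutoffPair.exists_abs_integral_mul_pressure_le [Nonempty ι] (hc : IsCutoffPair r s K U φ χ)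
    (b : OrthonormalBasis ι ℝ E) (hM0 : 0 ≤ M) :
    ∃ C, 0 ≤ C ∧ ∀ ρ u π, IsStationaryNavierStokes b ρ u π → (∀ x, |ρ x| ≤ M) →
      |∫ x, (∑ j, dirDeriv (b j) φ x * u x j) * π x| ≤
        C * ((∫ x in openShell E r s, ‖u x‖ ^ 3) ^ (1 / 3 : ℝ) *
          (∫ x in openShell E r s, stressBound u x ^ (3 / 2 : ℝ)) ^ (2 / 3 : ℝ)) := by
  have hA : MeasurableSet (openShell E r s) := (isOpen_openShell r s).measurableSet
  have hAb := isBounded_openShell (E := E) r s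
  have hKA := hc.subset.trans hc.subset_openShell
  obtain ⟨L, hL0, hL⟩ := hc.isTestFunction_energy.exists_forall_abs_dirDeriv_le b
  obtain ⟨C, hC0, hC⟩ := exists_abs_integral_mul_pressure_le_mul_rpow b hc.isCompact hc.isConnected
    hAb.measure_lt_top.ne hKA hc.isOpen hc.subset
  set n : ℝ := (Fintype.card ι : ℝ)
  set D := (1 + M) ^ (3 / 2 : ℝ)
  refine ⟨C * (n * L * (n ^ 2 * D) ^ (2 / 3 : ℝ)), by positivity, fun ρ u π h hM => ?_⟩
  set Y := ∫ x in openShell E r s, ‖u x‖ ^ 3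
  set S := ∫ x in openShell E r s, stressBound u x ^ (3 / 2 : ℝ)
  have hS0 : 0 ≤ S := integral_nonneg fun x => Real.rpow_nonneg (stressBound_nonneg u x) _
  have hweight : ∫ x, |∑ j, dirDeriv (b j) φ x * u x j| ^ 3 ≤ (n * L) ^ 3 * Y :=
    h.integral_abs_sum_dirDeriv_mul_pow_three_le hc.isTestFunction_energy
      (fun j => (hc.support_dirDeriv_subset _).trans hKA) hL hA hAb
  have hstress : ∑ i, ∑ j, ∫ x, |χ x * stress b 1 ρ u i j x| ^ (3 / 2 : ℝ) ≤ n ^ 2 * D * S := by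
    refine (Finset.sum_le_sum fun i _ => Finset.sum_le_sum fun j _ =>
      h.integral_abs_mul_stress_rpow_le hM hc.isTestFunction_stress hc.support_stress_subset
        hc.abs_stress_le_one hA hAb abs_one.le i j).trans_eq ?_
    simp only [Finset.sum_const, Finset.card_univ, nsmul_eq_mul, n, D, S]
    ring
  have hroot : ((n * L) ^ 3 * Y) ^ (1 / 3 : ℝ) = n * L * Y ^ (1 / 3 : ℝ) := by
    rw [Real.mul_rpow (by positivity) (by positivity), ← Real.rpow_natCast_mul (by positivity)]
    norm_num
  calc _ ≤ _ := hC _ _ _ (h.isLocalPressure hc)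
    _ ≤ C * (((n * L) ^ 3 * Y) ^ (1 / 3 : ℝ) * (n ^ 2 * D * S) ^ (2 / 3 : ℝ)) := by
        gcongr
    _ = _ := by
        rw [hroot, Real.mul_rpow (by positivity) hS0]
        ring

lemma IsCutoffPair.exists_abs_integral_mul_stress_le (hc : IsCutoffPair r s K U φ χ)
    (b : OrthonormalBasis ι ℝ E) (hM0 : 0 ≤ M) :
    ∃ C, 0 ≤ C ∧ ∀ ρ u π, IsStationaryNavierStokes b ρ u π → (∀ x, |ρ x| ≤ M) →
      |∫ x, ∑ j, dirDeriv (b j) φ x * ∑ i, u x i * stress b (1 / 2) ρ u i j x| ≤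
        C * ((∫ x in openShell E r s, ‖u x‖ ^ 3) ^ (1 / 3 : ℝ) *
          (∫ x in openShell E r s, stressBound u x ^ (3 / 2 : ℝ)) ^ (2 / 3 : ℝ)) := by
  have hAb := isBounded_openShell (E := E) r s
  obtain ⟨L, hL0, hL⟩ := hc.isTestFunction_energy.exists_forall_abs_dirDeriv_le b
  refine ⟨Fintype.card ι * (Fintype.card ι * (L * (1 + M))), by positivity, fun ρ u π h hM =>
    (h.abs_integral_sum_dirDeriv_mul_stress_le hM hc.isTestFunction_energy
      (fun j => (hc.support_dirDeriv_subset _).trans (hc.subset.trans hc.subset_openShell)) hL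
      (isOpen_openShell r s).measurableSet hAb (by norm_num [abs_of_pos])).trans ?_⟩
  exact mul_le_mul_of_nonneg_left
    (setIntegral_norm_mul_stressBound_le h.contDiff_velocity hAb) (by positivity)

lemma exists_setIntegral_norm_fderiv_sq_le (b : OrthonormalBasis ι ℝ E)
    (hE : 1 < Module.rank ℝ E) (hM0 : 0 ≤ M) (hr : 0 < r) (hrs : r < s) :
    ∃ C, 0 ≤ C ∧ ∀ ρ u π, IsStationaryNavierStokes b ρ u π → (∀ x, |ρ x| ≤ M) →
      ∫ x in Metric.ball 0 r, ‖fderiv ℝ u x‖ ^ 2 ≤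
        C * ((∫ x in openShell E r s, ‖u x‖ ^ 3) ^ (1 / 3 : ℝ) *
          (∫ x in openShell E r s, stressBound u x ^ (3 / 2 : ℝ)) ^ (2 / 3 : ℝ)) := by
  have : Nontrivial E := rank_pos_iff_nontrivial.mp (zero_lt_one.trans hE)
  have : Nonempty ι := b.toBasis.index_nonempty
  obtain ⟨K, U, φ, χ, hc⟩ := exists_isCutoffPair hE hr hrs
  obtain ⟨C₁, hC₁0, hC₁⟩ := hc.exists_abs_integral_mul_pressure_le b hM0
  obtain ⟨C₂, hC₂0, hC₂⟩ := hc.exists_abs_integral_mul_stress_le b hM0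
  refine ⟨C₁ + C₂, by positivity, fun ρ u π h hM => (h.setIntegral_norm_fderiv_sq_le hc).trans ?_⟩
  rw [h.integral_mul_sum_sq hc.isTestFunction_energy, add_mul]
  exact (le_abs_self _).trans
    ((abs_sub _ _).trans (add_le_add (hC₁ ρ u π h hM) (hC₂ ρ u π h hM)))

end RealEstimate

section Exponents

lemma eLpNorm_ofReal_eq_lintegral {α V : Type*} [MeasurableSpace α] [NormedAddCommGroup V]
    {μ : Measure α} {q : ℝ} (hq : 0 < q) (f : α → V) :
    eLpNorm f (ENNReal.ofReal q) μ = (∫⁻ x, ENNReal.ofReal (‖f x‖ ^ q) ∂μ) ^ (1 / q) := by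
  rw [eLpNorm_eq_lintegral_rpow_enorm_toReal (ENNReal.ofReal_pos.mpr hq).ne' ENNReal.ofReal_ne_top,
    ENNReal.toReal_ofReal hq.le]
  simp only [← ENNReal.ofReal_rpow_of_nonneg (norm_nonneg _) hq.le, ofReal_norm]

variable {E ι : Type*} [NormedAddCommGroup E] [InnerProductSpace ℝ E] [MeasurableSpace E]
  [BorelSpace E] [Fintype ι] {u : E → EuclideanSpace ℝ ι} {A : Set E} {p q M r s : ℝ}

lemma eLpNorm_stressBound_le (hu : ContDiff ℝ ∞ u) {μ : Measure E} (hq : 1 ≤ q) :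
    eLpNorm (stressBound u) (ENNReal.ofReal q) μ ≤
      eLpNorm (fderiv ℝ u) (ENNReal.ofReal q) μ +
        eLpNorm u (ENNReal.ofReal (2 * q)) μ ^ (2 : ℝ) := by
  have hsq : eLpNorm (fun x => ‖u x‖ ^ 2) (ENNReal.ofReal q) μ =
      eLpNorm u (ENNReal.ofReal (2 * q)) μ ^ (2 : ℝ) := by
    rw [mul_comm, ENNReal.ofReal_mul (by positivity), ← eLpNorm_norm_rpow u two_pos]
    simp only [Real.rpow_two]
  rw [← hsq, ← eLpNorm_norm (fderiv ℝ u)]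
  exact eLpNorm_add_le (hu.continuous_fderiv (by simp)).norm.aestronglyMeasurable
    (hu.continuous.norm.pow 2).aestronglyMeasurable (ENNReal.one_le_ofReal.mpr hq)

lemma eLpNorm_stressBound_le_mul_lintegral (hu : ContDiff ℝ ∞ u) {μ : Measure E} (hp : 2 ≤ p) :
    eLpNorm (stressBound u) (ENNReal.ofReal (p / 2)) μ ≤
      2 * ((∫⁻ x, ENNReal.ofReal (‖fderiv ℝ u x‖ ^ (p / 2)) ∂μ) +
        ∫⁻ x, ENNReal.ofReal (‖u x‖ ^ p) ∂μ) ^ (2 / p) := by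
  refine (eLpNorm_stressBound_le hu (by linarith)).trans ?_
  rw [mul_div_cancel₀ p two_ne_zero, eLpNorm_ofReal_eq_lintegral (by linarith),
    eLpNorm_ofReal_eq_lintegral (by linarith), ← ENNReal.rpow_mul, one_div_div, one_div_mul_eq_div,
    two_mul]
  gcongr
  · exact le_self_add
  · exact le_add_self

variable [FiniteDimensional ℝ E]

lemma ofReal_setIntegral_norm_rpow_eq_eLpNorm {V : Type*} [NormedAddCommGroup V] {f : E → V}
    (hf : Continuous f) (hA : Bornology.IsBounded A) (hq : 0 < q) :
    ENNReal.ofReal ((∫ x in A, ‖f x‖ ^ q) ^ (1 / q)) =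
      eLpNorm f (ENNReal.ofReal q) (volume.restrict A) := by
  rw [(memLp_restrict_of_isBounded hf hA _).eLpNorm_eq_integral_rpow_norm
    (ENNReal.ofReal_pos.mpr hq).ne' ENNReal.ofReal_ne_top, ENNReal.toReal_ofReal hq.le, one_div]

lemma exists_setLIntegral_norm_fderiv_sq_le_eLpNorm (b : OrthonormalBasis ι ℝ E)
    (hE : 1 < Module.rank ℝ E) (hM0 : 0 ≤ M) (hr : 0 < r) (hrs : r < s) :
    ∃ C : ℝ≥0∞, C ≠ ⊤ ∧ ∀ ρ u π, IsStationaryNavierStokes b ρ u π → (∀ x, |ρ x| ≤ M) →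
      ∫⁻ x in Metric.ball 0 r, ENNReal.ofReal (‖fderiv ℝ u x‖ ^ 2) ≤
        C * (eLpNorm u (ENNReal.ofReal 3) (volume.restrict (openShell E r s)) *
          eLpNorm (stressBound u) (ENNReal.ofReal (3 / 2))
            (volume.restrict (openShell E r s))) := by
  obtain ⟨C, hC0, hC⟩ := exists_setIntegral_norm_fderiv_sq_le b hE hM0 hr hrs
  refine ⟨ENNReal.ofReal C, ENNReal.ofReal_ne_top, fun ρ u π h hM => ?_⟩
  have hu := h.contDiff_velocity
  have hgrad : Continuous fun x => ‖fderiv ℝ u x‖ ^ 2 :=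
    (hu.continuous_fderiv (by simp)).norm.pow 2
  rw [← ofReal_setIntegral_norm_rpow_eq_eLpNorm hu.continuous (isBounded_openShell r s)
      three_pos, ← ofReal_setIntegral_norm_rpow_eq_eLpNorm (continuous_stressBound hu)
      (isBounded_openShell r s) (by norm_num), ← ENNReal.ofReal_mul (by positivity),
    ← ENNReal.ofReal_mul hC0, ← ofReal_integral_eq_lintegral_ofReal
      (integrableOn_of_isBounded hgrad Metric.isBounded_ball)
      (ae_of_all _ fun x => by positivity)]
  refine ENNReal.ofReal_le_ofReal ?_
  simpa [abs_of_nonneg (stressBound_nonneg u _)] using hC ρ u π h hM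

lemma exists_setLIntegral_norm_fderiv_sq_le (b : OrthonormalBasis ι ℝ E)
    (hE : 1 < Module.rank ℝ E) (hM0 : 0 ≤ M) (hr : 0 < r) (hrs : r < s) (hp : 3 ≤ p) :
    ∃ C : ℝ≥0∞, C ≠ ⊤ ∧ ∀ ρ u π, IsStationaryNavierStokes b ρ u π → (∀ x, |ρ x| ≤ M) →
      ∫⁻ x in Metric.ball 0 r, ENNReal.ofReal (‖fderiv ℝ u x‖ ^ 2) ≤
        C * (((∫⁻ x in openShell E r s, ENNReal.ofReal (‖fderiv ℝ u x‖ ^ (p / 2))) +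
            ∫⁻ x in openShell E r s, ENNReal.ofReal (‖u x‖ ^ p)) ^ (2 / p) *
          (∫⁻ x in openShell E r s, ENNReal.ofReal (‖u x‖ ^ p)) ^ (1 / p)) := by
  obtain ⟨C, hC, h_le⟩ := exists_setLIntegral_norm_fderiv_sq_le_eLpNorm b hE hM0 hr hrs
  set A := openShell E r s
  have hp0 : 0 < p := by linarith
  have hvol : ∀ {a c : ℝ}, 0 < a → a ≤ c → volume.restrict A Set.univ ^
      (1 / (ENNReal.ofReal a).toReal - 1 / (ENNReal.ofReal c).toReal) ≠ ⊤ := fun {a c} ha hac => by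
    rw [Measure.restrict_apply_univ, ENNReal.toReal_ofReal ha.le,
      ENNReal.toReal_ofReal (ha.le.trans hac)]
    exact ENNReal.rpow_ne_top_of_nonneg (sub_nonneg.mpr (one_div_le_one_div_of_le ha hac))
      (isBounded_openShell r s).measure_lt_top.ne
  refine ⟨_, ENNReal.mul_ne_top hC (ENNReal.mul_ne_top (hvol three_pos hp)
    (ENNReal.mul_ne_top (ENNReal.ofNat_ne_top (n := 2)) (hvol (by norm_num : (0 : ℝ) < 3 / 2)
      (by linarith : 3 / 2 ≤ p / 2)))), fun ρ u π h hM => (h_le ρ u π h hM).trans ?_⟩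
  have hu := h.contDiff_velocity
  have hvelocity := eLpNorm_le_eLpNorm_mul_rpow_measure_univ (μ := volume.restrict A)
    (ENNReal.ofReal_le_ofReal hp) hu.continuous.aestronglyMeasurable
  have hstress := eLpNorm_le_eLpNorm_mul_rpow_measure_univ (μ := volume.restrict A)
    (ENNReal.ofReal_le_ofReal (by linarith : 3 / 2 ≤ p / 2))
    (continuous_stressBound hu).aestronglyMeasurable
  rw [eLpNorm_ofReal_eq_lintegral hp0] at hvelocity
  refine (mul_le_mul_right (mul_le_mul' hvelocity (hstress.trans
    (mul_le_mul_left (eLpNorm_stressBound_le_mul_lintegral hu (by linarith)) _))) C).trans_eq ?_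
  ring

end Exponents

section Scaling

lemma le_mul_ofReal_rpow_of_ofReal_rpow_mul_le {R p : ℝ} (hR : 0 < R) (hp : 0 ≤ p) {α β : ℝ}
    {C L X Y : ℝ≥0∞} (h : ENNReal.ofReal (R ^ α) * L ≤
      C * ((ENNReal.ofReal (R ^ β) * X + ENNReal.ofReal (R ^ β) * Y) ^ (2 / p) *
        (ENNReal.ofReal (R ^ β) * Y) ^ (1 / p))) :
    L ≤ C * (X + Y) ^ (2 / p) * ENNReal.ofReal (R ^ (β * (3 / p) - α)) * Y ^ (1 / p) := by
  have hα : ENNReal.ofReal (R ^ (-α)) * ENNReal.ofReal (R ^ α) = 1 := by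
    rw [← ENNReal.ofReal_mul (by positivity), ← Real.rpow_add hR, neg_add_cancel, Real.rpow_zero,
      ENNReal.ofReal_one]
  have hβ : ENNReal.ofReal (R ^ (-α)) * (ENNReal.ofReal (R ^ β) ^ (2 / p) *
      ENNReal.ofReal (R ^ β) ^ (1 / p)) = ENNReal.ofReal (R ^ (β * (3 / p) - α)) := by
    rw [← ENNReal.rpow_add_of_nonneg _ _ (by positivity) (by positivity), ENNReal.ofReal_rpow_of_pos
      (by positivity), ← ENNReal.ofReal_mul (by positivity), ← Real.rpow_mul hR.le,
      ← Real.rpow_add hR, ← add_div, neg_add_eq_sub]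
    norm_num
  calc L = ENNReal.ofReal (R ^ (-α)) * (ENNReal.ofReal (R ^ α) * L) := by
        rw [← mul_assoc, hα, one_mul]
    _ ≤ _ := mul_le_mul_right h _
    _ = _ := by
        rw [← mul_add, ENNReal.mul_rpow_of_nonneg _ _ (by positivity),
          ENNReal.mul_rpow_of_nonneg _ _ (by positivity), ← hβ]
        ring

variable {E V : Type*} [NormedAddCommGroup E] [NormedSpace ℝ E] [NormedAddCommGroup V]
  [NormedSpace ℝ V] {R : ℝ}

lemma fderiv_smul_comp_smul {f : E → V} (hf : Differentiable ℝ f) (R : ℝ) (x : E) :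
    fderiv ℝ (fun y => R • f (R • y)) x = R ^ 2 • fderiv ℝ f (R • x) := by
  have hfR : DifferentiableAt ℝ (fun y => f (R • y)) x :=
    (hf _).comp x (differentiableAt_id.const_smul R)
  rw [fderiv_fun_const_smul hfR, fderiv_comp_smul, smul_smul, sq]

lemma smul_preimage_ball (hR : 0 < R) (r : ℝ) :
    (R • ·) ⁻¹' Metric.ball (0 : E) (R * r) = Metric.ball 0 r := by
  ext x
  simp [norm_smul, abs_of_pos hR, hR]

lemma smul_preimage_openShell (hR : 0 < R) (r s : ℝ) :
    (R • ·) ⁻¹' openShell E (R * r) (R * s) = openShell E r s := by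
  ext x
  simp [openShell, norm_smul, abs_of_pos hR, hR]

variable [FiniteDimensional ℝ E] [MeasurableSpace E] [BorelSpace E] {μ : Measure E}
  [μ.IsAddHaarMeasure]

lemma setLIntegral_comp_smul (hR : 0 < R) (A : Set E) (f : E → ℝ≥0∞) :
    ∫⁻ x in (R • ·) ⁻¹' A, f (R • x) ∂μ =
      ENNReal.ofReal (R ^ (-finrank ℝ E : ℝ)) * ∫⁻ x in A, f x ∂μ := by
  have hemb : MeasurableEmbedding fun x : E => R • x :=
    (Homeomorph.smulOfNeZero R hR.ne').measurableEmbedding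
  rw [← hemb.lintegral_map, ← hemb.restrict_map, Measure.map_addHaar_smul _ hR.ne',
    Measure.restrict_smul, lintegral_smul_measure, smul_eq_mul, abs_of_pos (by positivity),
    Real.rpow_neg hR.le, Real.rpow_natCast]

lemma setLIntegral_norm_pow_smul_comp_smul_rpow (hR : 0 < R) (A : Set E) (f : E → V) (n : ℕ)
    (q : ℝ) :
    ∫⁻ x in (R • ·) ⁻¹' A, ENNReal.ofReal (‖R ^ n • f (R • x)‖ ^ q) ∂μ =
      ENNReal.ofReal (R ^ (n * q - finrank ℝ E)) * ∫⁻ x in A, ENNReal.ofReal (‖f x‖ ^ q) ∂μ := by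
  have hpow : ∀ y, ENNReal.ofReal (‖R ^ n • f y‖ ^ q) =
      ENNReal.ofReal (R ^ (n * q)) * ENNReal.ofReal (‖f y‖ ^ q) := fun y => by
    rw [norm_smul, Real.norm_of_nonneg (by positivity), Real.mul_rpow (by positivity)
      (norm_nonneg _), ← Real.rpow_natCast_mul hR.le, ENNReal.ofReal_mul (by positivity)]
  rw [setLIntegral_comp_smul hR A fun y => ENNReal.ofReal (‖R ^ n • f y‖ ^ q)]
  simp only [hpow]
  rw [lintegral_const_mul' _ _ ENNReal.ofReal_ne_top, ← mul_assoc,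
    ← ENNReal.ofReal_mul (by positivity), ← Real.rpow_add hR, neg_add_eq_sub]

end Scaling

end Caccioppoli

open Caccioppoli Module in
theorem caccioppoli_stationary_inhomogeneous_general {E ι : Type*} [NormedAddCommGroup E]
    [InnerProductSpace ℝ E] [FiniteDimensional ℝ E] [MeasurableSpace E] [BorelSpace E] [Fintype ι]
    (b : OrthonormalBasis ι ℝ E) (hE : 1 < Module.rank ℝ E) {p : ℝ} (hp : 3 ≤ p) (M : ℝ) :
    ∃ C : ℝ, 0 < C ∧ ∀ ρ u π, IsStationaryNavierStokes b ρ u π → (∀ x, |ρ x| ≤ M) → ∀ R, 0 < R →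
      ∫⁻ x in Metric.ball 0 (R / 2), ENNReal.ofReal (‖fderiv ℝ u x‖ ^ 2) ≤
        ENNReal.ofReal C *
          ((∫⁻ x in openShell E (R / 2) R, ENNReal.ofReal (‖fderiv ℝ u x‖ ^ (p / 2))) +
            ∫⁻ x in openShell E (R / 2) R, ENNReal.ofReal (‖u x‖ ^ p)) ^ (2 / p) *
          ENNReal.ofReal (R ^ (finrank ℝ E - 1 - 3 * finrank ℝ E / p)) *
          (∫⁻ x in openShell E (R / 2) R, ENNReal.ofReal (‖u x‖ ^ p)) ^ (1 / p) := by
  obtain ⟨C, hC, h_le⟩ := exists_setLIntegral_norm_fderiv_sq_le b hE (abs_nonneg M)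
    (one_half_pos (α := ℝ)) one_half_lt_one hp
  obtain ⟨N, hN⟩ := ENNReal.exists_nat_gt hC
  refine ⟨N, Nat.cast_pos.mpr (Nat.pos_of_ne_zero ?_), fun ρ u π h hM R hR => ?_⟩
  · rintro rfl
    simp at hN
  have hunit := h_le _ _ _ (h.rescale R) fun x => (hM _).trans (le_abs_self M)
  rw [← smul_preimage_ball hR, ← smul_preimage_openShell hR] at hunit
  have hball := setLIntegral_norm_pow_smul_comp_smul_rpow (μ := volume) hR
    (Metric.ball 0 (R / 2)) (fderiv ℝ u) 2 2
  have hgradient := setLIntegral_norm_pow_smul_comp_smul_rpow (μ := volume) hR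
    (openShell E (R / 2) R) (fderiv ℝ u) 2 (p / 2)
  have hvelocity := setLIntegral_norm_pow_smul_comp_smul_rpow (μ := volume) hR
    (openShell E (R / 2) R) u 1 p
  simp only [Real.rpow_two, pow_one, Nat.cast_ofNat, Nat.cast_one, one_mul,
    mul_div_cancel₀ p two_ne_zero] at hball hgradient hvelocity
  simp only [fderiv_smul_comp_smul (h.contDiff_velocity.differentiable (by simp)), mul_one,
    mul_one_div, hball, hgradient, hvelocity] at hunit
  have hexponent : (p - finrank ℝ E) * (3 / p) - (2 * 2 - finrank ℝ E) =
      finrank ℝ E - 1 - 3 * finrank ℝ E / p := by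
    field_simp
    ring
  rw [← hexponent, ENNReal.ofReal_natCast]
  refine (le_mul_ofReal_rpow_of_ofReal_rpow_mul_le hR (by linarith) hunit).trans ?_
  gcongr

/-- **Caccioppoli-type estimate for the stationary inhomogeneous Navier–Stokes system.**
Let `(ρ, u, π)` be a smooth solution of `−Δu + ρ(u·∇)u + ∇π = 0`, `div u = 0`,
`div(ρu) = 0` in `ℝ³`, with `ρ ∈ L^∞`, `∇u ∈ L²` and `u ∈ L^p_loc`, `∇u ∈ L^{p/2}_loc`
for some `3 ≤ p < ∞`.  Then there is `C > 0`, independent of `R`, such that for all `R > 1`,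
`∫_{B_{R/2}} |∇u|² ≤ C (∫_{C(R/2,R)} |∇u|^{p/2} + ∫_{C(R/2,R)} |u|^p)^{2/p} R^{2-9/p}
(∫_{C(R/2,R)} |u|^p)^{1/p}`. -/
theorem caccioppoli_stationary_inhomogeneous (p : ℝ) (hp : 3 ≤ p)
    (ρ π : EuclideanSpace ℝ (Fin 3) → ℝ)
    (u : EuclideanSpace ℝ (Fin 3) → EuclideanSpace ℝ (Fin 3))
    (hρ : ContDiff ℝ (⊤ : ℕ∞) ρ) (hu : ContDiff ℝ (⊤ : ℕ∞) u) (hπ : ContDiff ℝ (⊤ : ℕ∞) π)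
    (hmom : ∀ x, ∀ i : Fin 3,
      -(∑ j : Fin 3, fderiv ℝ (fun y => fderiv ℝ (fun z => u z i) y (e j)) x (e j)) +
        ρ x * (∑ j : Fin 3, u x j * fderiv ℝ (fun y => u y i) x (e j)) +
        fderiv ℝ π x (e i) = 0)
    (hdiv : ∀ x, (∑ i : Fin 3, fderiv ℝ (fun y => u y i) x (e i)) = 0)
    (hdivρ : ∀ x, (∑ i : Fin 3, fderiv ℝ (fun y => ρ y * u y i) x (e i)) = 0)
    (hρbdd : ∃ M : ℝ, ∀ x, |ρ x| ≤ M)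
    (hgradL2 : (∫⁻ x, ENNReal.ofReal (‖fderiv ℝ u x‖ ^ 2)) < ∞)
    (huloc : ∀ r : ℝ, 0 < r →
      (∫⁻ x in Metric.ball (0 : EuclideanSpace ℝ (Fin 3)) r,
        ENNReal.ofReal (‖u x‖ ^ p)) < ∞)
    (hgradloc : ∀ r : ℝ, 0 < r →
      (∫⁻ x in Metric.ball (0 : EuclideanSpace ℝ (Fin 3)) r,
        ENNReal.ofReal (‖fderiv ℝ u x‖ ^ (p / 2))) < ∞) :
    ∃ C : ℝ, 0 < C ∧ ∀ R : ℝ, 1 < R →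
      (∫⁻ x in Metric.ball (0 : EuclideanSpace ℝ (Fin 3)) (R / 2),
          ENNReal.ofReal (‖fderiv ℝ u x‖ ^ 2)) ≤
        ENNReal.ofReal C *
          ((∫⁻ x in annulus R, ENNReal.ofReal (‖fderiv ℝ u x‖ ^ (p / 2))) +
              (∫⁻ x in annulus R, ENNReal.ofReal (‖u x‖ ^ p))) ^ (2 / p) *
          ENNReal.ofReal (R ^ (2 - 9 / p)) *
          (∫⁻ x in annulus R, ENNReal.ofReal (‖u x‖ ^ p)) ^ (1 / p) := by
  obtain ⟨M, hM⟩ := hρbdd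
  have hbasis : ∀ i, e i = EuclideanSpace.basisFun (Fin 3) ℝ i := fun i =>
    (EuclideanSpace.basisFun_apply _ _ i).symm
  simp only [hbasis] at hmom hdiv hdivρ
  obtain ⟨C, hC, h_le⟩ := caccioppoli_stationary_inhomogeneous_general
    (EuclideanSpace.basisFun (Fin 3) ℝ) (Module.one_lt_rank_of_one_lt_finrank (by simp)) hp M
  have hexponent : (Module.finrank ℝ (EuclideanSpace ℝ (Fin 3)) : ℝ) - 1 -
      3 * Module.finrank ℝ (EuclideanSpace ℝ (Fin 3)) / p = 2 - 9 / p := by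
    rw [finrank_euclideanSpace_fin]
    norm_num
  refine ⟨C, hC, fun R hR => ?_⟩
  rw [← hexponent]
  exact h_le ρ u π ⟨hρ, hu, hπ, hmom, hdiv, hdivρ⟩ hM R (by linarith)
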